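/- arXiv:1605.00088 — 3 statements merged into one kernel-verified Lean document; each statement's English description precedes it below -/
import Mathlib

section
/- For a fixed non-square integer D, the set of primes p with Kronecker-Legendre symbol (D/p) = 1 has natural density 1/2 in the primes: #{p ≤ x prime : (D/p) = 1} ~ π(x)/2 as x → ∞. -/
open Filter Asymptotics

section Aux
open MeasureTheory Topology

theorem wi_core (h : ℝ → ℝ) (hm : Measurable h) (M : ℝ) (hM : ∀ t, |h t| ≤ M)
    (h0 : ∀ t ≤ 0, h t = 0) (G : ℂ → ℂ) (hG : ContinuousOn G {z | 0 ≤ z.re})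
    (hL : ∀ z : ℂ, 0 < z.re → ∫ t : ℝ, (h t : ℂ) * Complex.exp (-z * t) = G z)
    (φ : ℝ → ℝ) (hφ : Continuous φ) (hφs : HasCompactSupport φ)
    (K : ℝ → ℝ) (hK : Integrable K)
    (hKφ : ∀ u : ℝ, u ≠ 0 → (K u : ℂ) = ∫ y : ℝ, (φ y : ℂ) * Complex.exp (Complex.I * u * y)) :
    Tendsto (fun x : ℝ => ∫ v : ℝ, h (x - v) * K v) atTop (𝓝 0) := by
  have hφi : Integrable φ := hφ.integrable_of_hasCompactSupport hφs
  have key1 : ∀ x ε : ℝ, 0 < ε →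
      ∫ v : ℝ, ((h (x - v) * Real.exp (-ε * (x - v)) * K v : ℝ) : ℂ)
        = ∫ y : ℝ, (φ y : ℂ) * Complex.exp (Complex.I * x * y) * G (ε + Complex.I * y) := by
    intro x ε hε
    have hintg : Integrable (fun t : ℝ => h t * Real.exp (-ε * t)) := by
      have : IntegrableOn (fun t : ℝ => M * Real.exp (-ε * t)) (Set.Ioi 0) :=
        (integrableOn_exp_mul_Ioi (by linarith) 0).const_mul M
      have h2 : IntegrableOn (fun t : ℝ => h t * Real.exp (-ε * t)) (Set.Ioi 0) := by
        refine Integrable.mono' this (by fun_prop) (Eventually.of_forall fun t => ?_)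
        rw [norm_mul, Real.norm_eq_abs, Real.norm_eq_abs, Real.abs_exp]
        exact mul_le_mul_of_nonneg_right (hM t) (Real.exp_pos _).le
      refine (integrableOn_iff_integrable_of_support_subset ?_).1 h2
      intro t ht
      by_contra hcon
      simp only [Set.mem_Ioi, not_lt] at hcon
      simp [h0 t hcon] at ht
    calc ∫ v : ℝ, ((h (x - v) * Real.exp (-ε * (x - v)) * K v : ℝ) : ℂ)
        = ∫ t : ℝ, ((h t * Real.exp (-ε * t) * K (x - t) : ℝ) : ℂ) := by
          rw [← integral_sub_left_eq_self _ volume x]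
          simp
      _ = ∫ t : ℝ, ∫ y : ℝ, ((h t * Real.exp (-ε * t) : ℝ) : ℂ) *
            ((φ y : ℂ) * Complex.exp (Complex.I * (x - t : ℝ) * y)) := by
          apply integral_congr_ae
          have : ∀ᵐ t : ℝ, t ≠ x := by simp [ae_iff]
          filter_upwards [this] with t ht
          rw [integral_const_mul, ← hKφ (x - t) (by intro h; apply ht; linarith)]
          push_cast; ring
      _ = ∫ y : ℝ, ∫ t : ℝ, ((h t * Real.exp (-ε * t) : ℝ) : ℂ) *
            ((φ y : ℂ) * Complex.exp (Complex.I * (x - t : ℝ) * y)) := by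
          apply integral_integral_swap
          have h1 : Integrable (fun p : ℝ × ℝ => ((h p.1 * Real.exp (-ε * p.1) : ℝ) : ℂ) *
              ((φ p.2 : ℝ) : ℂ)) := hintg.ofReal.mul_prod hφi.ofReal
          refine h1.mono ?_ (Eventually.of_forall fun p => ?_)
          · have : Measurable φ := hφ.measurable
            apply Measurable.aestronglyMeasurable
            simp only [Function.uncurry_def]
            fun_prop
          · simp only [Function.uncurry_def]
            rw [norm_mul, norm_mul, norm_mul]
            have : Complex.I * ((p.1 : ℝ) : ℂ) = Complex.I * ((p.1 : ℝ) : ℂ) := rfl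
            rw [show Complex.I * ((x - p.1 : ℝ) : ℂ) * (p.2 : ℂ) = (((x - p.1) * p.2 : ℝ) : ℂ) * Complex.I by
              push_cast; ring, Complex.norm_exp_ofReal_mul_I, mul_one]
      _ = _ := by
          congr 1; ext y
          rw [← hL (ε + Complex.I * y) (by simpa using hε), ← integral_const_mul]
          congr 1; ext t
          push_cast
          rw [show -(ε + Complex.I * y) * (t : ℂ) = -ε * t + -(Complex.I * y * t) by ring,
            show Complex.I * ((x : ℂ) - t) * y = Complex.I * x * y + -(Complex.I * y * t) by ring,
            Complex.exp_add, Complex.exp_add]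
          ring
  have key2 : ∀ x : ℝ, ((∫ v : ℝ, h (x - v) * K v : ℝ) : ℂ)
      = ∫ y : ℝ, (φ y : ℂ) * Complex.exp (Complex.I * x * y) * G (Complex.I * y) := by
    intro x
    have l1 : Tendsto (fun ε : ℝ => ∫ v : ℝ, ((h (x - v) * Real.exp (-ε * (x - v)) * K v : ℝ) : ℂ))
        (𝓝[>] 0) (𝓝 (∫ v : ℝ, ((h (x - v) * K v : ℝ) : ℂ))) := by
      apply tendsto_integral_filter_of_dominated_convergence (fun v => M * |K v|)
      · refine Eventually.of_forall fun ε => ?_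
        have := hK.aestronglyMeasurable
        have h3 : AEStronglyMeasurable (fun v => h (x - v) * Real.exp (-ε * (x - v))) volume := by
          apply Measurable.aestronglyMeasurable; fun_prop
        exact Complex.continuous_ofReal.comp_aestronglyMeasurable (h3.mul this)
      · filter_upwards [self_mem_nhdsWithin] with ε hε
        refine Eventually.of_forall fun v => ?_
        rw [Complex.norm_real, norm_mul, Real.norm_eq_abs, Real.norm_eq_abs]
        gcongr
        by_cases hv : x - v ≤ 0
        · rw [h0 _ hv]; simpa using (abs_nonneg _).trans (hM 0)
        · rw [abs_mul, Real.abs_exp]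
          have : Real.exp (-ε * (x - v)) ≤ 1 := by
            rw [Real.exp_le_one_iff]
            have : 0 < ε * (x - v) := mul_pos hε (by linarith)
            linarith
          calc _ ≤ |h (x - v)| * 1 := by gcongr
            _ ≤ M := by simpa using hM _
      · exact (hK.abs.const_mul M)
      · refine Eventually.of_forall fun v => ?_
        have : Continuous (fun ε : ℝ => ((h (x - v) * Real.exp (-ε * (x - v)) * K v : ℝ) : ℂ)) := by
          fun_prop
        have := (this.tendsto 0).mono_left (nhdsWithin_le_nhds (s := Set.Ioi 0))
        simpa using this
    have hcG : Continuous (fun y : ℝ => G (Complex.I * y)) := by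
      apply hG.comp_continuous (by fun_prop); intro y; simp
    have l2 : Tendsto (fun ε : ℝ => ∫ y : ℝ, (φ y : ℂ) * Complex.exp (Complex.I * x * y) * G (ε + Complex.I * y))
        (𝓝[>] 0) (𝓝 (∫ y : ℝ, (φ y : ℂ) * Complex.exp (Complex.I * x * y) * G (Complex.I * y))) := by
      have hcomp : IsCompact ((fun p : ℝ × ℝ => (p.1 + Complex.I * p.2 : ℂ)) ''
          (Set.Icc 0 1 ×ˢ tsupport φ)) :=
        (isCompact_Icc.prod hφs).image (by fun_prop)
      obtain ⟨C, hC⟩ := hcomp.exists_bound_of_continuousOn (hG.mono (by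
        rintro _ ⟨p, hp, rfl⟩
        simpa using hp.1.1))
      apply tendsto_integral_filter_of_dominated_convergence (fun y => |φ y| * C)
      · filter_upwards [self_mem_nhdsWithin] with ε hε
        have : Continuous (fun y : ℝ => G (ε + Complex.I * y)) := by
          apply hG.comp_continuous (by fun_prop); intro y; simpa using (le_of_lt hε)
        apply Continuous.aestronglyMeasurable
        exact Continuous.mul (by fun_prop) this
      · filter_upwards [Ioc_mem_nhdsGT (zero_lt_one' ℝ)] with ε hε
        refine Eventually.of_forall fun y => ?_
        rw [norm_mul, norm_mul, show Complex.I * (x : ℂ) * (y : ℂ) = ((x * y : ℝ) : ℂ) * Complex.I by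
              push_cast; ring, Complex.norm_exp_ofReal_mul_I, mul_one, Complex.norm_real, Real.norm_eq_abs]
        by_cases hy : y ∈ tsupport φ
        · gcongr
          exact hC _ ⟨(ε, y), ⟨⟨hε.1.le, hε.2⟩, hy⟩, rfl⟩
        · simp [image_eq_zero_of_notMem_tsupport hy]
      · exact hφi.abs.mul_const C
      · refine Eventually.of_forall fun y => ?_
        apply Tendsto.const_mul
        have hh : ContinuousWithinAt G {z | 0 ≤ z.re} (Complex.I * y) := hG _ (by simp)
        apply hh.tendsto.comp
        apply tendsto_nhdsWithin_of_tendsto_nhds_of_eventually_within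
        · have : Continuous (fun ε : ℝ => (ε + Complex.I * y : ℂ)) := by fun_prop
          simpa using (this.tendsto 0).mono_left (nhdsWithin_le_nhds (s := Set.Ioi 0))
        · filter_upwards [self_mem_nhdsWithin] with ε hε
          simpa using (le_of_lt hε)
    have l3 := tendsto_nhds_unique (l1.congr' (by
      filter_upwards [self_mem_nhdsWithin] with ε hε using key1 x ε hε)) l2
    rw [← l3, integral_complex_ofReal]
  have RL := Real.tendsto_integral_exp_smul_cocompact (fun y : ℝ => (φ y : ℂ) * G (Complex.I * y))
  have hx : Tendsto (fun x : ℝ => -x / (2 * Real.pi)) atTop (cocompact ℝ) := by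
    refine Tendsto.mono_right ?_ atBot_le_cocompact
    exact tendsto_neg_atTop_atBot.atBot_div_const (by positivity)
  have := RL.comp hx
  have h4 : Tendsto (fun x : ℝ => ((∫ v : ℝ, h (x - v) * K v : ℝ) : ℂ)) atTop (𝓝 0) := by
    refine this.congr fun x => ?_
    rw [key2]
    simp only [Function.comp]
    congr 1; ext y
    rw [Circle.smul_def, Real.fourierChar_apply, smul_eq_mul]
    rw [show ((2 * Real.pi * -(y * (-x / (2 * Real.pi))) : ℝ) : ℂ) * Complex.I = Complex.I * x * y by
      rw [show (2 * Real.pi * -(y * (-x / (2 * Real.pi))) : ℝ) = x * y by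
        have := Real.pi_ne_zero
        field_simp]
      push_cast; ring]
    ring
  have h5 := (Complex.continuous_re.tendsto 0).comp h4
  rw [Complex.zero_re] at h5
  exact h5.congr fun x => Complex.ofReal_re _

noncomputable def fejK (u : ℝ) : ℝ := 2 * (1 - Real.cos u) / u ^ 2

theorem fejK_nonneg (u : ℝ) : 0 ≤ fejK u := by
  unfold fejK
  have := Real.cos_le_one u
  have : 0 ≤ 1 - Real.cos u := by linarith
  positivity

theorem fejK_measurable : Measurable fejK := by
  unfold fejK
  fun_prop

theorem fejK_integrable : Integrable fejK := by
  refine Integrable.mono' (integrable_inv_one_add_sq.const_mul 8) fejK_measurable.aestronglyMeasurable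
    (Eventually.of_forall fun u => ?_)
  rw [Real.norm_eq_abs, abs_of_nonneg (fejK_nonneg u)]
  unfold fejK
  rcases eq_or_ne u 0 with rfl | hu
  · simp
  have hu2 : 0 < u ^ 2 := by positivity
  rw [div_le_iff₀ hu2, ← div_eq_mul_inv, div_mul_eq_mul_div, le_div_iff₀ (by positivity)]
  have h1 := Real.one_sub_sq_div_two_le_cos (x := u)
  have h2 := Real.neg_one_le_cos u
  nlinarith

theorem fejK_integral_pos : 0 < ∫ u, fejK u := by
  rw [integral_pos_iff_support_of_nonneg fejK_nonneg fejK_integrable]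
  refine lt_of_lt_of_le (b := volume (Set.Ioo (0:ℝ) 1)) (by simp) (measure_mono fun u hu => ?_)
  have : Real.cos u < 1 := by
    rw [← Real.cos_zero]
    exact Real.cos_lt_cos_of_nonneg_of_le_pi le_rfl (by linarith [hu.2, Real.pi_gt_three]) hu.1
  have h3 : 0 < 1 - Real.cos u := by linarith
  have h4 := hu.1
  have : 0 < fejK u := by unfold fejK; positivity
  exact this.ne'

noncomputable def fejphi (y : ℝ) : ℝ := max 0 (1 - |y|)

theorem fejphi_cont : Continuous fejphi := by unfold fejphi; fun_prop

theorem fejphi_zero {y : ℝ} (hy : 1 ≤ |y|) : fejphi y = 0 := by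
  unfold fejphi; simp [hy]

theorem fejphi_supp : HasCompactSupport fejphi := by
  refine HasCompactSupport.intro (K := Set.Icc (-1) 1) isCompact_Icc fun y hy => fejphi_zero ?_
  by_contra hcon
  exact hy (abs_le.1 (not_le.1 hcon).le)

theorem fejK_eq (u : ℝ) (hu : u ≠ 0) :
    (fejK u : ℂ) = ∫ y : ℝ, (fejphi y : ℂ) * Complex.exp (Complex.I * u * y) := by
  have hi : Integrable (fun y : ℝ => (fejphi y : ℂ) * Complex.exp (Complex.I * u * y)) := by
    apply Continuous.integrable_of_hasCompactSupport
    · have := fejphi_cont; fun_prop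
    · exact (fejphi_supp.comp_left (g := ((↑) : ℝ → ℂ)) (by simp)).mul_right
  have h1 : ∫ y : ℝ, (fejphi y : ℂ) * Complex.exp (Complex.I * u * y)
      = ∫ y in Set.Ioi (0:ℝ), ((2 * fejphi y * Real.cos (u * y) : ℝ) : ℂ) := by
    rw [← integral_add_compl measurableSet_Iic hi (s := Set.Iic 0)]
    have h0 := integral_comp_neg_Ioi 0
      (fun y : ℝ => (fejphi y : ℂ) * Complex.exp (Complex.I * u * y))
    rw [neg_zero] at h0
    rw [← h0, Set.compl_Iic, ← integral_add]
    · congr 1; ext y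
      have : fejphi (-y) = fejphi y := by simp [fejphi]
      rw [this]
      push_cast
      rw [Complex.cos]
      rw [show Complex.I * u * -(y:ℂ) = -(u*y) * Complex.I by ring, show Complex.I * u * (y:ℂ) = (u*y) * Complex.I by ring]
      ring
    · exact (hi.comp_neg).integrableOn
    · exact hi.integrableOn
  rw [h1, integral_complex_ofReal]
  congr 1
  have h2 : ∫ y in Set.Ioi (0:ℝ), (2 * fejphi y * Real.cos (u * y) : ℝ)
      = ∫ y in Set.Ioc (0:ℝ) 1, (2 * fejphi y * Real.cos (u * y) : ℝ) := by
    apply setIntegral_eq_of_subset_of_forall_sdiff_eq_zero measurableSet_Ioi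
    · exact Set.Ioc_subset_Ioi_self
    · intro y hy
      have h5 : 1 ≤ |y| := by
        have h6 : 0 < y := hy.1
        rw [abs_of_pos h6]
        by_contra hcon
        exact hy.2 ⟨h6, (not_le.1 hcon).le⟩
      simp [fejphi_zero h5]
  rw [h2, ← intervalIntegral.integral_of_le zero_le_one]
  have h3 : ∫ y in (0:ℝ)..1, (2 * fejphi y * Real.cos (u * y) : ℝ)
     = ∫ y in (0:ℝ)..1, (2 * (1 - y) * Real.cos (u * y) : ℝ) := by
    apply intervalIntegral.integral_congr
    intro y hy
    rw [Set.uIcc_of_le zero_le_one] at hy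
    simp only
    rw [fejphi, abs_of_nonneg hy.1, max_eq_right (by linarith [hy.2])]
  rw [h3, intervalIntegral.integral_eq_sub_of_hasDerivAt
    (f := fun y => 2 * (1 - y) * (Real.sin (u * y) / u) - 2 * Real.cos (u * y) / u ^ 2)]
  · unfold fejK; simp; field_simp; ring
  · intro y _
    have hl : HasDerivAt (fun y : ℝ => u * y) u y := by simpa using (hasDerivAt_id y).const_mul u
    have hs := (hl.sin.div_const u)
    have hc := ((hl.cos.const_mul 2).div_const (u ^ 2))
    have hp : HasDerivAt (fun y : ℝ => 2 * (1 - y)) (-2) y := by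
      simpa using ((hasDerivAt_id y).const_sub 1).const_mul 2
    refine HasDerivAt.congr_deriv ((hp.mul hs).sub hc) ?_
    field_simp
    ring
  · apply Continuous.intervalIntegrable; fun_prop

theorem wi_deduce (B : ℝ → ℝ) (hBm : Measurable B) (hB0 : ∀ t, 0 ≤ B t) (M : ℝ) (hBM : ∀ t, B t ≤ M)
    (hmono : ∀ x t, x ≤ t → B x * Real.exp (-(t - x)) ≤ B t) (A : ℝ)
    (hk : ∀ η > 0, ∃ k : ℝ → ℝ, (∀ v, 0 ≤ k v) ∧ Integrable k ∧ ∫ v, k v = 1 ∧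
      1 - η ≤ ∫ v in Set.Icc (-η) η, k v ∧
      Tendsto (fun x => ∫ v, B (x - v) * k v) atTop (𝓝 A)) :
    Tendsto B atTop (𝓝 A) := by
  have step : ∀ η, 0 < η → η < 1 → ∀ᶠ x in atTop,
      B x ≤ (A + η) * Real.exp (2 * η) / (1 - η) ∧
      Real.exp (-(2 * η)) * (A - η - M * η) ≤ B x := by
    intro η hη hη1
    obtain ⟨k, k0, ki, k1, kη, kl⟩ := hk η hη
    have hintg : ∀ x, Integrable (fun v => B (x - v) * k v) := by
      intro x
      refine Integrable.mono' (ki.const_mul M) ?_ (Eventually.of_forall fun v => ?_)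
      · exact (Measurable.aestronglyMeasurable (by fun_prop)).mul ki.aestronglyMeasurable
      · rw [Real.norm_eq_abs, abs_of_nonneg (mul_nonneg (hB0 _) (k0 _))]
        exact mul_le_mul_of_nonneg_right (hBM _) (k0 _)
    have kc : ∫ v in (Set.Icc (-η) η)ᶜ, k v ≤ η := by
      have := integral_add_compl measurableSet_Icc ki (s := Set.Icc (-η) η)
      linarith
    have kle : ∫ v in Set.Icc (-η) η, k v ≤ 1 := by
      have := integral_add_compl measurableSet_Icc ki (s := Set.Icc (-η) η)
      have : 0 ≤ ∫ v in (Set.Icc (-η) η)ᶜ, k v := setIntegral_nonneg measurableSet_Icc.compl (fun v _ => k0 v)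
      linarith
    have hM0 : 0 ≤ M := (hB0 0).trans (hBM 0)
    have e1 : ∀ᶠ x in atTop, ∫ v, B (x + η - v) * k v < A + η :=
      (kl.comp (tendsto_atTop_add_const_right _ η tendsto_id)).eventually_lt_const (by linarith)
    have e2 : ∀ᶠ x in atTop, A - η < ∫ v, B (x - η - v) * k v :=
      (kl.comp (tendsto_atTop_add_const_right _ (-η) tendsto_id)).eventually_const_lt (by linarith)
    filter_upwards [e1, e2] with x h1 h2
    constructor
    · rw [le_div_iff₀ (by linarith)]
      have h3 : (B x * Real.exp (-(2 * η))) * (1 - η) ≤ A + η := by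
        calc (B x * Real.exp (-(2 * η))) * (1 - η)
            ≤ (B x * Real.exp (-(2 * η))) * ∫ v in Set.Icc (-η) η, k v := by
              have := hB0 x
              gcongr
          _ = ∫ v in Set.Icc (-η) η, (B x * Real.exp (-(2 * η))) * k v := by
              rw [integral_const_mul]
          _ ≤ ∫ v in Set.Icc (-η) η, B (x + η - v) * k v := by
              refine setIntegral_mono_on (ki.const_mul _).integrableOn (hintg _).integrableOn measurableSet_Icc ?_
              intro v hv
              refine mul_le_mul_of_nonneg_right ?_ (k0 v)
              refine le_trans ?_ (hmono x (x + η - v) (by linarith [hv.2]))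
              have := hB0 x
              gcongr
              linarith [hv.1]
          _ ≤ ∫ v, B (x + η - v) * k v :=
              setIntegral_le_integral (hintg _) (Eventually.of_forall fun v => mul_nonneg (hB0 _) (k0 _))
          _ ≤ A + η := h1.le
      have h4 : Real.exp (-(2 * η)) * Real.exp (2 * η) = 1 := by rw [← Real.exp_add]; simp
      calc B x * (1 - η) = (B x * Real.exp (-(2 * η))) * (1 - η) * Real.exp (2 * η) := by
            linear_combination -(B x * (1 - η)) * h4
        _ ≤ _ := by gcongr
    · have h3 : ∫ v, B (x - η - v) * k v ≤ B x * Real.exp (2 * η) + M * η := by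
        rw [← integral_add_compl measurableSet_Icc (hintg _) (s := Set.Icc (-η) η)]
        have a1 : ∫ v in Set.Icc (-η) η, B (x - η - v) * k v ≤ B x * Real.exp (2 * η) := by
          calc _ ≤ ∫ v in Set.Icc (-η) η, (B x * Real.exp (2 * η)) * k v := by
                refine setIntegral_mono_on (hintg _).integrableOn (ki.const_mul _).integrableOn measurableSet_Icc ?_
                intro v hv
                refine mul_le_mul_of_nonneg_right ?_ (k0 v)
                have h5 := hmono (x - η - v) x (by linarith [hv.1])
                have h6 : Real.exp (-(x - (x - η - v))) * Real.exp (η + v) = 1 := by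
                  rw [← Real.exp_add, Real.exp_eq_one_iff]; ring
                calc B (x - η - v) = B (x - η - v) * Real.exp (-(x - (x - η - v))) * Real.exp (η + v) := by
                      linear_combination -(B (x - η - v)) * h6
                  _ ≤ B x * Real.exp (2 * η) := by
                      have := hB0 x
                      gcongr
                      linarith [hv.2]
            _ = (B x * Real.exp (2 * η)) * ∫ v in Set.Icc (-η) η, k v := integral_const_mul _ _
            _ ≤ (B x * Real.exp (2 * η)) * 1 := by
                have := hB0 x
                gcongr
            _ = _ := mul_one _
        have a2 : ∫ v in (Set.Icc (-η) η)ᶜ, B (x - η - v) * k v ≤ M * η := by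
          calc _ ≤ ∫ v in (Set.Icc (-η) η)ᶜ, M * k v := by
                refine setIntegral_mono_on (hintg _).integrableOn (ki.const_mul _).integrableOn measurableSet_Icc.compl ?_
                intro v hv
                exact mul_le_mul_of_nonneg_right (hBM _) (k0 v)
            _ = M * ∫ v in (Set.Icc (-η) η)ᶜ, k v := integral_const_mul _ _
            _ ≤ M * η := by gcongr
        linarith
      have h4 : Real.exp (-(2 * η)) * Real.exp (2 * η) = 1 := by rw [← Real.exp_add]; simp
      calc Real.exp (-(2 * η)) * (A - η - M * η) ≤ Real.exp (-(2 * η)) * (B x * Real.exp (2 * η)) := by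
            gcongr; linarith
        _ = B x := by linear_combination B x * h4
  rw [Metric.tendsto_nhds]
  intro ε hε
  have c1 : Tendsto (fun η : ℝ => (A + η) * Real.exp (2 * η) / (1 - η)) (𝓝[>] 0) (𝓝 A) := by
    have : ContinuousAt (fun η : ℝ => (A + η) * Real.exp (2 * η) / (1 - η)) 0 := by
      apply ContinuousAt.div (by fun_prop) (by fun_prop) (by simp)
    have := this.tendsto.mono_left (nhdsWithin_le_nhds (s := Set.Ioi 0))
    simpa using this
  have c2 : Tendsto (fun η : ℝ => Real.exp (-(2 * η)) * (A - η - M * η)) (𝓝[>] 0) (𝓝 A) := by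
    have : Continuous (fun η : ℝ => Real.exp (-(2 * η)) * (A - η - M * η)) := by fun_prop
    have := (this.tendsto 0).mono_left (nhdsWithin_le_nhds (s := Set.Ioi 0))
    simpa using this
  obtain ⟨η, g1, g2, g3⟩ := ((c1.eventually_lt_const (show A < A + ε by linarith)).and
    ((c2.eventually_const_lt (show A - ε < A by linarith)).and (Ioo_mem_nhdsGT (zero_lt_one' ℝ)))).exists
  filter_upwards [step η g3.1 g3.2] with x hx
  rw [Real.dist_eq, abs_lt]
  constructor <;> linarith [hx.1, hx.2]

theorem wi_laplace (a : ℕ → ℝ) (ha : ∀ n, 0 ≤ a n) (C : ℝ)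
    (hC : ∀ x : ℝ, 0 ≤ x → ∑ k ∈ Finset.Icc 1 ⌊x⌋₊, a k ≤ C * x) (s : ℂ) (hs : 1 < s.re) :
    ∫ t in Set.Ioi (0:ℝ), ((∑ k ∈ Finset.Icc 1 ⌊Real.exp t⌋₊, a k : ℝ) : ℂ) * Complex.exp (-s * t)
      = LSeries (fun n => (a n : ℂ)) s / s := by
  have hO : (fun n : ℕ ↦ ∑ k ∈ Finset.Icc 1 n, a k) =O[atTop] fun n ↦ (n : ℝ) ^ (1:ℝ) := by
    refine IsBigO.of_bound C (Eventually.of_forall fun n => ?_)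
    have := hC n (by positivity)
    rw [Nat.floor_natCast] at this
    rw [Real.norm_eq_abs, abs_of_nonneg (Finset.sum_nonneg fun k _ => ha k)]
    simpa using this
  rw [LSeries_eq_mul_integral_of_nonneg a zero_le_one hs hO ha]
  have hs0 : s ≠ 0 := by rintro rfl; simp at hs; linarith
  rw [mul_div_cancel_left₀ _ hs0]
  have himg : Real.exp '' (Set.Ioi 0) = Set.Ioi 1 := by
    ext u
    constructor
    · rintro ⟨t, ht, rfl⟩
      exact Real.one_lt_exp_iff.2 ht
    · intro hu
      have hu' : (1:ℝ) < u := hu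
      exact ⟨Real.log u, Real.log_pos hu, Real.exp_log (by linarith)⟩
  rw [← himg, integral_image_eq_integral_abs_deriv_smul measurableSet_Ioi
    (fun t _ => (Real.hasDerivAt_exp t).hasDerivWithinAt) Real.exp_injective.injOn]
  congr 1; ext t
  rw [Real.abs_exp, Complex.real_smul, Complex.cpow_def_of_ne_zero (by simp), ← Complex.ofReal_log (Real.exp_pos t).le, Real.log_exp]
  push_cast
  rw [mul_left_comm, ← Complex.exp_add]
  congr 2
  ring

theorem wi_kernel (η : ℝ) (hη : 0 < η) : ∃ k φ : ℝ → ℝ, (∀ v, 0 ≤ k v) ∧ Integrable k ∧ ∫ v, k v = 1 ∧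
      1 - η ≤ ∫ v in Set.Icc (-η) η, k v ∧ Continuous φ ∧ HasCompactSupport φ ∧
      (∀ u : ℝ, u ≠ 0 → (k u : ℂ) = ∫ y : ℝ, (φ y : ℂ) * Complex.exp (Complex.I * u * y)) := by
  obtain ⟨c, hc⟩ : ∃ c, c = ∫ u, fejK u := ⟨_, rfl⟩
  have hcpos : 0 < c := hc ▸ fejK_integral_pos
  have hlim : Tendsto (fun l : ℝ => ∫ u in (-(l * η))..(l * η), fejK u) atTop (𝓝 c) := by
    have h1 : Tendsto (fun l : ℝ => l * η) atTop atTop := tendsto_id.atTop_mul_const hη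
    rw [hc]
    exact intervalIntegral_tendsto_integral fejK_integrable (tendsto_neg_atTop_atBot.comp h1) h1
  have hlt : (1 - η) * c < c := by have := mul_pos hη hcpos; linarith
  obtain ⟨l, hl, hl0⟩ := ((hlim.eventually_const_lt hlt).and
    (eventually_gt_atTop 0)).exists
  refine ⟨fun v => l / c * fejK (l * v), fun y => fejphi (y * l⁻¹) / c, ?_, ?_, ?_, ?_, ?_, ?_, ?_⟩
  · intro v; have := fejK_nonneg (l * v); positivity
  · exact (fejK_integrable.comp_mul_left' hl0.ne').const_mul _
  · rw [integral_const_mul, Measure.integral_comp_mul_left, ← hc, smul_eq_mul, abs_of_pos (by positivity)]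
    field_simp
  · rw [integral_Icc_eq_integral_Ioc, ← intervalIntegral.integral_of_le (by linarith),
      intervalIntegral.integral_const_mul, intervalIntegral.integral_comp_mul_left _ hl0.ne', mul_neg, smul_eq_mul]
    rw [show l / c * (l⁻¹ * ∫ u in (-(l * η))..(l * η), fejK u) = (∫ u in (-(l * η))..(l * η), fejK u) / c by
      field_simp]
    rw [le_div_iff₀ hcpos]
    exact hl.le
  · have := fejphi_cont; fun_prop
  · refine HasCompactSupport.intro (K := Set.Icc (-l) l) isCompact_Icc fun y hy => ?_
    rw [fejphi_zero, zero_div]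
    by_contra hcon
    apply hy
    rw [not_le, abs_mul, abs_of_pos (inv_pos.2 hl0), ← div_eq_mul_inv, div_lt_one hl0] at hcon
    exact abs_le.1 hcon.le
  · intro u hu
    push_cast
    rw [fejK_eq (l * u) (by positivity)]
    have := Measure.integral_comp_mul_right (fun y : ℝ => (fejphi y : ℂ) * Complex.exp (Complex.I * (l * u : ℝ) * y)) l⁻¹
    rw [inv_inv, abs_of_pos hl0, Complex.real_smul] at this
    rw [div_mul_eq_mul_div, ← this, ← integral_div]
    congr 1; ext y
    push_cast
    have hlc : (l : ℂ) ≠ 0 := by exact_mod_cast hl0.ne'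
    rw [show Complex.I * (l * u) * (y * (l:ℂ)⁻¹) = Complex.I * u * y by field_simp]
    ring

theorem wi (a : ℕ → ℝ) (ha : ∀ n, 0 ≤ a n) (C : ℝ)
    (hC : ∀ x : ℝ, 0 ≤ x → ∑ k ∈ Finset.Icc 1 ⌊x⌋₊, a k ≤ C * x) (A : ℝ)
    (G : ℂ → ℂ) (hG : ContinuousOn G {s | 1 ≤ s.re})
    (hEq : ∀ s : ℂ, 1 < s.re → G s = LSeries (fun n => (a n : ℂ)) s - A / (s - 1)) :
    Tendsto (fun x : ℝ => (∑ k ∈ Finset.Icc 1 ⌊x⌋₊, a k) / x) atTop (𝓝 A) := by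
  set S : ℝ → ℝ := fun x => ∑ k ∈ Finset.Icc 1 ⌊x⌋₊, a k with hS
  have hS0 : ∀ x, 0 ≤ S x := fun x => Finset.sum_nonneg fun k _ => ha k
  have hSm : Monotone S := by
    intro x y hxy
    apply Finset.sum_le_sum_of_subset_of_nonneg
    · exact Finset.Icc_subset_Icc le_rfl (Nat.floor_mono hxy)
    · intro k _ _; exact ha k
  have hSz : ∀ x < 1, S x = 0 := by
    intro x hx
    simp [hS, Nat.floor_eq_zero.2 hx]
  have hC0 : 0 ≤ C := by simpa using (hS0 1).trans (hC 1 zero_le_one)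
  set B : ℝ → ℝ := fun t => S (Real.exp t) * Real.exp (-t) with hB
  have hBm : Measurable B := by
    have := hSm.measurable
    fun_prop
  have hee : ∀ t : ℝ, Real.exp t * Real.exp (-t) = 1 := fun t => by rw [← Real.exp_add]; simp
  have hB0 : ∀ t, 0 ≤ B t := fun t => mul_nonneg (hS0 _) (Real.exp_pos _).le
  have hBC : ∀ t, B t ≤ C := by
    intro t
    calc B t ≤ (C * Real.exp t) * Real.exp (-t) := by
          have := hC (Real.exp t) (Real.exp_pos _).le
          simp only [hB]
          gcongr
      _ = C := by rw [mul_assoc, hee, mul_one]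
  have hBz : ∀ t < 0, B t = 0 := by
    intro t ht
    simp [hB, hSz _ (Real.exp_lt_one_iff.2 ht)]
  suffices hT : Tendsto B atTop (𝓝 A) by
    refine (hT.comp Real.tendsto_log_atTop).congr' ?_
    filter_upwards [eventually_gt_atTop 0] with x hx
    simp only [Function.comp, hB, Real.exp_neg, Real.exp_log hx]
    rw [div_eq_mul_inv]
  apply wi_deduce B hBm hB0 C hBC
  · intro x t hxt
    calc B x * Real.exp (-(t - x)) = S (Real.exp x) * (Real.exp (-x) * Real.exp (-(t - x))) := by
          simp only [hB]; ring
      _ = S (Real.exp x) * Real.exp (-t) := by rw [← Real.exp_add]; congr 2; ring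
      _ ≤ B t := by
          simp only [hB]
          gcongr
          exact hSm (Real.exp_le_exp.2 hxt)
  intro η hη
  obtain ⟨k, φ, k0, ki, k1, kη, φc, φs, kφ⟩ := wi_kernel η hη
  refine ⟨k, k0, ki, k1, kη, ?_⟩
  set h : ℝ → ℝ := Set.indicator (Set.Ioi 0) (fun t => B t - A) with hh
  have hhm : Measurable h := (hBm.sub_const A).indicator measurableSet_Ioi
  have hhb : ∀ t, |h t| ≤ C + |A| := by
    intro t
    by_cases ht : t ∈ Set.Ioi (0:ℝ)
    · rw [hh, Set.indicator_of_mem ht]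
      calc |B t - A| ≤ |B t| + |A| := abs_sub _ _
        _ ≤ _ := by rw [abs_of_nonneg (hB0 t)]; gcongr; exact hBC t
    · rw [hh, Set.indicator_of_notMem ht, abs_zero]; positivity
  have core := wi_core h hhm (C + |A|) hhb
    (fun t ht => Set.indicator_of_notMem (by simpa using ht) _)
    (fun z => (G (1 + z) - A) / (1 + z)) (by
      apply ContinuousOn.div
      · apply ContinuousOn.sub _ continuousOn_const
        apply hG.comp (by fun_prop)
        intro z hz
        simpa using hz
      · fun_prop
      · intro z hz h0
        have h1 : (1 + z).re = 0 := by rw [h0]; simp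
        have hz' : 0 ≤ z.re := hz
        simp at h1
        linarith)
    (by
      intro z hz
      have hz0 : z ≠ 0 := by rintro rfl; simp at hz
      have hz1 : 1 + z ≠ 0 := by
        intro h0
        have h1 : (1 + z).re = 0 := by rw [h0]; simp
        simp at h1; linarith
      have hexpi : IntegrableOn (fun t : ℝ => Complex.exp (-z * t)) (Set.Ioi 0) :=
        integrableOn_exp_mul_complex_Ioi (by simpa using hz) 0
      have e1 : ∀ t : ℝ, (h t : ℂ) * Complex.exp (-z * t)
          = Set.indicator (Set.Ioi 0) (fun t : ℝ => (B t : ℂ) * Complex.exp (-z * t) - A * Complex.exp (-z * t)) t := by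
        intro t
        by_cases ht : t ∈ Set.Ioi (0:ℝ)
        · rw [hh, Set.indicator_of_mem ht, Set.indicator_of_mem ht]
          push_cast; ring
        · rw [hh, Set.indicator_of_notMem ht, Set.indicator_of_notMem ht]; simp
      simp_rw [e1]
      rw [integral_indicator measurableSet_Ioi, integral_sub, integral_const_mul,
        integral_exp_mul_complex_Ioi (by simpa using hz)]
      · have e2 := wi_laplace a ha C hC (1 + z) (by simpa using hz)
        have e3 : ∫ t in Set.Ioi (0:ℝ), (B t : ℂ) * Complex.exp (-z * t)
            = LSeries (fun n => (a n : ℂ)) (1 + z) / (1 + z) := by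
          rw [← e2]
          congr 1; ext t
          simp only [hB, hS]
          push_cast
          rw [mul_assoc, ← Complex.exp_add]
          congr 2
          ring
        rw [e3, hEq (1 + z) (by simpa using hz)]
        simp
        field_simp
        ring
      · refine Integrable.mono (hexpi.const_mul (C : ℂ)) ?_ (Eventually.of_forall fun t => ?_)
        · apply Measurable.aestronglyMeasurable; fun_prop
        · rw [norm_mul, norm_mul, Complex.norm_real, Complex.norm_real, Real.norm_eq_abs, Real.norm_eq_abs,
            abs_of_nonneg (hB0 t), abs_of_nonneg hC0]
          gcongr
          exact hBC t
      · exact hexpi.const_mul _)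
    φ φc φs k ki kφ
  have hI : Tendsto (fun x : ℝ => ∫ v in Set.Iio x, k v) atTop (𝓝 1) := by
    rw [← k1]
    exact (aecover_Iio tendsto_id).integral_tendsto_of_countably_generated ki
  have hsum := core.add (hI.const_mul A)
  rw [mul_one, zero_add] at hsum
  refine hsum.congr fun x => ?_
  rw [← integral_const_mul, ← integral_indicator measurableSet_Iio, ← integral_add]
  · apply integral_congr_ae
    have : ∀ᵐ v : ℝ, v ≠ x := by simp [ae_iff]
    filter_upwards [this] with v hv
    rcases lt_or_gt_of_ne hv with hv | hv
    · rw [hh, Set.indicator_of_mem (show x - v ∈ Set.Ioi (0:ℝ) by simpa using hv),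
        Set.indicator_of_mem (show v ∈ Set.Iio x from hv)]
      ring
    · rw [hh, Set.indicator_of_notMem (by simpa using hv.le), Set.indicator_of_notMem (by simpa using hv.le),
        hBz _ (by linarith)]
      ring
  · refine Integrable.mono' (ki.const_mul (C + |A|)) ?_ (Eventually.of_forall fun v => ?_)
    · exact (Measurable.aestronglyMeasurable (by fun_prop)).mul ki.aestronglyMeasurable
    · rw [norm_mul, Real.norm_eq_abs, Real.norm_eq_abs, abs_of_nonneg (k0 v)]
      exact mul_le_mul_of_nonneg_right (hhb _) (k0 v)
  · exact (ki.const_mul A).indicator measurableSet_Iio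

open ArithmeticFunction in
theorem pnt_ap_psi (q : ℕ) [NeZero q] (a : ZMod q) (ha : IsUnit a) :
    Tendsto (fun x : ℝ => (∑ k ∈ Finset.Icc 1 ⌊x⌋₊, vonMangoldt.residueClass a k) / x) atTop
      (𝓝 ((q.totient : ℝ)⁻¹)) := by
  refine wi _ (vonMangoldt.residueClass_nonneg a) (Real.log 4 + 4) ?_ _
    (vonMangoldt.LFunctionResidueClassAux a) (vonMangoldt.continuousOn_LFunctionResidueClassAux a) ?_
  · intro x hx
    refine le_trans ?_ (Chebyshev.psi_le_const_mul_self hx)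
    exact Finset.sum_le_sum fun k _ => vonMangoldt.residueClass_le a k
  · intro s hs
    rw [vonMangoldt.eqOn_LFunctionResidueClassAux ha hs]
    push_cast
    rfl

theorem sum_primes_littleO (c : ℕ → ℝ) (hc : ∀ n, |c n| ≤ 1)
    (h : (fun N : ℕ => ∑ k ∈ Finset.Icc 1 N, c k * ArithmeticFunction.vonMangoldt k)
      =o[atTop] (fun N : ℕ => (N : ℝ))) :
    (fun N : ℕ => ∑ p ∈ Nat.primesLE N, c p) =o[atTop] (fun N : ℕ => (Nat.primeCounting N : ℝ)) := by
  have hcast : Tendsto (fun N : ℕ => (N : ℝ)) atTop atTop := tendsto_natCast_atTop_atTop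
  have hset : ∀ N : ℕ, Nat.primesLE N = (Finset.Icc 1 N).filter Nat.Prime := by
    intro N; ext p
    simp only [Nat.mem_primesLE, Finset.mem_filter, Finset.mem_Icc]
    constructor
    · rintro ⟨h1, h2⟩; exact ⟨⟨h2.one_le, h1⟩, h2⟩
    · rintro ⟨⟨_, h1⟩, h2⟩; exact ⟨h1, h2⟩
  have s1 : (fun N : ℕ => (∑ k ∈ Finset.Icc 1 N, c k * ArithmeticFunction.vonMangoldt k)
      - ∑ p ∈ Nat.primesLE N, c p * Real.log p) =o[atTop] (fun N : ℕ => (N : ℝ)) := by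
    have b1 : (fun N : ℕ => (∑ k ∈ Finset.Icc 1 N, c k * ArithmeticFunction.vonMangoldt k)
      - ∑ p ∈ Nat.primesLE N, c p * Real.log p) =O[atTop]
        (fun N : ℕ => (Chebyshev.psi - Chebyshev.theta) (N : ℝ)) := by
      refine IsBigO.of_bound 1 (Eventually.of_forall fun N => ?_)
      have e1 : (∑ k ∈ Finset.Icc 1 N, c k * ArithmeticFunction.vonMangoldt k)
          - ∑ p ∈ Nat.primesLE N, c p * Real.log p
          = ∑ k ∈ Finset.Icc 1 N with ¬ k.Prime, c k * ArithmeticFunction.vonMangoldt k := by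
        rw [hset, ← Finset.sum_filter_add_sum_filter_not (Finset.Icc 1 N) Nat.Prime,
          sub_eq_iff_eq_add, add_comm]
        congr 1
        refine Finset.sum_congr rfl fun p hp => ?_
        rw [ArithmeticFunction.vonMangoldt_apply_prime (Finset.mem_filter.1 hp).2]
      have e2 : (Chebyshev.psi - Chebyshev.theta) (N : ℝ)
          = ∑ k ∈ Finset.Icc 1 N with ¬ k.Prime, ArithmeticFunction.vonMangoldt k := by
        rw [Pi.sub_apply, Chebyshev.psi_sub_theta_eq_sum_not_prime, Nat.floor_natCast]
        rfl
      rw [e1, e2, one_mul]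
      refine (Finset.abs_sum_le_sum_abs _ _).trans (le_trans ?_ (le_abs_self _))
      refine Finset.sum_le_sum fun k _ => ?_
      rw [abs_mul, abs_of_nonneg (ArithmeticFunction.vonMangoldt_nonneg (n := k))]
      exact mul_le_of_le_one_left ArithmeticFunction.vonMangoldt_nonneg (hc k)
    refine b1.trans_isLittleO ?_
    have b2 : (Chebyshev.psi - Chebyshev.theta) =o[atTop] (fun x : ℝ => x) := by
      refine Chebyshev.isBigO_psi_sub_theta_sqrt.trans_isLittleO ?_
      refine (isLittleO_iff_tendsto' ?_).2 ?_
      · filter_upwards [eventually_gt_atTop 0] with x hx h0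
        exact absurd h0 hx.ne'
      · refine Real.tendsto_sqrt_atTop.inv_tendsto_atTop.congr fun x => ?_
        simp [Real.sqrt_div_self]
    exact b2.comp_tendsto hcast
  have s2 : (fun N : ℕ => ∑ p ∈ Nat.primesLE N, c p * Real.log p) =o[atTop] (fun N : ℕ => (N : ℝ)) := by
    refine (h.sub s1).congr_left fun N => ?_
    ring
  have s3 : (fun N : ℕ => (∑ p ∈ Nat.primesLE N, c p * Real.log p) / Real.log N)
      =o[atTop] (fun N : ℕ => (N : ℝ) / Real.log N) := by
    simp_rw [div_eq_mul_inv]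
    exact s2.mul_isBigO (isBigO_refl _ _)
  have s4 : (fun N : ℕ => (∑ p ∈ Nat.primesLE N, c p) - (∑ p ∈ Nat.primesLE N, c p * Real.log p) / Real.log N)
      =o[atTop] (fun N : ℕ => (N : ℝ) / Real.log N) := by
    have b1 : (fun N : ℕ => (∑ p ∈ Nat.primesLE N, c p) - (∑ p ∈ Nat.primesLE N, c p * Real.log p) / Real.log N)
        =O[atTop] (fun N : ℕ => (Nat.primeCounting ⌊(N:ℝ)⌋₊ : ℝ) - Chebyshev.theta N / Real.log N) := by
      refine IsBigO.of_bound 1 ?_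
      filter_upwards [eventually_ge_atTop 2] with N hN
      have hlog : 0 < Real.log N := Real.log_pos (by exact_mod_cast hN)
      rw [Nat.floor_natCast, Chebyshev.theta_eq_sum_primesLE_log, ← Nat.primesLE_card_eq_primeCounting,
        Finset.card_eq_sum_ones, one_mul]
      push_cast
      rw [Finset.sum_div, Finset.sum_div, ← Finset.sum_sub_distrib, ← Finset.sum_sub_distrib]
      refine (Finset.abs_sum_le_sum_abs _ _).trans (le_trans ?_ (le_abs_self _))
      refine Finset.sum_le_sum fun p hp => ?_
      rw [Nat.mem_primesLE] at hp
      have hp0 : (0:ℝ) < p := by exact_mod_cast hp.2.pos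
      have : Real.log p / Real.log N ≤ 1 := by
        rw [div_le_one hlog]
        exact Real.log_le_log hp0 (by exact_mod_cast hp.1)
      rw [show c p - c p * Real.log p / Real.log N = c p * (1 - Real.log p / Real.log N) by ring, abs_mul,
        abs_of_nonneg (a := 1 - Real.log p / Real.log N) (by linarith)]
      exact mul_le_of_le_one_left (by linarith) (hc p)
    refine (b1.trans (Chebyshev.primeCounting_sub_theta_div_log_isBigO.comp_tendsto hcast)).trans_isLittleO ?_
    have b2 : (fun x : ℝ => x / Real.log x ^ 2) =o[atTop] (fun x : ℝ => x / Real.log x) := by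
      refine isLittleO_iff_tendsto' ?_ |>.mpr ?_
      · filter_upwards [eventually_gt_atTop 1] with x hx h0
        have := Real.log_pos hx
        rcases div_eq_zero_iff.1 h0 with h | h <;> linarith
      · refine Tendsto.congr' (f₁ := fun x ↦ (Real.log x)⁻¹) ?_ Real.tendsto_log_atTop.inv_tendsto_atTop
        filter_upwards [eventually_gt_atTop 1] with x hx
        have := Real.log_pos hx
        field_simp
    exact b2.comp_tendsto hcast
  have s5 : (fun N : ℕ => (N : ℝ) / Real.log N) =O[atTop] (fun N : ℕ => (Nat.primeCounting N : ℝ)) := by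
    have l2 : 0 < Real.log 2 := Real.log_pos one_lt_two
    have b1 : ∀ᶠ x : ℝ in atTop, Real.log x ≤ (Real.log 2 / 4) * x := by
      have := Real.isLittleO_log_id_atTop.bound (show 0 < Real.log 2 / 4 by positivity)
      filter_upwards [this, eventually_gt_atTop 0] with x hx hx0
      refine (le_abs_self _).trans ?_
      simpa [abs_of_pos hx0] using hx
    refine IsBigO.of_bound (2 / Real.log 2) ?_
    filter_upwards [(tendsto_atTop_add_const_right _ (1:ℝ) hcast).eventually b1, eventually_ge_atTop 2] with N hN hN2
    have hN2' : (2:ℝ) ≤ N := by exact_mod_cast hN2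
    have hlog : 0 < Real.log N := Real.log_pos (by linarith)
    have h1 := Chebyshev.pi_ge N
    rw [Real.norm_eq_abs, Real.norm_eq_abs, abs_of_nonneg (by positivity), abs_of_nonneg (by positivity)]
    calc (N : ℝ) / Real.log N = 2 / Real.log 2 * ((N * (Real.log 2 / 2)) / Real.log N) := by field_simp
      _ ≤ 2 / Real.log 2 * ((N * Real.log 2 - Real.log (N + 1)) / Real.log N) := by
          gcongr
          nlinarith
      _ ≤ _ := by gcongr
  refine ((s3.add s4).congr_left fun N => ?_).trans_isBigO s5
  ring

theorem exists_prime_jacobi_squarefree (δ : ℤ) (hsq : Squarefree δ.natAbs) (h1 : δ ≠ 1) (N : ℕ) :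
    ∃ l > N, l.Prime ∧ jacobiSym δ l = -1 := by
  by_cases hp : ∃ p : ℕ, p.Prime ∧ p ≠ 2 ∧ p ∣ δ.natAbs
  · obtain ⟨p, pp, p2, pd⟩ := hp
    have := Fact.mk pp
    obtain ⟨m, rfl⟩ := Int.natCast_dvd.2 pd
    rw [Int.natAbs_mul, Int.natAbs_natCast] at hsq
    have hcop : Nat.Coprime p m.natAbs := Nat.coprime_of_squarefree_mul hsq
    have hm0 : m.natAbs ≠ 0 := by rintro h; simp [h] at hsq
    have p4 : Nat.Coprime (4 * m.natAbs) p := by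
      refine Nat.Coprime.mul_left ?_ hcop.symm
      have : Nat.Coprime 2 p := (Nat.coprime_primes Nat.prime_two pp).2 p2.symm
      exact Nat.Coprime.pow_left 2 this
    obtain ⟨x, hx⟩ := FiniteField.exists_nonsquare (F := ZMod p) (by rwa [ZMod.ringChar_zmod_n])
    obtain ⟨k, hk1, hk2⟩ := Nat.chineseRemainder p4 1 x.val
    have hx0 : x ≠ 0 := by rintro rfl; exact hx (IsSquare.zero)
    have hkx : ((k : ℕ) : ZMod p) = x := by
      rw [(ZMod.natCast_eq_natCast_iff _ _ _).2 hk2, ZMod.natCast_zmod_val]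
    have kc : k.Coprime (4 * m.natAbs * p) := by
      refine Nat.Coprime.mul_right ?_ ?_
      · have := hk1.gcd_eq
        rw [Nat.Coprime, this]; simp
      · rw [Nat.coprime_comm, Nat.Prime.coprime_iff_not_dvd pp, ← ZMod.natCast_eq_zero_iff, hkx]
        exact hx0
    obtain ⟨l, hl, lp, lk⟩ := Nat.forall_exists_prime_gt_and_modEq N
      (mul_ne_zero (mul_ne_zero four_ne_zero hm0) pp.ne_zero) kc
    refine ⟨l, hl, lp, ?_⟩
    have l1 : l ≡ 1 [MOD 4 * m.natAbs] := (lk.of_mul_right p).trans hk1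
    have l4 : l % 4 = 1 := l1.of_mul_right _
    have lodd : Odd l := by rw [Nat.odd_iff]; omega
    have lx : ((l : ℕ) : ZMod p) = x := by
      rw [(ZMod.natCast_eq_natCast_iff _ _ _).2 (lk.of_mul_left _), hkx]
    have podd : Odd p := pp.odd_of_ne_two p2
    rw [jacobiSym.mul_left, jacobiSym.quadratic_reciprocity_one_mod_four' podd l4]
    have e1 : jacobiSym m l = 1 := by
      rw [jacobiSym.mod_right m lodd, l1, ← jacobiSym.mod_right m odd_one, jacobiSym.one_right]
    have e2 : jacobiSym l p = -1 := by
      rw [ZMod.nonsquare_iff_jacobiSym_eq_neg_one]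
      push_cast
      rwa [lx]
    rw [e1, e2]; rfl
  · push Not at hp
    have h12 : δ.natAbs = 1 ∨ δ.natAbs = 2 := by
      by_cases h : δ.natAbs = 1
      · exact Or.inl h
      · right
        obtain ⟨r, rp, rd⟩ := Nat.exists_prime_and_dvd h
        have r2 : r = 2 := by
          by_contra hr; exact hp r rp hr rd
        subst r2
        obtain ⟨e, he⟩ := rd
        by_cases h' : e = 1
        · rw [he, h']
        · obtain ⟨r, rp', rd⟩ := Nat.exists_prime_and_dvd h'
          have r2 : r = 2 := by
            by_contra hr
            exact hp r rp' hr (he ▸ rd.mul_left 2)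
          subst r2
          have := hsq 2 (he ▸ Nat.mul_dvd_mul_left 2 rd)
          simp at this
    have h3 : δ = -1 ∨ δ = 2 ∨ δ = -2 := by omega
    have main : ∀ r : ℕ, r.Coprime 8 → ∃ l > N, l.Prime ∧ l % 8 = r % 8 := by
      intro r hr
      obtain ⟨l, hl, lp, lk⟩ := Nat.forall_exists_prime_gt_and_modEq N (q := 8) (by norm_num) hr
      exact ⟨l, hl, lp, lk⟩
    rcases h3 with rfl | rfl | rfl
    · obtain ⟨l, hl, lp, l8⟩ := main 3 (by decide)
      refine ⟨l, hl, lp, ?_⟩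
      rw [jacobiSym.at_neg_one (by rw [Nat.odd_iff]; omega), ZMod.χ₄_nat_three_mod_four (by omega)]
    · obtain ⟨l, hl, lp, l8⟩ := main 3 (by decide)
      refine ⟨l, hl, lp, ?_⟩
      rw [jacobiSym.at_two (by rw [Nat.odd_iff]; omega), ZMod.χ₈_nat_eq_if_mod_eight]
      rw [if_neg (by omega), if_neg (by omega)]
    · obtain ⟨l, hl, lp, l8⟩ := main 5 (by decide)
      refine ⟨l, hl, lp, ?_⟩
      rw [jacobiSym.at_neg_two (by rw [Nat.odd_iff]; omega), ZMod.χ₈'_nat_eq_if_mod_eight]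
      rw [if_neg (by omega), if_neg (by omega)]

theorem exists_prime_jacobi (D : ℤ) (hD : ¬ IsSquare D) :
    ∃ l : ℕ, l.Prime ∧ l.Coprime (4 * D.natAbs) ∧ jacobiSym D l = -1 := by
  have hD0 : D ≠ 0 := by rintro rfl; exact hD IsSquare.zero
  obtain ⟨a, b, hab, hsq⟩ := Nat.sq_mul_squarefree D.natAbs
  have hDe : D = (D.sign * a) * (b : ℤ) ^ 2 := by
    conv_lhs => rw [← Int.sign_mul_natAbs D, ← hab]
    push_cast; ring
  have hna : (D.sign * a).natAbs = a := by
    rw [Int.natAbs_mul, Int.natAbs_sign_of_ne_zero hD0]; simp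
  obtain ⟨l, hl, lp, lj⟩ := exists_prime_jacobi_squarefree (D.sign * a) (by rwa [hna]) (by
    intro h
    apply hD
    rw [hDe, h, one_mul]
    exact ⟨b, by ring⟩) (4 * D.natAbs)
  have lc : l.Coprime (4 * D.natAbs) := by
    rw [Nat.Prime.coprime_iff_not_dvd lp]
    intro h
    have := Nat.le_of_dvd (by positivity) h
    omega
  refine ⟨l, lp, lc, ?_⟩
  rw [hDe, jacobiSym.mul_left, lj, jacobiSym.sq_one']
  · rfl
  · rw [Int.gcd_natCast_natCast]
    refine Nat.Coprime.symm (lc.coprime_dvd_right ?_)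
    rw [← hab]
    exact Dvd.intro_left (4 * b * a) (by ring)

theorem jacobi_period (D : ℤ) {m n : ℕ} (hm : m.Coprime (4 * D.natAbs))
    (h : m ≡ n [MOD 4 * D.natAbs]) : jacobiSym D m = jacobiSym D n := by
  have hm4 : m.Coprime 2 := hm.coprime_dvd_right (Dvd.intro (2 * D.natAbs) (by ring))
  have hn : n.Coprime (4 * D.natAbs) := by
    have := h.gcd_eq
    rw [Nat.Coprime, ← this]; exact hm
  have hn4 : n.Coprime 2 := hn.coprime_dvd_right (Dvd.intro (2 * D.natAbs) (by ring))
  rw [jacobiSym.mod_right D (Nat.coprime_two_right.1 hm4), h,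
    ← jacobiSym.mod_right D (Nat.coprime_two_right.1 hn4)]

theorem sum_units_jacobi (D : ℤ) (hD : ¬ IsSquare D) [NeZero (4 * D.natAbs)] :
    ∑ u : (ZMod (4 * D.natAbs))ˣ, ((jacobiSym D (u : ZMod (4 * D.natAbs)).val : ℤ) : ℝ) = 0 := by
  obtain ⟨l, lp, lc, lj⟩ := exists_prime_jacobi D hD
  have hD0 : D.natAbs ≠ 0 := by
    intro h; apply hD; rw [Int.natAbs_eq_zero] at h; rw [h]; exact IsSquare.zero
  set L : (ZMod (4 * D.natAbs))ˣ := ZMod.unitOfCoprime l lc with hL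
  have key : ∀ u : (ZMod (4 * D.natAbs))ˣ, jacobiSym D ((L * u : (ZMod (4 * D.natAbs))ˣ) : ZMod (4 * D.natAbs)).val
      = - jacobiSym D (u : ZMod (4 * D.natAbs)).val := by
    intro u
    have hu0 : (u : ZMod (4 * D.natAbs)).val ≠ 0 := by
      intro h
      have := ZMod.val_coe_unit_coprime u
      rw [h, Nat.coprime_zero_left] at this
      omega
    rw [jacobi_period D (n := l * (u : ZMod (4 * D.natAbs)).val) (ZMod.val_coe_unit_coprime _),
      jacobiSym.mul_right' D lp.ne_zero hu0, lj, neg_one_mul]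
    rw [← ZMod.natCast_eq_natCast_iff]
    simp [hL]
  have h1 := Equiv.sum_comp (Equiv.mulLeft L)
    (fun u : (ZMod (4 * D.natAbs))ˣ => ((jacobiSym D (u : ZMod (4 * D.natAbs)).val : ℤ) : ℝ))
  simp only [Equiv.coe_mulLeft, key] at h1
  push_cast at h1
  rw [Finset.sum_neg_distrib] at h1
  linarith

theorem char_sum_littleO (D : ℤ) (hD : ¬ IsSquare D) :
    (fun N : ℕ => ∑ k ∈ Finset.Icc 1 N,
      (if k.Coprime (4 * D.natAbs) then ((jacobiSym D k : ℤ) : ℝ) else 0)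
        * ArithmeticFunction.vonMangoldt k) =o[atTop] (fun N : ℕ => (N : ℝ)) := by
  have hD0 : D ≠ 0 := by
    rintro rfl
    exact hD ⟨0, by simp⟩
  have hq0 : 4 * D.natAbs ≠ 0 := by
    have := Int.natAbs_ne_zero.2 hD0
    omega
  have : NeZero (4 * D.natAbs) := ⟨hq0⟩
  have hsum := sum_units_jacobi D hD
  have hper := fun m n => @jacobi_period D m n
  have hap := fun u : (ZMod (4 * D.natAbs))ˣ => pnt_ap_psi (4 * D.natAbs) u u.isUnit
  generalize 4 * D.natAbs = q at *
  have key : ∀ k : ℕ, (if k.Coprime q then ((jacobiSym D k : ℤ) : ℝ) else 0)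
        * ArithmeticFunction.vonMangoldt k
      = ∑ u : (ZMod q)ˣ, ((jacobiSym D (u : ZMod q).val : ℤ) : ℝ) *
          ArithmeticFunction.vonMangoldt.residueClass (u : ZMod q) k := by
    intro k
    split_ifs with hk
    · rw [Finset.sum_eq_single (ZMod.unitOfCoprime k hk)]
      · rw [ZMod.coe_unitOfCoprime, ArithmeticFunction.vonMangoldt.residueClass,
          Set.indicator_of_mem (by simp)]
        congr 2
        rw [hper k (k : ZMod q).val hk]
        rw [← ZMod.natCast_eq_natCast_iff]
        simp
      · intro u _ hu
        rw [ArithmeticFunction.vonMangoldt.residueClass, Set.indicator_of_notMem, mul_zero]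
        intro h
        apply hu
        ext
        simpa using h.symm
      · simp
    · rw [zero_mul, Finset.sum_eq_zero]
      intro u _
      rw [ArithmeticFunction.vonMangoldt.residueClass, Set.indicator_of_notMem, mul_zero]
      intro h
      apply hk
      rw [← ZMod.isUnit_iff_coprime]
      have h' : (k : ZMod q) = u := h
      rw [h']
      exact u.isUnit
  refine (isLittleO_iff_tendsto' ?_).2 ?_
  · filter_upwards [eventually_gt_atTop 0] with N hN h0
    exact absurd h0 (by positivity)
  · have ht : Tendsto (fun N : ℕ => ∑ u : (ZMod q)ˣ, ((jacobiSym D (u : ZMod q).val : ℤ) : ℝ) *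
        ((∑ k ∈ Finset.Icc 1 N, ArithmeticFunction.vonMangoldt.residueClass (u : ZMod q) k) / (N : ℝ)))
        atTop (𝓝 (∑ u : (ZMod q)ˣ, ((jacobiSym D (u : ZMod q).val : ℤ) : ℝ) * (q.totient : ℝ)⁻¹)) := by
      refine tendsto_finsetSum _ fun u _ => Tendsto.const_mul _ ?_
      have := (hap u).comp tendsto_natCast_atTop_atTop
      simpa [Function.comp_def] using this
    rw [← Finset.sum_mul, hsum, zero_mul] at ht
    refine ht.congr fun N => ?_
    simp_rw [key]
    rw [Finset.sum_comm, Finset.sum_div]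
    refine Finset.sum_congr rfl fun u _ => ?_
    rw [← Finset.mul_sum, mul_div_assoc]

theorem half_density (D : ℤ) (hD : ¬ IsSquare D) :
    IsEquivalent atTop
      (fun x : ℕ => (((Finset.range (x + 1)).filter
        (fun p => p.Prime ∧ jacobiSym D p = 1)).card : ℝ))
      (fun x : ℕ => (Nat.primeCounting x : ℝ) / 2) := by
  have hD0 : D ≠ 0 := by
    rintro rfl
    exact hD ⟨0, by simp⟩
  have hq0 : 4 * D.natAbs ≠ 0 := by
    have := Int.natAbs_ne_zero.2 hD0
    omega
  have hgcd : ∀ k : ℕ, k.Coprime (4 * D.natAbs) → jacobiSym D k = 1 ∨ jacobiSym D k = -1 := by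
    intro k hk
    apply jacobiSym.eq_one_or_neg_one
    have : k.Coprime D.natAbs := hk.coprime_dvd_right (Dvd.intro_left _ rfl)
    simpa [Int.gcd] using this.symm
  have h0 := sum_primes_littleO _ ?_ (char_sum_littleO D hD)
  swap
  · intro n
    split_ifs with hn
    · rcases hgcd n hn with h | h <;> simp [h]
    · simp
  have hπ : Tendsto (fun N : ℕ => (Nat.primeCounting N : ℝ)) atTop atTop :=
    tendsto_natCast_atTop_atTop.comp Nat.tendsto_primeCounting
  generalize 4 * D.natAbs = q at *
  set c : ℕ → ℝ := fun k => if k.Coprime q then ((jacobiSym D k : ℤ) : ℝ) else 0 with hc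
  have hE : (fun N : ℕ => (((Finset.range (N + 1)).filter
        (fun p => p.Prime ∧ jacobiSym D p = 1)).card : ℝ) - (Nat.primeCounting N : ℝ) / 2
        - (1 / 2) * ∑ p ∈ Nat.primesLE N, c p) =O[atTop] (fun _ : ℕ => (1 : ℝ)) := by
    refine IsBigO.of_bound (q.primeFactors.card : ℝ) (Eventually.of_forall fun N => ?_)
    have e1 : (((Finset.range (N + 1)).filter
        (fun p => p.Prime ∧ jacobiSym D p = 1)).card : ℝ)
        = ∑ p ∈ Nat.primesLE N, if jacobiSym D p = 1 then (1 : ℝ) else 0 := by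
      rw [Finset.sum_boole]
      congr 2
      ext p
      simp only [Finset.mem_filter, Finset.mem_range, Nat.mem_primesLE]
      constructor
      · rintro ⟨a, b, c⟩
        exact ⟨⟨by omega, b⟩, c⟩
      · rintro ⟨⟨a, b⟩, c⟩
        exact ⟨by omega, b, c⟩
    have e2 : (Nat.primeCounting N : ℝ) / 2 = ∑ p ∈ Nat.primesLE N, (1 / 2 : ℝ) := by
      rw [← Nat.primesLE_card_eq_primeCounting]
      simp [div_eq_mul_inv]
    rw [e1, e2, Finset.mul_sum, ← Finset.sum_sub_distrib, ← Finset.sum_sub_distrib,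
      Real.norm_eq_abs, norm_one, mul_one]
    refine (Finset.abs_sum_le_sum_abs _ _).trans ?_
    have e3 : ∀ p ∈ Nat.primesLE N, |(if jacobiSym D p = 1 then (1 : ℝ) else 0) - 1 / 2
        - 1 / 2 * c p| ≤ if p ∈ q.primeFactors then 1 else 0 := by
      intro p hp
      have hpp := (Nat.mem_primesLE.1 hp).2
      by_cases hk : p.Coprime q
      · have : c p = ((jacobiSym D p : ℤ) : ℝ) := by simp [hc, hk]
        rw [this]
        have hz : ∀ t : Prop, [Decidable t] → (0 : ℝ) ≤ if t then 1 else 0 := by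
          intro t _
          split_ifs <;> norm_num
        refine le_trans (le_of_eq ?_) (hz _)
        rcases hgcd p hk with h | h
        · rw [h]; norm_num
        · rw [h]; norm_num
      · have : c p = 0 := by simp [hc, hk]
        rw [this]
        have hdvd : p ∣ q := by
          by_contra hn
          exact hk ((Nat.Prime.coprime_iff_not_dvd hpp).2 hn)
        rw [if_pos (Nat.mem_primeFactors.2 ⟨hpp, hdvd, hq0⟩)]
        split_ifs <;> norm_num [abs_le]
    refine (Finset.sum_le_sum e3).trans ?_
    rw [Finset.sum_boole]
    exact_mod_cast Finset.card_le_card fun p hp => (Finset.mem_filter.1 hp).2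
  have hE' := hE.trans_isLittleO (isLittleO_const_left.2 (Or.inr (tendsto_norm_atTop_atTop.comp hπ)) :
    (fun _ : ℕ => (1 : ℝ)) =o[atTop] (fun N : ℕ => (Nat.primeCounting N : ℝ)))
  have h1 := hE'.add (h0.const_mul_left (1 / 2))
  have h2 : (fun x : ℕ => (((Finset.range (x + 1)).filter
        (fun p => p.Prime ∧ jacobiSym D p = 1)).card : ℝ) - (Nat.primeCounting x : ℝ) / 2)
      =o[atTop] (fun x : ℕ => (Nat.primeCounting x : ℝ)) := by
    refine h1.congr_left fun N => ?_
    ring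
  have h3 := h2.const_mul_right (c := (1 / 2 : ℝ)) (by norm_num)
  refine (h3.congr_right fun N => ?_)
  ring

end Aux

theorem stmt_0 (D : ℤ) (hD : ¬ IsSquare D) :
    IsEquivalent atTop
      (fun x : ℕ => (((Finset.range (x + 1)).filter
        (fun p => p.Prime ∧ jacobiSym D p = 1)).card : ℝ))
      (fun x : ℕ => (Nat.primeCounting x : ℝ) / 2) := by
  exact half_density D hD
end

section
/- For a fixed non-square integer D, the set of primes p with Kronecker-Legendre symbol (D/p) = -1 has natural density 1/2 in the primes: #{p ≤ x prime : (D/p) = -1} ~ π(x)/2 as x → ∞. -/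
open Filter Asymptotics

section core
open MeasureTheory Set Topology FourierTransform Complex

/-- Smoothed Tauberian statement. -/
lemma core_smoothed {b : ℝ → ℂ} (hbm : Measurable b) {M : ℝ} (hbM : ∀ u, ‖b u‖ ≤ M)
    {H : ℂ → ℂ} (hH : ContinuousOn H {z | 0 ≤ z.re})
    (hL : ∀ z : ℂ, 0 < z.re → ∫ u in Ioi (0:ℝ), b u * cexp (-z * u) = H z)
    {φ : ℝ → ℂ} (hφc : Continuous φ) (hφs : HasCompactSupport φ) (hφi : Integrable (𝓕 φ)) :
    Tendsto (fun x : ℝ => ∫ u in Ioi (0:ℝ), b u * 𝓕 φ (u - x)) atTop (𝓝 0) := by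
  have hφint : Integrable φ := hφc.integrable_of_hasCompactSupport hφs
  have hM : 0 ≤ M := (norm_nonneg _).trans (hbM 0)
  -- identity for positive ε
  have h1 : ∀ x ε : ℝ, 0 < ε → ∫ u in Ioi (0:ℝ), b u * cexp (-(ε:ℂ) * u) * 𝓕 φ (u - x) =
      ∫ t : ℝ, φ t * cexp (2 * Real.pi * I * t * x) * H (ε + 2 * Real.pi * I * t) := by
    intro x ε hε
    have hexp : IntegrableOn (fun u : ℝ => Real.exp (-ε * u)) (Ioi 0) :=
      integrableOn_exp_mul_Ioi (by linarith) 0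
    have hbe : Integrable (fun u : ℝ => b u * cexp (-(ε:ℂ) * u)) (volume.restrict (Ioi 0)) := by
      refine Integrable.mono' (hexp.const_mul M) ?_ ?_
      · exact (hbm.mul (by fun_prop)).aestronglyMeasurable
      · refine Eventually.of_forall fun u => ?_
        rw [norm_mul, Complex.norm_exp]
        have : (-(ε:ℂ) * u).re = -ε * u := by simp
        rw [this]
        gcongr
        exact hbM u
    have hprod : Integrable (Function.uncurry fun (u t : ℝ) =>
        (b u * cexp (-(ε:ℂ) * u)) * φ t * cexp (-2 * Real.pi * I * t * (u - x)))
        ((volume.restrict (Ioi 0)).prod volume) := by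
      refine Integrable.mono (hbe.mul_prod hφint) ?_ ?_
      · apply AEStronglyMeasurable.mul
        · exact (hbe.mul_prod hφint).aestronglyMeasurable
        · apply Continuous.aestronglyMeasurable
          fun_prop
      · refine Eventually.of_forall fun p => ?_
        simp only [Function.uncurry]
        rw [norm_mul _ (cexp _), Complex.norm_exp]
        have : (-2 * Real.pi * I * p.2 * (p.1 - x) : ℂ).re = 0 := by
          have : (-2 * Real.pi * I * p.2 * (p.1 - x) : ℂ) = ((-2 * Real.pi * p.2 * (p.1 - x) : ℝ) : ℂ) * I := by
            push_cast; ring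
          rw [this]; simp
        rw [this]; simp
    calc _ = ∫ u in Ioi (0:ℝ), ∫ t : ℝ, (b u * cexp (-(ε:ℂ) * u)) * φ t * cexp (-2 * Real.pi * I * t * (u - x)) := by
          refine integral_congr_ae (Eventually.of_forall fun u => ?_)
          simp only
          rw [Real.fourier_eq', ← integral_const_mul]
          refine integral_congr_ae (Eventually.of_forall fun t => ?_)
          simp only [smul_eq_mul, RCLike.inner_apply, conj_trivial]
          push_cast
          ring_nf
      _ = ∫ t : ℝ, ∫ u in Ioi (0:ℝ), (b u * cexp (-(ε:ℂ) * u)) * φ t * cexp (-2 * Real.pi * I * t * (u - x)) :=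
          integral_integral_swap hprod
      _ = _ := by
          refine integral_congr_ae (Eventually.of_forall fun t => ?_)
          simp only
          rw [← hL _ (by simp [hε]), ← integral_const_mul]
          refine integral_congr_ae (Eventually.of_forall fun u => ?_)
          simp only
          have : cexp (-(ε + 2 * Real.pi * I * t) * u) * cexp (2 * Real.pi * I * t * x) = cexp (-(ε:ℂ) * u) * cexp (-2 * Real.pi * I * t * (u - x)) := by
            rw [← Complex.exp_add, ← Complex.exp_add]; ring_nf
          linear_combination (- b u * φ t) * this
  have hmaps : ∀ t : ℝ, (2 * Real.pi * I * t : ℂ) ∈ {z : ℂ | 0 ≤ z.re} := fun t => by simp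
  -- identity in the limit
  have h2 : ∀ x : ℝ, ∫ u in Ioi (0:ℝ), b u * 𝓕 φ (u - x) =
      ∫ t : ℝ, φ t * cexp (2 * Real.pi * I * t * x) * H (2 * Real.pi * I * t) := by
    intro x
    have hl : Tendsto (fun ε : ℝ => ∫ u in Ioi (0:ℝ), b u * cexp (-(ε:ℂ) * u) * 𝓕 φ (u - x)) (𝓝[>] 0)
        (𝓝 (∫ u in Ioi (0:ℝ), b u * 𝓕 φ (u - x))) := by
      have hFi : Integrable (fun u => 𝓕 φ (u - x)) := hφi.comp_sub_right x
      refine tendsto_integral_filter_of_dominated_convergence (fun u => M * ‖𝓕 φ (u - x)‖) ?_ ?_ ?_ ?_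
      · refine Eventually.of_forall fun ε => ?_
        refine AEStronglyMeasurable.mul ?_ hFi.aestronglyMeasurable.restrict
        exact (hbm.mul (by fun_prop)).aestronglyMeasurable
      · filter_upwards [self_mem_nhdsWithin] with ε hε
        filter_upwards [ae_restrict_mem measurableSet_Ioi] with u hu
        rw [norm_mul, norm_mul, Complex.norm_exp]
        have : (-(ε:ℂ) * u).re = -(ε * u) := by simp
        rw [this]
        have h3 : Real.exp (-(ε * u)) ≤ 1 := by
          rw [Real.exp_le_one_iff]
          have := mul_pos (mem_Ioi.1 hε) (mem_Ioi.1 hu)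
          linarith
        have : ‖b u‖ * Real.exp (-(ε * u)) ≤ M * 1 := by
          gcongr
          exact hbM u
        rw [mul_one] at this
        gcongr
      · exact (hFi.norm.const_mul M).restrict
      · refine Eventually.of_forall fun u => ?_
        have : Continuous fun ε : ℝ => b u * cexp (-(ε:ℂ) * u) * 𝓕 φ (u - x) := by fun_prop
        have := this.tendsto 0
        simp only [ofReal_zero, neg_zero, zero_mul, Complex.exp_zero, mul_one] at this
        exact this.mono_left nhdsWithin_le_nhds
    have hr : Tendsto (fun ε : ℝ => ∫ t : ℝ, φ t * cexp (2 * Real.pi * I * t * x) * H (ε + 2 * Real.pi * I * t)) (𝓝[>] 0)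
        (𝓝 (∫ t : ℝ, φ t * cexp (2 * Real.pi * I * t * x) * H (2 * Real.pi * I * t))) := by
      obtain ⟨B, hB⟩ : ∃ B, ∀ z ∈ (fun p : ℝ × ℝ => (p.1 + 2 * Real.pi * I * p.2 : ℂ)) '' (Icc 0 1 ×ˢ tsupport φ), ‖H z‖ ≤ B := by
        have hc : IsCompact ((fun p : ℝ × ℝ => (p.1 + 2 * Real.pi * I * p.2 : ℂ)) '' (Icc 0 1 ×ˢ tsupport φ)) :=
          (isCompact_Icc.prod hφs).image (by fun_prop)
        refine hc.exists_bound_of_continuousOn (hH.mono ?_)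
        rintro _ ⟨p, hp, rfl⟩
        simpa using hp.1.1
      refine tendsto_integral_filter_of_dominated_convergence (fun t => ‖φ t‖ * B) ?_ ?_ ?_ ?_
      · filter_upwards [self_mem_nhdsWithin] with ε hε
        apply Continuous.aestronglyMeasurable
        have : Continuous fun t : ℝ => H (ε + 2 * Real.pi * I * t) := by
          refine hH.comp_continuous (by fun_prop) fun t => ?_
          simpa using (mem_Ioi.1 hε).le
        exact (hφc.mul (by fun_prop)).mul this
      · filter_upwards [Ioc_mem_nhdsGT (zero_lt_one (α := ℝ))] with ε hε
        refine Eventually.of_forall fun t => ?_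
        by_cases ht : t ∈ tsupport φ
        · rw [norm_mul, norm_mul, Complex.norm_exp]
          have : (2 * Real.pi * I * t * x : ℂ).re = 0 := by
            have : (2 * Real.pi * I * t * x : ℂ) = ((2 * Real.pi * t * x : ℝ) : ℂ) * I := by
              push_cast; ring
            rw [this]; simp
          rw [this, Real.exp_zero, mul_one]
          gcongr
          exact hB _ ⟨(ε, t), ⟨⟨hε.1.le, hε.2⟩, ht⟩, rfl⟩
        · simp [image_eq_zero_of_notMem_tsupport ht]
      · exact hφint.norm.mul_const B
      · refine Eventually.of_forall fun t => ?_
        refine Tendsto.const_mul _ ?_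
        have h3 := hH _ (hmaps t)
        refine h3.tendsto.comp (tendsto_nhdsWithin_iff.2 ⟨?_, ?_⟩)
        · have : Continuous fun ε : ℝ => (ε + 2 * Real.pi * I * t : ℂ) := by fun_prop
          have := this.tendsto 0
          simp only [ofReal_zero, zero_add] at this
          exact this.mono_left nhdsWithin_le_nhds
        · filter_upwards [self_mem_nhdsWithin] with ε hε
          simpa using (mem_Ioi.1 hε).le
    refine tendsto_nhds_unique hl (hr.congr' ?_)
    filter_upwards [self_mem_nhdsWithin] with ε hε
    exact (h1 x ε hε).symm
  have h3 := Real.zero_at_infty_fourier (fun t : ℝ => φ t * H (2 * Real.pi * I * t))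
  have h4 : Tendsto (fun x : ℝ => -x) atTop (cocompact ℝ) :=
    tendsto_neg_atTop_atBot.mono_right atBot_le_cocompact
  refine (h3.comp h4).congr fun x => ?_
  rw [h2 x, Function.comp, Real.fourier_eq']
  refine integral_congr_ae (Eventually.of_forall fun t => ?_)
  simp only [smul_eq_mul, RCLike.inner_apply, conj_trivial]
  push_cast
  ring_nf

end core

section core2
open MeasureTheory Set Topology FourierTransform Complex

lemma exists_kernel : ∃ φ : ℝ → ℂ, Continuous φ ∧ HasCompactSupport φ ∧ Integrable (𝓕 φ) ∧
    ∫ v, 𝓕 φ v = 1 := by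
  let f : ContDiffBump (0:ℝ) := ⟨1, 2, by norm_num, by norm_num⟩
  have hs : HasCompactSupport (fun x => (f x : ℂ)) :=
    f.hasCompactSupport.comp_left (g := fun y : ℝ => (y:ℂ)) (by simp)
  have hd : ContDiff ℝ ((⊤ : ℕ∞) : WithTop ℕ∞) (fun x => (f x : ℂ)) :=
    Complex.ofRealCLM.contDiff.comp f.contDiff
  have hint : Integrable (𝓕 (fun x => (f x : ℂ))) := by
    have := (𝓕 (hs.toSchwartzMap hd)).integrable (μ := volume)
    rw [SchwartzMap.fourier_coe] at this
    exact this
  refine ⟨fun x => (f x : ℂ), hd.continuous, hs, hint, ?_⟩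
  have h := Continuous.fourierInv_fourier_eq hd.continuous
    (hd.continuous.integrable_of_hasCompactSupport hs) hint
  have := congrFun h 0
  rw [Real.fourierInv_eq'] at this
  simp at this
  rw [this]
  have : f 0 = 1 := f.one_of_mem_closedBall (by simp [f])
  simp [this]

lemma core_scaled {b : ℝ → ℂ} (hbm : Measurable b) {M : ℝ} (hbM : ∀ u, ‖b u‖ ≤ M)
    (hb0 : ∀ u ≤ 0, b u = 0)
    {H : ℂ → ℂ} (hH : ContinuousOn H {z | 0 ≤ z.re})
    (hL : ∀ z : ℂ, 0 < z.re → ∫ u in Ioi (0:ℝ), b u * cexp (-z * u) = H z)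
    {φ : ℝ → ℂ} (hφc : Continuous φ) (hφs : HasCompactSupport φ) (hφi : Integrable (𝓕 φ))
    {l : ℝ} (hl : 0 < l) :
    Tendsto (fun z : ℝ => ∫ w, b (z + l⁻¹ * w) * 𝓕 φ w) atTop (𝓝 0) := by
  have hF : ∀ v, 𝓕 (fun t => φ (l⁻¹ * t)) v = l * 𝓕 φ (l * v) := by
    intro v
    rw [Real.fourier_eq', Real.fourier_eq']
    have := Measure.integral_comp_mul_left
      (fun t : ℝ => cexp (↑(-2 * Real.pi * inner ℝ t (l * v)) * I) • φ t) l⁻¹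
    rw [inv_inv, abs_of_pos hl] at this
    rw [← Complex.real_smul, ← this]
    congr 1
    ext t
    simp only [RCLike.inner_apply, conj_trivial]
    congr 4
    field_simp
  have h := core_smoothed hbm hbM hH hL (φ := fun t => φ (l⁻¹ * t)) (by fun_prop)
    (hφs.comp_homeomorph (Homeomorph.mulLeft₀ l⁻¹ (by positivity))) (by
      have : 𝓕 (fun t => φ (l⁻¹ * t)) = fun v => (l:ℂ) * 𝓕 φ (l * v) := funext hF
      rw [this]
      exact (hφi.comp_mul_left' hl.ne').const_mul _)
  refine h.congr fun z => ?_
  rw [setIntegral_eq_integral_of_forall_compl_eq_zero (by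
    intro u hu
    rw [hb0 u (by simpa using hu), zero_mul])]
  rw [← integral_add_left_eq_self _ z]
  have := Measure.integral_comp_mul_left
      (fun u : ℝ => b (z + u) * 𝓕 (fun t => φ (l⁻¹ * t)) (z + u - z)) l⁻¹
  rw [inv_inv, abs_of_pos hl] at this
  simp only [hF, add_sub_cancel_left] at this ⊢
  have h3 : ∀ w : ℝ, l * (l⁻¹ * w) = w := fun w => by field_simp
  simp only [h3] at this
  have h4 : ∫ w, b (z + l⁻¹ * w) * ((l:ℂ) * 𝓕 φ w) = l * ∫ w, b (z + l⁻¹ * w) * 𝓕 φ w := by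
    rw [← integral_const_mul]; congr 1; ext w; ring
  rw [h4, Complex.real_smul] at this
  exact (mul_left_cancel₀ (by exact_mod_cast hl.ne') this).symm

lemma core_window {b : ℝ → ℂ} (hbm : Measurable b) {M : ℝ} (hbM : ∀ u, ‖b u‖ ≤ M)
    (hb0 : ∀ u ≤ 0, b u = 0)
    {H : ℂ → ℂ} (hH : ContinuousOn H {z | 0 ≤ z.re})
    (hL : ∀ z : ℂ, 0 < z.re → ∫ u in Ioi (0:ℝ), b u * cexp (-z * u) = H z)
    {h : ℝ} (hh : 0 < h) :
    Tendsto (fun x : ℝ => ∫ u in x..(x + h), b u) atTop (𝓝 0) := by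
  obtain ⟨φ, hφc, hφs, hφi, hφ1⟩ := exists_kernel
  have hM : 0 ≤ M := (norm_nonneg _).trans (hbM 0)
  set K := 𝓕 φ with hK
  set P : ℝ → ℂ := fun x => ∫ u in x..(x + h), b u with hP
  have hbi : ∀ a c, IntervalIntegrable b volume a c := fun a c => by
    rw [intervalIntegrable_iff]
    exact Measure.integrableOn_of_bounded (M := M) (by simp) hbm.aestronglyMeasurable
      (Eventually.of_forall hbM)
  have hPlip : ∀ x w, ‖P (x + w) - P x‖ ≤ 2 * M * |w| := by
    intro x w
    simp only [hP]
    rw [intervalIntegral.integral_interval_sub_interval_comm' (hbi _ _) (hbi _ _) (hbi _ _)]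
    have h1 := intervalIntegral.norm_integral_le_of_norm_le_const (a := x + h) (b := x + w + h)
      (f := b) (C := M) (fun u _ => hbM u)
    have h2 := intervalIntegral.norm_integral_le_of_norm_le_const (a := x) (b := x + w)
      (f := b) (C := M) (fun u _ => hbM u)
    have e1 : x + w + h - (x + h) = w := by ring
    have e2 : x + w - x = w := by ring
    rw [e1] at h1
    rw [e2] at h2
    refine (norm_sub_le _ _).trans ?_
    linarith
  have hPbd : ∀ x, ‖P x‖ ≤ M * h := by
    intro x
    have h2 := intervalIntegral.norm_integral_le_of_norm_le_const (a := x) (b := x + h)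
      (f := b) (C := M) (fun u _ => hbM u)
    have e2 : x + h - x = h := by ring
    rwa [e2, abs_of_pos hh] at h2
  have hPcont : Continuous P := by
    have : LipschitzWith (Real.toNNReal (2 * M)) P := by
      refine LipschitzWith.of_dist_le_mul fun x y => ?_
      rw [dist_eq_norm, Real.dist_eq, Real.coe_toNNReal _ (by positivity)]
      have := hPlip y (x - y)
      rwa [add_sub_cancel] at this
    exact this.continuous
  -- error terms
  have herr : Tendsto (fun l : ℝ => ∫ w, ‖K w‖ * min (2 * M * |l⁻¹ * w|) (2 * M * h)) atTop (𝓝 0) := by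
    rw [show (0:ℝ) = ∫ w : ℝ, (0:ℝ) by simp]
    refine tendsto_integral_filter_of_dominated_convergence (fun w => ‖K w‖ * (2 * M * h)) ?_ ?_ ?_ ?_
    · refine Eventually.of_forall fun l => ?_
      exact hφi.aestronglyMeasurable.norm.mul (Continuous.aestronglyMeasurable (by fun_prop))
    · refine Eventually.of_forall fun l => Eventually.of_forall fun w => ?_
      rw [Real.norm_of_nonneg (by positivity)]
      gcongr
      exact min_le_right _ _
    · exact hφi.norm.mul_const _
    · refine Eventually.of_forall fun w => ?_
      have h1 : Tendsto (fun l : ℝ => l⁻¹ * w) atTop (𝓝 0) := by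
        simpa using tendsto_inv_atTop_zero.mul_const w
      have : Continuous fun y : ℝ => ‖K w‖ * min (2 * M * |y|) (2 * M * h) := by fun_prop
      have h2 := (this.tendsto 0).comp h1
      have e : ‖K w‖ * min (2 * M * |(0:ℝ)|) (2 * M * h) = 0 := by
        rw [abs_zero, mul_zero, min_eq_left (by positivity), mul_zero]
      rw [e] at h2
      exact h2
  have hdiff : ∀ l x, ‖(∫ w, P (x + l⁻¹ * w) * K w) - P x‖ ≤
      ∫ w, ‖K w‖ * min (2 * M * |l⁻¹ * w|) (2 * M * h) := by
    intro l x
    have e : P x = ∫ w, P x * K w := by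
      rw [integral_const_mul, hφ1, mul_one]
    have hi1 : Integrable (fun w => P (x + l⁻¹ * w) * K w) :=
      hφi.bdd_mul (Continuous.aestronglyMeasurable (by fun_prop)) (Eventually.of_forall fun w => hPbd _)
    rw [e, ← integral_sub hi1 (hφi.const_mul _)]
    refine norm_integral_le_of_norm_le ?_ (Eventually.of_forall fun w => ?_)
    · refine Integrable.mono' (hφi.norm.mul_const (2 * M * h)) ?_ ?_
      · exact hφi.aestronglyMeasurable.norm.mul (Continuous.aestronglyMeasurable (by fun_prop))
      · refine Eventually.of_forall fun w => ?_
        rw [Real.norm_of_nonneg (by positivity)]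
        gcongr
        exact min_le_right _ _
    · rw [← sub_mul, norm_mul, mul_comm]
      gcongr
      refine le_min (hPlip _ _) ((norm_sub_le _ _).trans ?_)
      linarith [hPbd x, hPbd (x + l⁻¹ * w)]
  have hconv : ∀ l : ℝ, 0 < l → Tendsto (fun x => ∫ w, P (x + l⁻¹ * w) * K w) atTop (𝓝 0) := by
    intro l hl
    have hQ := core_scaled hbm hbM hb0 hH hL hφc hφs hφi hl
    set Q : ℝ → ℂ := fun z : ℝ => ∫ w, b (z + l⁻¹ * w) * 𝓕 φ w with hQd
    have e : ∀ x, ∫ w, P (x + l⁻¹ * w) * K w = ∫ y in Ioc 0 h, Q (x + y) := by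
      intro x
      have e1 : ∀ w, P (x + l⁻¹ * w) * K w = ∫ y in Ioc 0 h, b (x + y + l⁻¹ * w) * K w := by
        intro w
        rw [integral_mul_const, ← intervalIntegral.integral_of_le hh.le]
        congr 1
        have := intervalIntegral.integral_comp_add_left (a := 0) (b := h) b (x + l⁻¹ * w)
        simp only [hP]
        rw [add_zero] at this
        rw [← this]
        congr 1; ext y; ring_nf
      simp only [e1, hQd]
      refine integral_integral_swap (f := fun w y => b (x + y + l⁻¹ * w) * K w) ?_
      have hc : Integrable (fun y : ℝ => (M:ℝ)) (volume.restrict (Ioc 0 h)) := by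
        refine integrable_const _
      refine Integrable.mono' (hφi.norm.mul_prod hc) ?_ ?_
      · refine AEStronglyMeasurable.mul ?_ ?_
        · exact (hbm.comp (by fun_prop)).aestronglyMeasurable
        · exact hφi.aestronglyMeasurable.comp_fst
      · refine Eventually.of_forall fun p => ?_
        simp only [Function.uncurry]
        rw [norm_mul, mul_comm]
        gcongr
        exact hbM _
    rw [NormedAddGroup.tendsto_nhds_zero] at hQ ⊢
    intro ε hε
    have h1 := hQ (ε / (2 * h)) (by positivity)
    rw [eventually_atTop] at h1
    obtain ⟨z, hz⟩ := h1
    filter_upwards [eventually_ge_atTop z] with x hx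
    rw [e x, ← intervalIntegral.integral_of_le hh.le]
    have h2 := intervalIntegral.norm_integral_le_of_norm_le_const (a := 0) (b := h)
      (f := fun y => Q (x + y)) (C := ε / (2 * h)) (fun u hu => by
        rw [uIoc_of_le hh.le] at hu
        exact (hz _ (by linarith [hu.1])).le)
    rw [sub_zero, abs_of_pos hh] at h2
    have : ε / (2 * h) * h = ε / 2 := by field_simp
    rw [this] at h2
    linarith
  rw [NormedAddGroup.tendsto_nhds_zero]
  intro ε hε
  obtain ⟨l, hl1, hl2⟩ := ((herr.eventually (gt_mem_nhds (half_pos hε))).and (eventually_gt_atTop 0)).exists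
  have h3 := NormedAddGroup.tendsto_nhds_zero.1 (hconv l hl2) (ε / 2) (half_pos hε)
  filter_upwards [h3] with x hx
  have h4 := hdiff l x
  have h5 := norm_sub_norm_le (P x) (∫ w, P (x + l⁻¹ * w) * K w)
  rw [norm_sub_rev] at h5
  linarith

end core2

section core3
open MeasureTheory Set Topology Complex

lemma monotone_window {S : ℝ → ℝ} (hS : Monotone S) (hS0 : ∀ x, 0 ≤ S x) {A : ℝ}
    (hw : ∀ h : ℝ, 0 < h → Tendsto (fun x : ℝ => ∫ u in x..(x + h), S (Real.exp u) * Real.exp (-u))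
      atTop (𝓝 (A * h))) :
    Tendsto (fun u : ℝ => S (Real.exp u) * Real.exp (-u)) atTop (𝓝 A) := by
  have hmono : Monotone fun u => S (Real.exp u) := hS.comp Real.exp_monotone
  have hint : ∀ a c, IntervalIntegrable (fun u => S (Real.exp u) * Real.exp (-u)) volume a c :=
    fun a c => (hmono.intervalIntegrable).mul_continuousOn (by fun_prop)
  have hup : ∀ h : ℝ, 0 < h → ∀ x, S (Real.exp x) * Real.exp (-x) ≤
      Real.exp h * (h⁻¹ * ∫ u in x..(x + h), S (Real.exp u) * Real.exp (-u)) := by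
    intro h hh x
    have h1 : ∫ u in x..(x + h), S (Real.exp x) * Real.exp (-(x + h)) ≤
        ∫ u in x..(x + h), S (Real.exp u) * Real.exp (-u) := by
      refine intervalIntegral.integral_mono_on (by linarith) (by simp) (hint _ _) fun u hu => ?_
      refine mul_le_mul (hmono hu.1) (Real.exp_le_exp.2 (by linarith [hu.2])) (by positivity) (hS0 _)
    rw [intervalIntegral.integral_const, smul_eq_mul, add_sub_cancel_left] at h1
    calc S (Real.exp x) * Real.exp (-x)
        = Real.exp h * (h⁻¹ * (h * (S (Real.exp x) * Real.exp (-(x + h))))) := by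
          rw [inv_mul_cancel_left₀ hh.ne', neg_add, Real.exp_add, Real.exp_neg h]
          field_simp
      _ ≤ _ := by gcongr
  have hlo : ∀ h : ℝ, 0 < h → ∀ x, Real.exp (-h) * (h⁻¹ *
      ∫ u in (x - h)..(x - h + h), S (Real.exp u) * Real.exp (-u)) ≤ S (Real.exp x) * Real.exp (-x) := by
    intro h hh x
    have h1 : ∫ u in (x - h)..(x - h + h), S (Real.exp u) * Real.exp (-u) ≤
       ∫ u in (x - h)..(x - h + h), S (Real.exp x) * Real.exp (-(x - h)) := by
      refine intervalIntegral.integral_mono_on (by linarith) (hint _ _) (by simp) fun u hu => ?_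
      refine mul_le_mul (hmono (by linarith [hu.2])) (Real.exp_le_exp.2 (by linarith [hu.1])) (by positivity) (hS0 _)
    rw [intervalIntegral.integral_const, smul_eq_mul, add_sub_cancel_left] at h1
    calc _ ≤ Real.exp (-h) * (h⁻¹ * (h * (S (Real.exp x) * Real.exp (-(x - h))))) := by gcongr
      _ = S (Real.exp x) * Real.exp (-x) := by
          rw [inv_mul_cancel_left₀ hh.ne', neg_sub, sub_eq_add_neg, Real.exp_add, Real.exp_neg h]
          field_simp
  rw [tendsto_order]
  have hc1 : Tendsto (fun h : ℝ => Real.exp h * A) (𝓝[>] 0) (𝓝 A) := by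
    have : Continuous fun h : ℝ => Real.exp h * A := by fun_prop
    have := this.tendsto 0
    simp only [Real.exp_zero, one_mul] at this
    exact this.mono_left nhdsWithin_le_nhds
  have hc2 : Tendsto (fun h : ℝ => Real.exp (-h) * A) (𝓝[>] 0) (𝓝 A) := by
    have : Continuous fun h : ℝ => Real.exp (-h) * A := by fun_prop
    have := this.tendsto 0
    simp only [neg_zero, Real.exp_zero, one_mul] at this
    exact this.mono_left nhdsWithin_le_nhds
  constructor
  · intro a ha
    obtain ⟨h, h1, h2⟩ := ((hc2.eventually (lt_mem_nhds ha)).and self_mem_nhdsWithin).exists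
    have hh : 0 < h := h2
    have h3 := ((((hw h hh).comp (tendsto_atTop_add_const_right atTop (-h) tendsto_id)).const_mul h⁻¹).const_mul (Real.exp (-h)))
    have e : Real.exp (-h) * (h⁻¹ * (A * h)) = Real.exp (-h) * A := by field_simp
    rw [e] at h3
    filter_upwards [h3.eventually (lt_mem_nhds h1)] with x hx
    exact hx.trans_le (hlo h hh x)
  · intro a ha
    obtain ⟨h, h1, h2⟩ := ((hc1.eventually (gt_mem_nhds ha)).and self_mem_nhdsWithin).exists
    have hh : 0 < h := h2
    have h3 := (((hw h hh).const_mul h⁻¹).const_mul (Real.exp h))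
    have e : Real.exp h * (h⁻¹ * (A * h)) = Real.exp h * A := by field_simp
    rw [e] at h3
    filter_upwards [h3.eventually (gt_mem_nhds h1)] with x hx
    exact (hup h hh x).trans_lt hx

theorem wiener_ikehara_bdd {f : ℕ → ℝ} (hf : ∀ n, 0 ≤ f n) {C A : ℝ}
    (hC : ∀ n : ℕ, ∑ k ∈ Finset.Icc 1 n, f k ≤ C * n) {G : ℂ → ℂ}
    (hG : ContinuousOn G {s | 1 ≤ s.re})
    (hfG : ∀ s : ℂ, 1 < s.re → G s = LSeries (fun n => (f n : ℂ)) s - A / (s - 1)) :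
    Tendsto (fun n : ℕ => (∑ k ∈ Finset.Icc 1 n, f k) / n) atTop (𝓝 A) := by
  set S : ℝ → ℝ := fun x => ∑ k ∈ Finset.Icc 1 ⌊x⌋₊, f k with hSdef
  have hS0 : ∀ x, 0 ≤ S x := fun x => Finset.sum_nonneg fun k _ => hf k
  have hS : Monotone S := fun x y hxy =>
    Finset.sum_le_sum_of_subset_of_nonneg (Finset.Icc_subset_Icc_right (Nat.floor_mono hxy))
      fun k _ _ => hf k
  have hC0 : 0 ≤ C := by have := hC 1; simp at this; exact (hf 1).trans this
  have hSC : ∀ u : ℝ, S (Real.exp u) * Real.exp (-u) ≤ C := by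
    intro u
    have h1 : S (Real.exp u) ≤ C * Real.exp u := (hC _).trans (by
      gcongr; exact Nat.floor_le (by positivity))
    rw [Real.exp_neg, ← div_eq_mul_inv, div_le_iff₀ (by positivity)]
    exact h1
  set B : ℝ → ℝ := fun u => S (Real.exp u) * Real.exp (-u) with hB
  have hB0 : ∀ u, 0 ≤ B u := fun u => mul_nonneg (hS0 _) (by positivity)
  have hBm : Measurable B := (hS.measurable.comp Real.measurable_exp).mul (by fun_prop)
  set b : ℝ → ℂ := (Ioi (0:ℝ)).indicator (fun u => ((B u - A : ℝ) : ℂ)) with hb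
  have hbm : Measurable b := Measurable.indicator (by fun_prop) measurableSet_Ioi
  have hbM : ∀ u, ‖b u‖ ≤ C + |A| := by
    intro u
    refine (norm_indicator_le_norm_self _ _).trans ?_
    rw [Complex.norm_real, Real.norm_eq_abs]
    refine (abs_sub _ _).trans ?_
    rw [abs_of_nonneg (hB0 u)]
    have := hSC u
    gcongr
  have hO : (fun n ↦ ∑ k ∈ Finset.Icc 1 n, f k) =O[atTop] fun n ↦ (n : ℝ) ^ (1:ℝ) := by
    refine IsBigO.of_bound C (Eventually.of_forall fun n => ?_)
    rw [Real.norm_of_nonneg (Finset.sum_nonneg fun k _ => hf k), Real.rpow_one, Real.norm_of_nonneg (by positivity)]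
    exact hC n
  have hL : ∀ z : ℂ, 0 < z.re → ∫ u in Ioi (0:ℝ), b u * cexp (-z * u) = (G (1 + z) - A) / (1 + z) := by
    intro z hz
    have hz0 : z ≠ 0 := by rintro rfl; simp at hz
    have hz1 : 1 + z ≠ 0 := by
      intro h
      have := congrArg Complex.re h
      simp at this
      linarith
    have h1 := LSeries_eq_mul_integral_of_nonneg f zero_le_one (s := 1 + z) (by simpa using hz) hO hf
    have h2 := integral_comp_exp_Ioi (fun t : ℝ => (∑ k ∈ Finset.Icc 1 ⌊t⌋₊, (f k : ℂ)) * (t:ℂ) ^ (-((1 + z) + 1))) 0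
    rw [Real.exp_zero] at h2
    rw [← h2] at h1
    have h3 : ∫ u in Ioi (0:ℝ), Real.exp u • ((∑ k ∈ Finset.Icc 1 ⌊Real.exp u⌋₊, (f k : ℂ)) * ((Real.exp u : ℝ) : ℂ) ^ (-((1 + z) + 1)))
        = ∫ u in Ioi (0:ℝ), (B u : ℂ) * cexp (-z * u) := by
      refine integral_congr_ae (Eventually.of_forall fun u => ?_)
      simp only [hB, hSdef, Complex.real_smul]
      rw [Complex.cpow_def_of_ne_zero (by exact_mod_cast (Real.exp_pos u).ne'), ← Complex.ofReal_log (Real.exp_pos u).le, Real.log_exp]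
      push_cast
      have : cexp u * cexp (u * -(1 + z + 1)) = cexp (-u) * cexp (-z * u) := by
        rw [← Complex.exp_add, ← Complex.exp_add]; ring_nf
      linear_combination (∑ k ∈ Finset.Icc 1 ⌊Real.exp u⌋₊, (f k : ℂ)) * this
    rw [h3] at h1
    have hexp : IntegrableOn (fun u : ℝ => Real.exp (-z.re * u)) (Ioi 0) :=
      integrableOn_exp_mul_Ioi (by linarith) 0
    have hnorm : ∀ u : ℝ, ‖cexp (-z * u)‖ = Real.exp (-z.re * u) := fun u => by
      rw [Complex.norm_exp]; simp
    have hi0 : IntegrableOn (fun u : ℝ => cexp (-z * u)) (Ioi 0) := by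
      refine Integrable.mono' hexp (Continuous.aestronglyMeasurable (by fun_prop)) (Eventually.of_forall fun u => (hnorm u).le)
    have hi1 : IntegrableOn (fun u : ℝ => (B u : ℂ) * cexp (-z * u)) (Ioi 0) := by
      refine Integrable.bdd_mul hi0 (c := C) (Measurable.aestronglyMeasurable (by fun_prop)) (Eventually.of_forall fun u => ?_)
      rw [Complex.norm_real, Real.norm_of_nonneg (hB0 u)]
      exact hSC u
    have h4 : ∫ u in Ioi (0:ℝ), b u * cexp (-z * u) = (∫ u in Ioi (0:ℝ), (B u : ℂ) * cexp (-z * u)) - ∫ u in Ioi (0:ℝ), (A:ℂ) * cexp (-z * u) := by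
      rw [← integral_sub hi1 (hi0.const_mul _)]
      refine setIntegral_congr_fun measurableSet_Ioi fun u hu => ?_
      simp only [hb, indicator_of_mem hu]
      push_cast
      ring
    have h5 : ∫ u in Ioi (0:ℝ), cexp (-z * u) = 1 / z := by
      rw [integral_exp_mul_complex_Ioi (by simpa using hz)]
      simp
    rw [h4, integral_const_mul, h5, hfG _ (by simpa using hz), h1, add_sub_cancel_left]
    generalize (∫ u in Ioi (0:ℝ), (B u : ℂ) * cexp (-z * u)) = J
    field_simp
    ring
  have hH : ContinuousOn (fun z => (G (1 + z) - A) / (1 + z)) {z : ℂ | 0 ≤ z.re} := by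
    refine ContinuousOn.div (ContinuousOn.sub (hG.comp (by fun_prop) ?_) continuousOn_const) (by fun_prop) ?_
    · intro z hz
      simpa using hz
    · intro z hz h
      have := congrArg Complex.re h
      simp at this hz
      linarith
  have hwin := fun h : ℝ => core_window (h := h) hbm hbM (fun u hu => by
    simp only [hb]; rw [indicator_of_notMem (by simpa using hu)]) hH hL
  have hlim : Tendsto B atTop (𝓝 A) := by
    refine monotone_window hS hS0 fun h hh => ?_
    have h1 := (Complex.continuous_re.tendsto _).comp (hwin h hh)
    rw [Complex.zero_re] at h1
    have h2 := h1.add_const (A * h)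
    rw [zero_add] at h2
    refine h2.congr' ?_
    filter_upwards [eventually_gt_atTop 0] with x hx
    have hBi : IntervalIntegrable B volume x (x + h) :=
      ((hS.comp Real.exp_monotone).intervalIntegrable).mul_continuousOn (by fun_prop)
    have e : ∫ u in x..(x + h), b u = ((∫ u in x..(x+h), (B u - A) : ℝ) : ℂ) := by
      rw [← intervalIntegral.integral_ofReal]
      refine intervalIntegral.integral_congr fun u hu => ?_
      rw [uIcc_of_le (by linarith)] at hu
      simp only [hb]
      rw [indicator_of_mem (show u ∈ Ioi (0:ℝ) from hx.trans_le hu.1)]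
    simp only [Function.comp]
    rw [e, Complex.ofReal_re, intervalIntegral.integral_sub hBi (by simp), intervalIntegral.integral_const]
    simp
    ring
  have h6 : Tendsto (fun n : ℕ => Real.log n) atTop atTop := Real.tendsto_log_atTop.comp tendsto_natCast_atTop_atTop
  refine (hlim.comp h6).congr' ?_
  filter_upwards [eventually_gt_atTop 0] with n hn
  have hn' : (0:ℝ) < n := by exact_mod_cast hn
  simp only [Function.comp, hB, hSdef]
  rw [Real.exp_neg, Real.exp_log hn', Nat.floor_natCast, div_eq_mul_inv]

end core3

section primes
open Topology ArithmeticFunction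

lemma residueClass_tendsto {q : ℕ} [NeZero q] {a : ZMod q} (ha : IsUnit a) :
    Tendsto (fun n : ℕ => (∑ k ∈ Finset.Icc 1 n, vonMangoldt.residueClass a k) / n) atTop
      (𝓝 ((q.totient : ℝ)⁻¹)) := by
  refine wiener_ikehara_bdd (vonMangoldt.residueClass_nonneg a) (C := Real.log 4 + 4)
    (G := vonMangoldt.LFunctionResidueClassAux a) ?_
    (vonMangoldt.continuousOn_LFunctionResidueClassAux a) ?_
  · intro n
    have h := Chebyshev.psi_le_const_mul_self (x := n) (by positivity)
    refine le_trans ?_ h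
    rw [Chebyshev.psi, Nat.floor_natCast, ← Finset.Icc_add_one_left_eq_Ioc]
    exact Finset.sum_le_sum fun k _ => vonMangoldt.residueClass_le a k
  · intro s hs
    rw [vonMangoldt.eqOn_LFunctionResidueClassAux ha hs]
    push_cast
    rfl

lemma psi_class_tendsto {q : ℕ} [NeZero q] (T : Finset (ZMod q)) (hT : ∀ a ∈ T, IsUnit a) :
    Tendsto (fun n : ℕ => (∑ k ∈ Finset.Icc 1 n, if (k : ZMod q) ∈ T then vonMangoldt k else 0) / n)
      atTop (𝓝 ((T.card : ℝ) / q.totient)) := by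
  have h := tendsto_finsetSum T fun a ha => residueClass_tendsto (hT a ha)
  rw [Finset.sum_const, nsmul_eq_mul, ← div_eq_mul_inv] at h
  refine h.congr fun n => ?_
  rw [← Finset.sum_div, Finset.sum_comm]
  congr 1
  refine Finset.sum_congr rfl fun k _ => ?_
  simp only [vonMangoldt.residueClass, Set.indicator_apply, Set.mem_ofPred_eq]
  rw [Finset.sum_ite_eq]

lemma theta_class_tendsto {q : ℕ} [NeZero q] (T : Finset (ZMod q)) (hT : ∀ a ∈ T, IsUnit a) :
    Tendsto (fun n : ℕ => (∑ k ∈ (Finset.Icc 1 n).filter (fun k : ℕ => k.Prime ∧ (k : ZMod q) ∈ T), Real.log k) / n)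
      atTop (𝓝 ((T.card : ℝ) / q.totient)) := by
  have h := psi_class_tendsto T hT
  have herr : Tendsto (fun n : ℕ => 2 * √(n:ℝ) * Real.log n / n) atTop (𝓝 0) := by
    have h1 : Tendsto (fun x : ℝ => 2 * (Real.log x / x ^ ((1:ℝ)/2))) atTop (𝓝 0) := by
      have := (isLittleO_log_rpow_atTop (show (0:ℝ) < 1/2 by norm_num)).tendsto_div_nhds_zero
      simpa using this.const_mul 2
    refine (h1.comp tendsto_natCast_atTop_atTop).congr' ?_
    filter_upwards [eventually_gt_atTop 0] with n hn
    have hn' : (0:ℝ) < n := by exact_mod_cast hn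
    simp only [Function.comp]
    rw [← Real.sqrt_eq_rpow]
    have := Real.mul_self_sqrt hn'.le
    have h3 : 0 < √(n:ℝ) := Real.sqrt_pos.2 hn'
    field_simp
    linear_combination (-Real.log n) * this
  have hd : Tendsto (fun n : ℕ => (∑ k ∈ Finset.Icc 1 n, if (k : ZMod q) ∈ T then vonMangoldt k else 0) / (n:ℝ)
      - (∑ k ∈ (Finset.Icc 1 n).filter (fun k : ℕ => k.Prime ∧ (k : ZMod q) ∈ T), Real.log k) / n) atTop (𝓝 0) := by
    refine squeeze_zero' ?_ ?_ herr
    · refine Eventually.of_forall fun n => ?_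
      rw [← sub_div]
      refine div_nonneg ?_ (by positivity)
      rw [Finset.sum_filter, ← Finset.sum_sub_distrib]
      refine Finset.sum_nonneg fun k _ => ?_
      by_cases h1 : k.Prime <;> by_cases h2 : (k : ZMod q) ∈ T <;>
        simp [h1, h2, vonMangoldt_apply_prime]
    · filter_upwards [eventually_ge_atTop 1] with n hn
      rw [← sub_div]
      have h1 := Chebyshev.psi_sub_theta_le (x := n) (by exact_mod_cast hn)
      refine div_le_div_of_nonneg_right (le_trans ?_ h1) (by positivity)
      rw [Chebyshev.psi_sub_theta_eq_sum_not_prime, Nat.floor_natCast,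
        ← Finset.Icc_add_one_left_eq_Ioc, zero_add, Finset.sum_filter, Finset.sum_filter, ← Finset.sum_sub_distrib]
      refine Finset.sum_le_sum fun k _ => ?_
      by_cases h1 : k.Prime <;> by_cases h2 : (k : ZMod q) ∈ T <;>
        simp [h1, h2, vonMangoldt_apply_prime]
  have := h.sub hd
  simpa using this

lemma count_tendsto (P : ℕ → Prop) [DecidablePred P] (hP : ∀ p, P p → p.Prime) {c : ℝ}
    (h : Tendsto (fun n : ℕ => (∑ k ∈ Finset.Icc 1 n with P k, Real.log k) / n) atTop (𝓝 c)) :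
    Tendsto (fun n : ℕ => (((Finset.range (n + 1)).filter P).card : ℝ) * Real.log n / n)
      atTop (𝓝 c) := by
  have hset : ∀ n, (Finset.range (n + 1)).filter P = (Finset.Icc 1 n).filter P := by
    intro n
    ext k
    simp only [Finset.mem_filter, Finset.mem_range, Finset.mem_Icc]
    constructor
    · rintro ⟨h1, h2⟩
      exact ⟨⟨(hP k h2).one_lt.le, by omega⟩, h2⟩
    · rintro ⟨h1, h2⟩
      exact ⟨by omega, h2⟩
  have hlog : Tendsto (fun n : ℕ => Real.log n) atTop atTop :=
    Real.tendsto_log_atTop.comp tendsto_natCast_atTop_atTop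
  -- the auxiliary ratio
  have hr : Tendsto (fun x : ℝ => x / (x - 2 * Real.log x)) atTop (𝓝 1) := by
    have h1 : Tendsto (fun x : ℝ => 1 - 2 * (Real.log x / x)) atTop (𝓝 1) := by
      have := Real.isLittleO_log_id_atTop.tendsto_div_nhds_zero
      simpa using (this.const_mul 2).const_sub 1
    have h2 := h1.inv₀ one_ne_zero
    rw [inv_one] at h2
    refine h2.congr' ?_
    filter_upwards [eventually_gt_atTop 0] with x hx
    rw [show 1 - 2 * (Real.log x / x) = (x - 2 * Real.log x) / x by field_simp, inv_div]
  have hub : Tendsto (fun n : ℕ => (∑ k ∈ Finset.Icc 1 n with P k, Real.log k) / n *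
      (Real.log n / (Real.log n - 2 * Real.log (Real.log n))) + 1 / Real.log n) atTop (𝓝 c) := by
    have h1 := (h.mul (hr.comp hlog)).add (tendsto_inv_atTop_zero.comp hlog)
    simpa [Function.comp_def] using h1
  have hpos : ∀ᶠ x : ℝ in atTop, 0 < x - 2 * Real.log x := by
    have := Real.isLittleO_log_id_atTop.bound (show (0:ℝ) < 1/4 by norm_num)
    filter_upwards [this, eventually_gt_atTop 0] with x hx hx0
    rw [id, Real.norm_of_nonneg hx0.le] at hx
    have := le_abs_self (Real.log x)
    rw [Real.norm_eq_abs] at hx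
    linarith
  refine tendsto_of_tendsto_of_tendsto_of_le_of_le' h hub ?_ ?_
  · refine Eventually.of_forall fun n => ?_
    refine div_le_div_of_nonneg_right ?_ (by positivity)
    rw [hset, ← nsmul_eq_mul, ← Finset.sum_const]
    refine Finset.sum_le_sum fun k hk => ?_
    simp only [Finset.mem_filter, Finset.mem_Icc] at hk
    exact Real.log_le_log (by exact_mod_cast hk.1.1) (by exact_mod_cast hk.1.2)
  · filter_upwards [hlog.eventually hpos, hlog.eventually (eventually_gt_atTop 1), eventually_gt_atTop 0] with n hn1 hn2 hn0
    have hn' : (0:ℝ) < n := by exact_mod_cast hn0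
    set L := Real.log n with hL
    set y : ℝ := n / L ^ 2 with hy
    have hypos : 0 < y := by positivity
    have hlogy : Real.log y = L - 2 * Real.log L := by
      rw [hy, Real.log_div hn'.ne' (by positivity), Real.log_pow]; push_cast; rfl
    have hcard : (((Finset.Icc 1 n).filter P).card : ℝ) ≤ y + (∑ k ∈ Finset.Icc 1 n with P k, Real.log k) / (L - 2 * Real.log L) := by
      have hsplit := Finset.card_filter_add_card_filter_not (s := (Finset.Icc 1 n).filter P) (fun k : ℕ => (k:ℝ) ≤ y)
      rw [← hsplit]
      push_cast
      refine add_le_add ?_ ?_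
      · have hsub : (((Finset.Icc 1 n).filter P).filter (fun k : ℕ => (k:ℝ) ≤ y)) ⊆ Finset.Icc 1 ⌊y⌋₊ := by
          intro k hk
          simp only [Finset.mem_filter, Finset.mem_Icc] at hk ⊢
          exact ⟨hk.1.1.1, Nat.le_floor hk.2⟩
        have := Finset.card_le_card hsub
        rw [Nat.card_Icc] at this
        calc ((((Finset.Icc 1 n).filter P).filter (fun k : ℕ => (k:ℝ) ≤ y)).card : ℝ) ≤ (⌊y⌋₊ : ℝ) := by
              exact_mod_cast (by omega)
          _ ≤ y := Nat.floor_le hypos.le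
      · rw [le_div_iff₀ hn1, ← nsmul_eq_mul, ← Finset.sum_const]
        refine le_trans (Finset.sum_le_sum (g := fun k : ℕ => Real.log k) fun k hk => ?_) (Finset.sum_le_sum_of_subset_of_nonneg (Finset.filter_subset _ _) ?_)
        · simp only [Finset.mem_filter, not_le] at hk
          rw [← hlogy]
          exact Real.log_le_log hypos hk.2.le
        · intro k _ _
          exact Real.log_natCast_nonneg k
    rw [hset]
    have hL0 : 0 < L := by linarith
    calc (((Finset.Icc 1 n).filter P).card : ℝ) * L / n ≤ (y + (∑ k ∈ Finset.Icc 1 n with P k, Real.log k) / (L - 2 * Real.log L)) * L / n := by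
          gcongr
      _ = _ := by
          rw [hy]
          field_simp
          ring

end primes

section algebra
open NumberTheorySymbols

lemma exists_jacobi_neg_one (D : ℤ) (hD : ¬ IsSquare D) :
    ∃ b : ℕ, Odd b ∧ jacobiSym D b = -1 := by
  have hD0 : D ≠ 0 := by rintro rfl; exact hD ⟨0, by simp⟩
  obtain ⟨d, m, hdm, hsq⟩ := Nat.sq_mul_squarefree D.natAbs
  have hm0 : m ≠ 0 := by rintro rfl; simp at hdm; exact hD0 (Int.natAbs_eq_zero.1 hdm.symm)
  obtain ⟨s, hs, hDs⟩ : ∃ s : ℤ, (s = 1 ∨ s = -1) ∧ D = s * ((m : ℤ) ^ 2 * (d : ℤ)) := by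
    have e : (D.natAbs : ℤ) = (m : ℤ) ^ 2 * (d : ℤ) := by rw [← hdm]; push_cast; rfl
    rcases Int.natAbs_eq D with h | h
    · exact ⟨1, Or.inl rfl, by rw [← e]; linarith⟩
    · exact ⟨-1, Or.inr rfl, by rw [← e]; linarith⟩
  have key : ∀ b : ℕ, Nat.Coprime m b → jacobiSym D b = jacobiSym s b * jacobiSym d b := by
    intro b hb
    rw [hDs, jacobiSym.mul_left, jacobiSym.mul_left, jacobiSym.sq_one' (by simpa using hb), one_mul]
  rcases Nat.eq_two_pow_or_exists_odd_prime_and_dvd d with ⟨k, hk⟩ | ⟨p, hp, hpd, hpo⟩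
  · obtain ⟨j, m', hm', hmm⟩ := Nat.exists_eq_pow_mul_and_not_dvd hm0 2 (by norm_num)
    have hm'odd : Odd m' := by rw [Nat.odd_iff]; omega
    have hcop8 : Nat.Coprime 8 m' := by
      have : Nat.Coprime (2 ^ 3) m' := Nat.Coprime.pow_left 3 (Nat.coprime_two_left.2 hm'odd)
      simpa using this
    have main : ∀ c : ℕ, Odd c → ∃ b : ℕ, b % 8 = c % 8 ∧ Odd b ∧ Nat.Coprime m b := by
      intro c hc
      obtain ⟨b, hb1, hb2⟩ := Nat.chineseRemainder hcop8 c 1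
      have hbo : Odd b := by
        rw [Nat.odd_iff] at hc ⊢
        have : b % 8 = c % 8 := hb1
        omega
      refine ⟨b, hb1, hbo, ?_⟩
      rw [hmm]
      refine Nat.Coprime.mul_left (Nat.Coprime.pow_left j (Nat.coprime_two_left.2 hbo)) ?_
      have := hb2.gcd_eq
      rw [Nat.gcd_one_left] at this
      rwa [Nat.gcd_comm] at this
    have hk1 : k = 0 ∨ k = 1 := by
      by_contra hcon
      have : 2 * 2 ∣ d := by
        rw [hk]
        exact pow_dvd_pow (a := 2) (m := 2) (n := k) (by omega)
      have := hsq 2 this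
      simp at this
    rcases hk1 with rfl | rfl
    · obtain ⟨b, hb8, hbo, hbm⟩ := main 3 (by decide)
      have hs' : s = -1 := by
        rcases hs with h | h
        · exfalso
          apply hD
          rw [hDs, h, hk]
          exact ⟨m, by push_cast; ring⟩
        · exact h
      refine ⟨b, hbo, ?_⟩
      rw [key b hbm, hs', hk, jacobiSym.at_neg_one hbo, ZMod.χ₄_nat_three_mod_four (by omega)]
      simp
    · obtain ⟨b, hb8, hbo, hbm⟩ := main 5 (by decide)
      refine ⟨b, hbo, ?_⟩
      have h1 : jacobiSym s b = 1 := by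
        rcases hs with h | h
        · rw [h]; simp
        · rw [h, jacobiSym.at_neg_one hbo, ZMod.χ₄_nat_one_mod_four (by omega)]
      have h2 : jacobiSym 2 b = -1 := by
        rw [jacobiSym.at_two hbo, ZMod.χ₈_nat_eq_if_mod_eight]
        have : b % 8 = 5 := hb8
        simp [this]
        omega
      rw [key b hbm, h1, hk]
      simpa using h2
  · haveI : Fact p.Prime := ⟨hp⟩
    obtain ⟨e, he⟩ := hpd
    have hpe : ¬ p ∣ e := by
      rintro ⟨e', rfl⟩
      have := hsq p ⟨e', by rw [he]; ring⟩
      exact hp.one_lt.ne' (by simpa using this)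
    have he0 : e ≠ 0 := by rintro rfl; simp at hpe
    obtain ⟨j, m', hm', hmm⟩ := Nat.exists_eq_pow_mul_and_not_dvd hm0 p hp.one_lt.ne'
    have hpN : Nat.Coprime p (8 * e * m') := by
      refine Nat.Coprime.mul_right (Nat.Coprime.mul_right ?_ ((Nat.Prime.coprime_iff_not_dvd hp).2 hpe)) ((Nat.Prime.coprime_iff_not_dvd hp).2 hm')
      have : Nat.Coprime p (2 ^ 3) := Nat.Coprime.pow_right 3 (Nat.coprime_two_right.2 hpo)
      simpa using this
    have hp2 : ringChar (ZMod p) ≠ 2 := by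
      rw [ZMod.ringChar_zmod_n]
      rintro rfl
      exact absurd hpo (by decide)
    obtain ⟨r, hr⟩ := quadraticChar_exists_neg_one (F := ZMod p) hp2
    obtain ⟨b, hb1, hb2⟩ := Nat.chineseRemainder hpN r.val 1
    have hb8 : b % 8 = 1 := by
      have : b ≡ 1 [MOD 8] := hb2.of_mul_right m' |>.of_mul_right e
      exact this
    have hbo : Odd b := by rw [Nat.odd_iff]; omega
    have hbr : (b : ZMod p) = r := by
      have := (ZMod.natCast_eq_natCast_iff b r.val p).2 hb1
      rw [this, ZMod.natCast_zmod_val]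
    have hJp : jacobiSym b p = -1 := by
      rw [← jacobiSym.legendreSym.to_jacobiSym, legendreSym]
      push_cast
      rw [hbr, hr]
    have hbp : Nat.Coprime p b := by
      rw [Nat.Prime.coprime_iff_not_dvd hp]
      intro hdvd
      rw [← ZMod.natCast_eq_zero_iff, hbr] at hdvd
      rw [hdvd] at hr
      simp at hr
    have hbm' : Nat.Coprime m' b := by
      have h1 : b ≡ 1 [MOD m'] := hb2.of_mul_left (8 * e)
      have := h1.gcd_eq
      rw [Nat.gcd_one_left] at this
      rwa [Nat.gcd_comm] at this
    have hJe : jacobiSym e b = 1 := by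
      rw [jacobiSym.mod_right' e hbo]
      have h1 : b ≡ 1 [MOD 4 * e] := by
        have : b ≡ 1 [MOD 2 * (4 * e)] := by
          have h2 := hb2.of_mul_right m'
          rwa [show 8 * e = 2 * (4 * e) by ring] at h2
        exact this.of_mul_left 2
      have h2 : b % (4 * e) = 1 := by
        rw [h1, Nat.mod_eq_of_lt (by omega)]
      rw [h2]; simp
    refine ⟨b, hbo, ?_⟩
    have h1 : jacobiSym s b = 1 := by
      rcases hs with h | h
      · rw [h]; simp
      · rw [h, jacobiSym.at_neg_one hbo, ZMod.χ₄_nat_one_mod_four (by omega)]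
    rw [key b (by rw [hmm]; exact Nat.Coprime.mul_left (Nat.Coprime.pow_left j hbp) hbm'), h1, he]
    push_cast
    rw [jacobiSym.mul_left, hJe, jacobiSym.quadratic_reciprocity_one_mod_four' hpo (by omega), hJp]
    norm_num

end algebra

section final

lemma unit_val_odd {D : ℤ} (hD0 : D ≠ 0) (u : (ZMod (4 * D.natAbs))ˣ) :
    Odd (u : ZMod (4 * D.natAbs)).val ∧ Nat.Coprime (u : ZMod (4 * D.natAbs)).val D.natAbs := by
  have h := ZMod.val_coe_unit_coprime u
  refine ⟨?_, h.coprime_mul_left_right⟩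
  have h4 : Nat.Coprime (u : ZMod (4 * D.natAbs)).val (2 * 2) := h.coprime_mul_right_right
  exact Nat.coprime_two_right.1 h4.coprime_mul_left_right

/-- The quadratic character attached to `D` on the unit group modulo `4 |D|`. -/
noncomputable def kroneckerHom (D : ℤ) (hD0 : D ≠ 0) : (ZMod (4 * D.natAbs))ˣ →* ℤ where
  toFun u := jacobiSym D (u : ZMod (4 * D.natAbs)).val
  map_one' := by
    have h : 1 < 4 * D.natAbs := by have := Int.natAbs_pos.2 hD0; omega
    haveI : Fact (1 < 4 * D.natAbs) := ⟨h⟩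
    rw [Units.val_one, ZMod.val_one, jacobiSym.one_right]
  map_mul' u v := by
    have hu := (unit_val_odd hD0 u).1
    have hv := (unit_val_odd hD0 v).1
    rw [Units.val_mul, ZMod.val_mul, ← jacobiSym.mod_right D (hu.mul hv),
      jacobiSym.mul_right' D hu.pos.ne' hv.pos.ne']

lemma kroneckerHom_natCast {D : ℤ} (hD0 : D ≠ 0) {b : ℕ} (hb : Odd b)
    (u : (ZMod (4 * D.natAbs))ˣ) (hu : (u : ZMod (4 * D.natAbs)) = b) :
    kroneckerHom D hD0 u = jacobiSym D b := by
  change jacobiSym D (u : ZMod (4 * D.natAbs)).val = _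
  rw [hu, ZMod.val_natCast, ← jacobiSym.mod_right D hb]

lemma isUnit_of_jacobi {D : ℤ} {b : ℕ} (hb : Odd b) (h : jacobiSym D b = -1) :
    IsUnit (b : ZMod (4 * D.natAbs)) := by
  rw [ZMod.isUnit_iff_coprime]
  refine Nat.Coprime.mul_right ?_ ?_
  · have : Nat.Coprime b (2 ^ 2) := Nat.Coprime.pow_right 2 (Nat.coprime_two_right.2 hb)
    simpa using this
  · haveI : NeZero b := ⟨hb.pos.ne'⟩
    have : D.gcd b = 1 := by
      by_contra hc
      rw [jacobiSym.eq_zero_iff_not_coprime.2 hc] at h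
      norm_num at h
    rw [Nat.coprime_comm]
    exact this

lemma jacobi_two_ne (D : ℤ) : jacobiSym D 2 ≠ -1 := by
  haveI : Fact (Nat.Prime 2) := ⟨Nat.prime_two⟩
  rw [← jacobiSym.legendreSym.to_jacobiSym, legendreSym]
  intro h
  have h0 : (D : ZMod 2) ≠ 0 := by
    intro h0
    rw [h0] at h
    simp at h
  rw [quadraticChar_eq_one_of_char_two (ZMod.ringChar_zmod_n 2) h0] at h
  norm_num at h

lemma exists_classes (D : ℤ) (hD : ¬ IsSquare D) (hD0 : D ≠ 0) :
    ∃ T : Finset (ZMod (4 * D.natAbs)), (∀ a ∈ T, IsUnit a) ∧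
      ((T.card : ℝ) / (4 * D.natAbs).totient = 1 / 2) ∧
      ∀ p : ℕ, p.Prime → (jacobiSym D p = -1 ↔ (p : ZMod (4 * D.natAbs)) ∈ T) := by
  classical
  haveI : NeZero (4 * D.natAbs) := ⟨by have := Int.natAbs_pos.2 hD0; omega⟩
  set χ := kroneckerHom D hD0 with hχ
  have hne : χ ≠ 1 := by
    obtain ⟨b, hb, hJ⟩ := exists_jacobi_neg_one D hD
    obtain ⟨u, hu⟩ := isUnit_of_jacobi hb hJ
    intro h
    have := kroneckerHom_natCast hD0 hb u hu
    rw [← hχ, h, hJ] at this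
    norm_num at this
  have hsum := sum_hom_units_eq_zero χ hne
  have hval : ∀ u, χ u = 1 - 2 * (if χ u = -1 then 1 else 0) := by
    intro u
    have h1 : χ u = 1 ∨ χ u = -1 := by
      apply jacobiSym.eq_one_or_neg_one
      have := (unit_val_odd hD0 u).2
      rw [Nat.coprime_comm] at this
      exact this
    rcases h1 with h | h <;> rw [h] <;> norm_num
  have hcard : 2 * ((Finset.univ.filter (fun u => χ u = -1)).card : ℤ)
      = (4 * D.natAbs).totient := by
    rw [Finset.sum_congr rfl (fun u _ => hval u), Finset.sum_sub_distrib, ← Finset.mul_sum,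
      Finset.sum_boole] at hsum
    simp only [Finset.sum_const, Finset.card_univ, ZMod.card_units_eq_totient] at hsum
    simp at hsum ⊢
    linarith
  refine ⟨(Finset.univ.filter (fun u => χ u = -1)).map ⟨Units.val, Units.val_injective⟩,
    ?_, ?_, ?_⟩
  · intro a ha
    rw [Finset.mem_map] at ha
    obtain ⟨u, -, rfl⟩ := ha
    exact u.isUnit
  · rw [Finset.card_map]
    have h : 2 * ((Finset.univ.filter (fun u => χ u = -1)).card : ℝ)
      = (4 * D.natAbs).totient := by exact_mod_cast hcard
    have hpos : (0 : ℝ) < (4 * D.natAbs).totient := by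
      exact_mod_cast Nat.totient_pos.2 (NeZero.pos _)
    rw [div_eq_iff hpos.ne']
    linarith
  · intro p hp
    simp only [Finset.mem_map, Finset.mem_filter, Finset.mem_univ, true_and,
      Function.Embedding.coeFn_mk]
    constructor
    · intro h
      have hpo : Odd p := by
        refine hp.odd_of_ne_two ?_
        rintro rfl
        exact jacobi_two_ne D h
      obtain ⟨u, hu⟩ := isUnit_of_jacobi hpo h
      exact ⟨u, by rw [hχ, kroneckerHom_natCast hD0 hpo u hu, h], hu⟩
    · rintro ⟨u, h, hu⟩
      have hpo : Odd p := by
        have h1 : IsUnit (p : ZMod (4 * D.natAbs)) := hu ▸ u.isUnit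
        rw [ZMod.isUnit_iff_coprime] at h1
        have h4 : Nat.Coprime p (2 * 2) := h1.coprime_mul_right_right
        exact Nat.coprime_two_right.1 h4.coprime_mul_left_right
      rw [← kroneckerHom_natCast hD0 hpo u hu, h]

lemma primeCounting_tendsto :
    Tendsto (fun n : ℕ => (Nat.primeCounting n : ℝ) * Real.log n / n) atTop (nhds 1) := by
  have h := theta_class_tendsto (q := 1) Finset.univ (fun a _ => by
    rw [Subsingleton.elim a 1]; exact isUnit_one)
  have h2 := count_tendsto Nat.Prime (fun _ h => h) (c := 1) (by
    have e : ∀ k : ℕ, (Nat.Prime k ∧ (k : ZMod 1) ∈ (Finset.univ : Finset (ZMod 1))) ↔ Nat.Prime k :=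
      fun k => and_iff_left (Finset.mem_univ _)
    simp only [e] at h
    simpa using h)
  refine h2.congr fun n => ?_
  rw [Nat.primeCounting, Nat.primeCounting', Nat.count_eq_card_filter_range]

end final

theorem stmt_1 (D : ℤ) (hD : ¬ IsSquare D) :
    IsEquivalent atTop
      (fun x : ℕ => (((Finset.range (x + 1)).filter
        (fun p => p.Prime ∧ jacobiSym D p = -1)).card : ℝ))
      (fun x : ℕ => (Nat.primeCounting x : ℝ) / 2) := by
  have hD0 : D ≠ 0 := by rintro rfl; exact hD ⟨0, by simp⟩
  haveI : NeZero (4 * D.natAbs) := ⟨by have := Int.natAbs_pos.2 hD0; omega⟩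
  obtain ⟨T, hT, hTc, hTp⟩ := exists_classes D hD hD0
  have h1 := theta_class_tendsto T hT
  rw [hTc] at h1
  have h2 := count_tendsto (fun p => p.Prime ∧ jacobiSym D p = -1) (fun _ h => h.1) (c := 1 / 2) (by
    refine h1.congr fun n => ?_
    congr 1
    refine Finset.sum_congr (Finset.filter_congr fun p _ => ?_) fun _ _ => rfl
    exact and_congr_right fun hp => (hTp p hp).symm)
  have h3 := primeCounting_tendsto.div_const 2
  have h4 := h2.div h3 (by norm_num)
  apply isEquivalent_of_tendsto_one
  rw [div_self (by norm_num : (1 / 2 : ℝ) ≠ 0)] at h4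
  refine h4.congr' ?_
  filter_upwards [eventually_ge_atTop 2] with n hn
  have hn' : (1 : ℝ) < n := by exact_mod_cast hn
  have hl : Real.log n ≠ 0 := (Real.log_pos hn').ne'
  have hn0 : (n : ℝ) ≠ 0 := by positivity
  simp only [Pi.div_apply]
  have hc : Real.log n / n ≠ 0 := div_ne_zero hl hn0
  have aux : ∀ a b l m : ℝ, l / m ≠ 0 → (a * l / m) / (b * l / m / 2) = a / (b / 2) := by
    intro a b l m h
    rw [show a * l / m = a * (l / m) by ring, show b * l / m / 2 = (b / 2) * (l / m) by ring,
      mul_div_mul_right _ _ h]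
  exact aux _ _ _ _ hc
end

section
/- For fixed k ≥ 1, the number π_k(x) of squarefree positive integers n ≤ x with exactly k prime factors satisfies π_k(x) ~ x (log log x)^{k-1} / ((k-1)! log x) as x → ∞. -/
open Filter Asymptotics

namespace Landau
open MeasureTheory Topology


theorem core_identity (a : ℝ → ℝ) (ham : Measurable a) (C : ℝ) (hb : ∀ u, |a u| ≤ C)
    (F : ℂ → ℂ) (hF : ContinuousOn F {s | 0 ≤ s.re})
    (hFa : ∀ s : ℂ, 0 < s.re → ∫ u in Set.Ioi (0:ℝ), (a u : ℂ) * Complex.exp (-(s * u)) = F s)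
    (k : ℝ → ℝ) (hk : Continuous k) (hks : HasCompactSupport k)
    (K : ℝ → ℝ) (hKi : Integrable K)
    (hK : ∀ u : ℝ, u ≠ 0 → ∫ t : ℝ, (k t : ℂ) * Complex.exp (Complex.I * t * u) = K u) (y : ℝ) :
    ∫ u in Set.Ioi (0:ℝ), (a u : ℂ) * K (y - u) =
      ∫ t : ℝ, (k t : ℂ) * Complex.exp (Complex.I * t * y) * F (Complex.I * t) := by
  have hC : 0 ≤ C := (abs_nonneg _).trans (hb 0)
  have hki : Integrable k := hk.integrable_of_hasCompactSupport hks
  have hKy : Integrable (fun u => K (y - u)) := hKi.comp_sub_left y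
  -- identity for positive δ
  have key : ∀ δ : ℝ, 0 < δ →
      ∫ u in Set.Ioi (0:ℝ), (a u : ℂ) * K (y - u) * Complex.exp (-(δ * u)) =
      ∫ t : ℝ, (k t : ℂ) * Complex.exp (Complex.I * t * y) * F (δ + Complex.I * t) := by
    intro δ hδ
    have h1 : ∫ u in Set.Ioi (0:ℝ), (a u : ℂ) * K (y - u) * Complex.exp (-(δ * u)) =
        ∫ u in Set.Ioi (0:ℝ), ∫ t : ℝ, (k t : ℂ) * Complex.exp (Complex.I * t * y) *
          ((a u : ℂ) * Complex.exp (-((δ + Complex.I * t) * u))) := by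
      apply integral_congr_ae
      have : ∀ᵐ u : ℝ ∂(volume.restrict (Set.Ioi (0:ℝ))), u ≠ y :=
        ae_restrict_of_ae (Measure.ae_ne volume y)
      filter_upwards [this] with u hu
      rw [← hK (y - u) (sub_ne_zero.mpr hu.symm)]
      rw [mul_right_comm, mul_comm, ← integral_mul_const]
      congr 1
      ext t
      have : Complex.exp (Complex.I * t * ((y - u : ℝ) : ℂ)) * Complex.exp (-(δ * u)) =
        Complex.exp (Complex.I * t * y) * Complex.exp (-((δ + Complex.I * t) * u)) := by
        rw [← Complex.exp_add, ← Complex.exp_add]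
        congr 1
        push_cast
        ring
      calc _ = (k t : ℂ) * (a u) * (Complex.exp (Complex.I * t * ((y - u : ℝ) : ℂ)) * Complex.exp (-(δ * u))) := by ring
        _ = _ := by rw [this]; ring
    rw [h1, integral_integral_swap]
    · congr 1
      ext t
      rw [integral_const_mul, hFa]
      simp [hδ]
    · have hi : Integrable (fun p : ℝ × ℝ => (C * Real.exp (-δ * p.1)) * ‖k p.2‖)
          ((volume.restrict (Set.Ioi (0:ℝ))).prod volume) := by
        apply Integrable.mul_prod (f := fun u => C * Real.exp (-δ * u)) (g := fun t => ‖k t‖)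
        · exact (exp_neg_integrableOn_Ioi 0 hδ).const_mul C
        · exact hki.norm
      refine hi.mono' ?_ ?_
      · apply Measurable.aestronglyMeasurable
        simp only [Function.uncurry_def]
        have := hk.measurable
        fun_prop
      · filter_upwards with p
        simp only [Function.uncurry_def]
        rw [norm_mul, norm_mul, norm_mul, Complex.norm_exp, Complex.norm_exp, Complex.norm_real,
          Complex.norm_real]
        have e1 : (Complex.I * p.2 * y).re = 0 := by simp
        have e2 : (-((δ + Complex.I * p.2) * p.1)).re = -δ * p.1 := by simp
        rw [e1, e2, Real.exp_zero, mul_one, mul_comm]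
        gcongr
        exact hb _
  -- limit
  have l1 : Tendsto (fun δ : ℝ => ∫ u in Set.Ioi (0:ℝ), (a u : ℂ) * K (y - u) * Complex.exp (-(δ * u)))
      (𝓝[>] 0) (𝓝 (∫ u in Set.Ioi (0:ℝ), (a u : ℂ) * K (y - u))) := by
    apply tendsto_integral_filter_of_dominated_convergence (fun u => C * ‖K (y - u)‖)
    · filter_upwards with δ
      apply AEStronglyMeasurable.mul
      · apply AEStronglyMeasurable.mul
        · exact Measurable.aestronglyMeasurable (by fun_prop)
        · exact (Complex.continuous_ofReal.comp_aestronglyMeasurable hKy.1).restrict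
      · exact Measurable.aestronglyMeasurable (by fun_prop)
    · filter_upwards [self_mem_nhdsWithin] with δ hδ
      filter_upwards [ae_restrict_mem measurableSet_Ioi] with u hu
      rw [norm_mul, norm_mul, Complex.norm_exp, Complex.norm_real, Complex.norm_real]
      have h2 : Real.exp (-((δ:ℂ) * u)).re ≤ 1 := by
        apply Real.exp_le_one_iff.mpr
        simp
        exact mul_nonneg (le_of_lt hδ) (le_of_lt hu)
      calc _ ≤ ‖a u‖ * ‖K (y-u)‖ * 1 := by gcongr
        _ ≤ C * ‖K (y-u)‖ := by rw [mul_one]; gcongr; exact hb u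
    · exact (hKy.norm.const_mul C).restrict
    · filter_upwards with u
      have : Tendsto (fun δ : ℝ => (a u : ℂ) * K (y - u) * Complex.exp (-(δ * u))) (𝓝 0)
        (𝓝 ((a u : ℂ) * K (y - u) * Complex.exp (-(((0:ℝ):ℂ) * u)))) := by
        apply Continuous.tendsto
        fun_prop
      simpa using this.mono_left nhdsWithin_le_nhds
  have l2 : Tendsto (fun δ : ℝ => ∫ t : ℝ, (k t : ℂ) * Complex.exp (Complex.I * t * y) * F (δ + Complex.I * t))
      (𝓝[>] 0) (𝓝 (∫ t : ℝ, (k t : ℂ) * Complex.exp (Complex.I * t * y) * F (Complex.I * t))) := by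
    have hcomp : IsCompact ((fun p : ℝ × ℝ => (p.1 : ℂ) + Complex.I * p.2) '' (Set.Icc 0 1 ×ˢ tsupport k)) :=
      (isCompact_Icc.prod hks).image (by fun_prop)
    obtain ⟨M, hM⟩ := hcomp.exists_bound_of_continuousOn (f := F) (hF.mono (by
      rintro _ ⟨⟨d, t⟩, ⟨hd, ht⟩, rfl⟩
      simpa using hd.1))
    apply tendsto_integral_filter_of_dominated_convergence (fun t => ‖k t‖ * M)
    · filter_upwards [self_mem_nhdsWithin] with δ hδ
      apply Continuous.aestronglyMeasurable
      apply Continuous.mul (by fun_prop)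
      apply hF.comp_continuous (by fun_prop)
      intro t; simpa using le_of_lt hδ
    · filter_upwards [Ioc_mem_nhdsGT (show (0:ℝ) < 1 by norm_num)] with δ hδ
      filter_upwards with t
      by_cases ht : t ∈ tsupport k
      · rw [norm_mul, norm_mul, Complex.norm_exp, Complex.norm_real]
        have : (Complex.I * t * y).re = 0 := by simp
        rw [this, Real.exp_zero, mul_one]
        gcongr
        exact hM _ ⟨(δ, t), ⟨⟨hδ.1.le, hδ.2⟩, ht⟩, rfl⟩
      · simp [image_eq_zero_of_notMem_tsupport ht]
    · exact hki.norm.mul_const M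
    · filter_upwards with t
      apply Tendsto.const_mul
      have hc := hF (Complex.I * t) (by simp)
      have : Tendsto (fun δ : ℝ => (δ:ℂ) + Complex.I * t) (𝓝[>] 0) (𝓝[{s | 0 ≤ s.re}] (Complex.I * t)) := by
        apply tendsto_nhdsWithin_of_tendsto_nhds_of_eventually_within
        · have : Tendsto (fun δ : ℝ => (δ:ℂ) + Complex.I * t) (𝓝 0) (𝓝 (((0:ℝ):ℂ) + Complex.I * t)) := by
            apply Continuous.tendsto
            fun_prop
          simpa using this.mono_left nhdsWithin_le_nhds
        · filter_upwards [self_mem_nhdsWithin] with δ hδ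
          simpa using le_of_lt hδ
      exact Tendsto.comp hc this
  refine tendsto_nhds_unique l1 (l2.congr' ?_)
  filter_upwards [self_mem_nhdsWithin] with δ hδ
  exact (key δ hδ).symm

theorem core_tendsto (a : ℝ → ℝ) (ham : Measurable a) (C : ℝ) (hb : ∀ u, |a u| ≤ C)
    (F : ℂ → ℂ) (hF : ContinuousOn F {s | 0 ≤ s.re})
    (hFa : ∀ s : ℂ, 0 < s.re → ∫ u in Set.Ioi (0:ℝ), (a u : ℂ) * Complex.exp (-(s * u)) = F s)
    (k : ℝ → ℝ) (hk : Continuous k) (hks : HasCompactSupport k)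
    (K : ℝ → ℝ) (hKi : Integrable K)
    (hK : ∀ u : ℝ, u ≠ 0 → ∫ t : ℝ, (k t : ℂ) * Complex.exp (Complex.I * t * u) = K u) :
    Tendsto (fun y => ∫ u in Set.Ioi (0:ℝ), a u * K (y - u)) atTop (𝓝 0) := by
  have h1 := Real.tendsto_integral_exp_smul_cocompact (fun t : ℝ => (k t : ℂ) * F (Complex.I * t))
  have h2 : Tendsto (fun y : ℝ => y * (-(2 * Real.pi)⁻¹)) atTop (cocompact ℝ) := by
    refine Tendsto.mono_right ?_ atBot_le_cocompact
    apply tendsto_id.atTop_mul_const_of_neg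
    simp [Real.pi_pos]
  have h3 := h1.comp h2
  rw [tendsto_zero_iff_norm_tendsto_zero] at h3 ⊢
  refine h3.congr ?_
  intro y
  rw [← Complex.norm_real, ← integral_complex_ofReal]
  push_cast
  rw [core_identity a ham C hb F hF hFa k hk hks K hKi hK y]
  simp only [Function.comp]
  congr 2
  ext t
  rw [Circle.smul_def, Real.fourierChar_apply, smul_eq_mul]
  have : Complex.exp (↑(2 * Real.pi * -(t * (y * -(2 * Real.pi)⁻¹))) * Complex.I) = Complex.exp (Complex.I * t * y) := by
    congr 1
    push_cast
    have : (Real.pi : ℂ) ≠ 0 := by exact_mod_cast Real.pi_ne_zero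
    field_simp
  rw [this]; ring



noncomputable def fejK (u : ℝ) : ℝ := 2 * (1 - Real.cos u) / u ^ 2

noncomputable def fejk (t : ℝ) : ℝ := max 0 (1 - |t|)

theorem fejK_nonneg (u : ℝ) : 0 ≤ fejK u := by
  unfold fejK
  have := Real.cos_le_one u
  apply div_nonneg <;> nlinarith [sq_nonneg u]

theorem fejK_meas : Measurable fejK := by
  unfold fejK; fun_prop

theorem fejK_le (u : ℝ) : fejK u ≤ 8 * (1 + u ^ 2)⁻¹ := by
  unfold fejK
  rcases eq_or_ne u 0 with rfl | hu
  · simp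
  have hu2 : 0 < u ^ 2 := by positivity
  rw [← div_eq_mul_inv, div_le_div_iff₀ hu2 (by positivity)]
  have h1 := Real.one_sub_sq_div_two_le_cos (x := u)
  have h2 := Real.neg_one_le_cos u
  have h3 := Real.cos_le_one u
  by_cases h : u ^ 2 ≤ 1 <;> nlinarith

theorem fejK_int : Integrable fejK := by
  refine (integrable_inv_one_add_sq.const_mul 8).mono' fejK_meas.aestronglyMeasurable ?_
  filter_upwards with u
  rw [Real.norm_of_nonneg (fejK_nonneg u)]
  exact fejK_le u

theorem fejK_integral_pos : 0 < ∫ u, fejK u := by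
  rw [integral_pos_iff_support_of_nonneg fejK_nonneg fejK_int]
  apply lt_of_lt_of_le _ (measure_mono (s := Set.Ioo 1 2) _)
  · simp
  · intro u hu
    have : Real.cos u < 1 := by
      rw [← Real.cos_zero]
      apply Real.cos_lt_cos_of_nonneg_of_le_pi le_rfl _ (by linarith [hu.1])
      linarith [hu.2, Real.pi_gt_three]
    have h1 := hu.1
    simp only [Function.mem_support, fejK]
    apply ne_of_gt
    apply div_pos
    · linarith
    · positivity

theorem fejk_cont : Continuous fejk := by unfold fejk; fun_prop

theorem fejk_supp : HasCompactSupport fejk := by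
  apply HasCompactSupport.of_support_subset_isCompact (K := Set.Icc (-1) 1) isCompact_Icc
  intro t ht
  simp only [Function.mem_support, fejk] at ht
  by_contra h
  apply ht
  rw [max_eq_left]
  rw [Set.mem_Icc, ← abs_le] at h
  linarith

theorem fejk_even (t : ℝ) : fejk (-t) = fejk t := by simp [fejk]

theorem fej_half (u : ℝ) (hu : u ≠ 0) : ∫ t in (0:ℝ)..1, (1 - t) * Real.cos (t * u) = (1 - Real.cos u) / u ^ 2 := by
  have : ∀ t ∈ Set.uIcc (0:ℝ) 1, HasDerivAt (fun t : ℝ => (1 - t) * (Real.sin (t * u) / u) - Real.cos (t * u) / u ^ 2)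
      ((1 - t) * Real.cos (t * u)) t := by
    intro t _
    have hm : HasDerivAt (fun t : ℝ => t * u) u t := by simpa using (hasDerivAt_id t).mul_const u
    have h1 := (((hasDerivAt_id t).const_sub 1).mul ((hm.sin).div_const u)).sub ((hm.cos).div_const (u ^ 2))
    refine HasDerivAt.congr_deriv h1 ?_
    simp only [id]
    field_simp
    ring
  rw [intervalIntegral.integral_eq_sub_of_hasDerivAt this]
  · simp; field_simp; ring
  · apply Continuous.intervalIntegrable; fun_prop

theorem fej_fourier (u : ℝ) (hu : u ≠ 0) :
    ∫ t : ℝ, (fejk t : ℂ) * Complex.exp (Complex.I * t * u) = fejK u := by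
  have hi : Integrable (fun t : ℝ => (fejk t : ℂ) * Complex.exp (Complex.I * t * u)) := by
    apply Continuous.integrable_of_hasCompactSupport
    · have := fejk_cont
      fun_prop
    · apply HasCompactSupport.mul_right
      exact fejk_supp.comp_left (g := fun x : ℝ => (x : ℂ)) (by simp)
  have e : ∀ t : ℝ, (fejk t : ℂ) * Complex.exp (Complex.I * t * u) =
      ((fejk t * Real.cos (t * u) : ℝ) : ℂ) + Complex.I * ((fejk t * Real.sin (t * u) : ℝ) : ℂ) := by
    intro t
    rw [show Complex.I * t * u = ((t * u : ℝ) : ℂ) * Complex.I by push_cast; ring, Complex.exp_mul_I]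
    push_cast; ring
  have hodd : ∫ t : ℝ, fejk t * Real.sin (t * u) = 0 := by
    have := integral_neg_eq_self (fun t : ℝ => fejk t * Real.sin (t * u)) volume
    simp only [fejk_even, neg_mul, Real.sin_neg, mul_neg, integral_neg] at this
    linarith
  have hev : ∫ t : ℝ, fejk t * Real.cos (t * u) = fejK u := by
    have h1 : ∫ t : ℝ, fejk t * Real.cos (t * u) = ∫ t : ℝ, (fun x => fejk x * Real.cos (x * u)) |t| := by
      congr 1
      ext t
      rcases abs_cases t with h | h <;> simp [h.1, fejk_even]
    rw [h1, integral_comp_abs (f := fun x => fejk x * Real.cos (x * u))]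
    have h2 : ∫ t in Set.Ioi (0:ℝ), fejk t * Real.cos (t * u) = ∫ t in Set.Ioc (0:ℝ) 1, (1 - t) * Real.cos (t * u) := by
      rw [← integral_indicator measurableSet_Ioi, ← integral_indicator measurableSet_Ioc]
      congr 1
      ext t
      by_cases h0 : 0 < t
      · by_cases h1 : t ≤ 1
        · simp [Set.indicator, h0, h1, fejk, abs_of_pos h0]
        · simp [Set.indicator, h0, h1, fejk, abs_of_pos h0]
          left; linarith
      · simp [Set.indicator, h0]
    rw [h2, ← intervalIntegral.integral_of_le (by norm_num), fej_half u hu, fejK]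
    ring
  have hic : Integrable (fun t : ℝ => fejk t * Real.cos (t * u)) :=
    Continuous.integrable_of_hasCompactSupport (fejk_cont.mul (by fun_prop)) fejk_supp.mul_right
  have his : Integrable (fun t : ℝ => fejk t * Real.sin (t * u)) :=
    Continuous.integrable_of_hasCompactSupport (fejk_cont.mul (by fun_prop)) fejk_supp.mul_right
  simp_rw [e]
  rw [integral_add, integral_const_mul, integral_complex_ofReal, integral_complex_ofReal, hodd, hev]
  · simp
  · exact hic.ofReal
  · exact (his.ofReal).const_mul _

/-- scaled version -/
theorem fej_fourier_scaled (l : ℝ) (hl : 0 < l) (u : ℝ) (hu : u ≠ 0) :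
    ∫ t : ℝ, (fejk (t * l⁻¹) : ℂ) * Complex.exp (Complex.I * t * u) = (l * fejK (l * u) : ℝ) := by
  have h := Measure.integral_comp_mul_right
    (fun t : ℝ => (fejk t : ℂ) * Complex.exp (Complex.I * t * ((l * u : ℝ) : ℂ))) l⁻¹
  rw [fej_fourier _ (mul_ne_zero hl.ne' hu), inv_inv, abs_of_pos hl] at h
  rw [Complex.real_smul] at h
  rw [Complex.ofReal_mul, ← h]
  congr 1
  ext t
  congr 2
  push_cast
  have : (l : ℂ) ≠ 0 := by exact_mod_cast hl.ne'
  field_simp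



noncomputable def bfun (u : ℝ) : ℝ := Chebyshev.psi (Real.exp u) * Real.exp (-u)

theorem bfun_nonneg (u : ℝ) : 0 ≤ bfun u := mul_nonneg (Chebyshev.psi_nonneg _) (Real.exp_pos _).le

theorem bfun_le (u : ℝ) : bfun u ≤ Real.log 4 + 4 := by
  have := Chebyshev.psi_le_const_mul_self (Real.exp_pos u).le
  calc bfun u ≤ (Real.log 4 + 4) * Real.exp u * Real.exp (-u) := by
        unfold bfun; gcongr
    _ = _ := by rw [mul_assoc, ← Real.exp_add]; simp

theorem bfun_meas : Measurable bfun := by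
  unfold bfun
  exact (Chebyshev.psi_mono.measurable.comp Real.measurable_exp).mul (by fun_prop)

theorem bfun_mono (u v : ℝ) (h : u ≤ v) : bfun u ≤ bfun v * Real.exp (v - u) := by
  unfold bfun
  rw [mul_assoc, ← Real.exp_add, show -v + (v - u) = -u by ring]
  gcongr

noncomputable def Ffun (z : ℂ) : ℂ :=
  (ArithmeticFunction.vonMangoldt.LFunctionResidueClassAux (1 : ZMod 1) (1 + z) - 1) / (1 + z)

theorem Ffun_cont : ContinuousOn Ffun {s | 0 ≤ s.re} := by
  unfold Ffun
  apply ContinuousOn.div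
  · apply ContinuousOn.sub _ continuousOn_const
    refine (ArithmeticFunction.vonMangoldt.continuousOn_LFunctionResidueClassAux (1 : ZMod 1)).comp
      (by fun_prop) ?_
    intro z hz
    simpa using hz
  · fun_prop
  · intro z hz h
    have := congrArg Complex.re h
    simp at this hz
    linarith

theorem laplace_b (z : ℂ) (hz : 0 < z.re) :
    ∫ u in Set.Ioi (0:ℝ), (bfun u : ℂ) * Complex.exp (-(z * u)) =
      LSeries (fun n => (ArithmeticFunction.vonMangoldt n : ℂ)) (1 + z) / (1 + z) := by
  have hne : (1 + z) ≠ 0 := by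
    intro h
    have := congrArg Complex.re h
    simp at this
    linarith
  rw [LSeries_eq_mul_integral_of_nonneg (fun n => ArithmeticFunction.vonMangoldt n) (r := 1) zero_le_one
    (by simpa using hz) _ (fun n => ArithmeticFunction.vonMangoldt_nonneg), mul_div_cancel_left₀ _ hne]
  · have := integral_comp_exp_Ioi (fun t : ℝ => (∑ k ∈ Finset.Icc 1 ⌊t⌋₊, (ArithmeticFunction.vonMangoldt k : ℂ)) * (t : ℂ) ^ (-(1 + z + 1))) 0
    rw [Real.exp_zero] at this
    rw [← this]
    apply setIntegral_congr_fun measurableSet_Ioi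
    intro u hu
    simp only
    have e1 : ((Real.exp u : ℝ) : ℂ) ^ (-(1 + z + 1)) = Complex.exp (-(1 + z + 1) * u) := by
      rw [Complex.cpow_def_of_ne_zero (by exact_mod_cast (Real.exp_pos u).ne'), ← Complex.ofReal_log (Real.exp_pos u).le, Real.log_exp, mul_comm]
    rw [e1, bfun, Chebyshev.psi, Complex.real_smul]
    push_cast
    rw [show Finset.Ioc 0 ⌊Real.exp u⌋₊ = Finset.Icc 1 ⌊Real.exp u⌋₊ from rfl]
    rw [mul_assoc, ← Complex.exp_add, mul_left_comm, ← Complex.exp_add]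
    congr 2
    ring
  · apply IsBigO.of_bound (Real.log 4 + 4)
    filter_upwards with n
    rw [Real.rpow_one, Real.norm_of_nonneg (Finset.sum_nonneg (fun _ _ => ArithmeticFunction.vonMangoldt_nonneg)), Real.norm_of_nonneg (by positivity)]
    have := Chebyshev.psi_le_const_mul_self (x := n) (by positivity)
    rw [Chebyshev.psi, Nat.floor_natCast] at this
    exact this

theorem laplace_a (z : ℂ) (hz : 0 < z.re) :
    ∫ u in Set.Ioi (0:ℝ), ((bfun u - 1 : ℝ) : ℂ) * Complex.exp (-(z * u)) = Ffun z := by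
  have hne : (1 + z) ≠ 0 := by
    intro h
    have := congrArg Complex.re h
    simp at this
    linarith
  have hz0 : z ≠ 0 := by rintro rfl; simp at hz
  have hexp : IntegrableOn (fun u : ℝ => Complex.exp (-(z * u))) (Set.Ioi 0) := by
    refine (integrableOn_exp_mul_complex_Ioi (a := -z) (by simpa using hz) 0).congr_fun ?_ measurableSet_Ioi
    intro u _
    simp
  push_cast
  simp_rw [sub_mul, one_mul]
  rw [integral_sub _ hexp, laplace_b z hz]
  · have h1 := integral_exp_mul_complex_Ioi (a := -z) (by simpa using hz) 0
    simp only [neg_mul] at h1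
    rw [h1, Ffun, ArithmeticFunction.vonMangoldt.eqOn_LFunctionResidueClassAux isUnit_one (by simpa using hz)]
    have : (ArithmeticFunction.vonMangoldt.residueClass (1 : ZMod 1)) = fun n => ArithmeticFunction.vonMangoldt n := by
      ext n
      simp [ArithmeticFunction.vonMangoldt.residueClass, Set.indicator, Subsingleton.elim (n : ZMod 1) 1]
    rw [this]
    simp
    field_simp
    ring
  · apply Integrable.bdd_mul (c := Real.log 4 + 4) hexp
    · exact (Complex.measurable_ofReal.comp bfun_meas).aestronglyMeasurable
    · filter_upwards with u
      rw [Complex.norm_real, Real.norm_of_nonneg (bfun_nonneg u)]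
      exact bfun_le u

theorem kernel_choice (h : ℝ) (hh : 0 < h) : ∃ l : ℝ, 0 < l ∧
    (∫ u, fejK u) - h ≤ ∫ v, (Set.Icc (-h) h).indicator (fun v => l * fejK (l * v)) v := by
  have h1 : Tendsto (fun T : ℝ => ∫ v in (-T)..T, fejK v) atTop (𝓝 (∫ u, fejK u)) :=
    intervalIntegral_tendsto_integral fejK_int tendsto_neg_atTop_atBot tendsto_id
  have h2 := (h1.eventually (lt_mem_nhds (sub_lt_self (∫ u, fejK u) hh))).and (eventually_gt_atTop 0)
  obtain ⟨T, hT, hT0⟩ := h2.exists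
  have hl : 0 < T / h := by positivity
  refine ⟨T / h, hl, hT.le.trans ?_⟩
  have h3 := Measure.integral_comp_mul_left (fun w => (Set.Icc (-T) T).indicator fejK w) (T / h)
  rw [abs_of_pos (by positivity), integral_indicator measurableSet_Icc,
    integral_Icc_eq_integral_Ioc, ← intervalIntegral.integral_of_le (by linarith)] at h3
  have h4 : ∫ v in (-T)..T, fejK v = (T / h) * ∫ x, (Set.Icc (-T) T).indicator fejK (T / h * x) := by
    rw [h3, smul_eq_mul]; field_simp
  rw [h4, ← integral_const_mul]
  apply le_of_eq
  congr 1
  ext v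
  have : T / h * v ∈ Set.Icc (-T) T ↔ v ∈ Set.Icc (-h) h := by
    rw [Set.mem_Icc, Set.mem_Icc, ← abs_le, ← abs_le, abs_mul, abs_of_pos hl, div_mul_eq_mul_div,
      div_le_iff₀ hh]
    exact mul_le_mul_iff_right₀ hT0
  by_cases hv : v ∈ Set.Icc (-h) h
  · rw [Set.indicator_of_mem hv, Set.indicator_of_mem (this.mpr hv)]
  · rw [Set.indicator_of_notMem hv, Set.indicator_of_notMem (fun h => hv (this.mp h)), mul_zero]

theorem tauber_J (l : ℝ) (hl : 0 < l) :
    Tendsto (fun y => ∫ u in Set.Ioi (0:ℝ), (bfun u - 1) * (l * fejK (l * (y - u)))) atTop (𝓝 0) := by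
  have hC : (0:ℝ) ≤ Real.log 4 := Real.log_nonneg (by norm_num)
  refine core_tendsto (fun u => bfun u - 1) (bfun_meas.sub_const 1) (Real.log 4 + 5) ?_ Ffun Ffun_cont
    laplace_a (fun t => fejk (t * l⁻¹)) (fejk_cont.comp (by fun_prop)) ?_ (fun u => l * fejK (l * u)) ?_
    (fej_fourier_scaled l hl)
  · intro u
    rw [abs_le]
    constructor <;> linarith [bfun_nonneg u, bfun_le u]
  · exact fejk_supp.comp_homeomorph (Homeomorph.mulRight₀ l⁻¹ (inv_ne_zero hl.ne'))
  · exact (fejK_int.comp_mul_left' hl.ne').const_mul l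

theorem tauber_bounds (h l : ℝ) (hh : 0 < h) (hl : 0 < l) (m : ℝ)
    (hm : m = ∫ v, (Set.Icc (-h) h).indicator (fun v => l * fejK (l * v)) v) (y : ℝ) (hy : h < y) :
    bfun (y - h) * Real.exp (-(2 * h)) * m - (∫ u, fejK u) ≤
      ∫ u in Set.Ioi (0:ℝ), (bfun u - 1) * (l * fejK (l * (y - u))) ∧
    ∫ u in Set.Ioi (0:ℝ), (bfun u - 1) * (l * fejK (l * (y - u))) ≤
      bfun (y + h) * Real.exp (2 * h) * (∫ u, fejK u) + (Real.log 4 + 4) * ((∫ u, fejK u) - m) - m := by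
  set κ : ℝ → ℝ := fun v => l * fejK (l * v) with hκ
  have κ0 : ∀ v, 0 ≤ κ v := fun v => mul_nonneg hl.le (fejK_nonneg _)
  have κi : Integrable κ := (fejK_int.comp_mul_left' hl.ne').const_mul l
  have κc : ∫ v, κ v = ∫ u, fejK u := by
    rw [hκ, integral_const_mul, Measure.integral_comp_mul_left, abs_of_pos (by positivity), smul_eq_mul]
    field_simp
  have hgo : ∀ u, l * fejK (l * (y - u)) = κ (y - u) := fun _ => rfl
  simp only [hgo]
  clear_value κ
  have κii : Integrable ((Set.Icc (-h) h).indicator κ) := κi.indicator measurableSet_Icc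
  have i1 : Integrable (fun u => κ (y - u)) := κi.comp_sub_left y
  have i2 : Integrable (fun u => (Set.Icc (-h) h).indicator κ (y - u)) := κii.comp_sub_left y
  have c1 : ∫ u, κ (y - u) = ∫ u, fejK u := by rw [integral_sub_left_eq_self (fun u => κ u), κc]
  have c2 : ∫ u, (Set.Icc (-h) h).indicator κ (y - u) = m := by
    rw [integral_sub_left_eq_self (fun u => (Set.Icc (-h) h).indicator κ u), hm]
  have hC : (0:ℝ) ≤ Real.log 4 := Real.log_nonneg (by norm_num)
  have i3 : Integrable (fun u => (Set.Ioi (0:ℝ)).indicator (fun u => (bfun u - 1) * κ (y - u)) u) := by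
    apply Integrable.indicator _ measurableSet_Ioi
    apply Integrable.bdd_mul (c := Real.log 4 + 5) i1
    · exact (bfun_meas.sub_const 1).aestronglyMeasurable
    · filter_upwards with u
      rw [Real.norm_eq_abs, abs_le]
      constructor <;> linarith [bfun_nonneg u, bfun_le u]
  rw [← integral_indicator measurableSet_Ioi]
  constructor
  · rw [← c1, ← c2, ← integral_const_mul, ← integral_sub (i2.const_mul _) i1]
    apply integral_mono ((i2.const_mul _).sub i1) i3
    intro u
    simp only [Pi.sub_apply, Pi.add_apply]
    by_cases hu : y - u ∈ Set.Icc (-h) h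
    · have hu' : u ∈ Set.Ioi (0:ℝ) := by simp only [Set.mem_Icc, Set.mem_Ioi] at *; linarith
      rw [Set.indicator_of_mem hu, Set.indicator_of_mem hu', sub_mul, one_mul]
      gcongr
      · exact κ0 _
      · have b1 := bfun_mono (y - h) u (by linarith [hu.2])
        calc bfun (y - h) * Real.exp (-(2 * h)) ≤ (bfun u * Real.exp (u - (y - h))) * Real.exp (-(2 * h)) := by gcongr
          _ = bfun u * Real.exp (u - (y - h) - 2 * h) := by rw [mul_assoc, ← Real.exp_add]; ring_nf
          _ ≤ bfun u * 1 := by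
            gcongr
            · exact bfun_nonneg u
            · rw [Real.exp_le_one_iff]; linarith [hu.1]
          _ = _ := mul_one _
    · rw [Set.indicator_of_notMem hu, mul_zero, zero_sub]
      have := κ0 (y - u)
      by_cases hu' : u ∈ Set.Ioi (0:ℝ)
      · rw [Set.indicator_of_mem hu']
        nlinarith [bfun_nonneg u, mul_nonneg (bfun_nonneg u) this]
      · rw [Set.indicator_of_notMem hu']; linarith
  · have : bfun (y + h) * Real.exp (2 * h) * (∫ u, fejK u) + (Real.log 4 + 4) * ((∫ u, fejK u) - m) - m =
        ∫ u, (bfun (y + h) * Real.exp (2 * h) * κ (y - u) + (Real.log 4 + 4) * (κ (y - u) - (Set.Icc (-h) h).indicator κ (y - u)) -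
          (Set.Icc (-h) h).indicator κ (y - u)) := by
      have j1 : Integrable (fun u => bfun (y + h) * Real.exp (2 * h) * κ (y - u)) := i1.const_mul _
      have j2 : Integrable (fun u => (Real.log 4 + 4) * (κ (y - u) - (Set.Icc (-h) h).indicator κ (y - u))) :=
        (i1.sub i2).const_mul _
      have j3 : Integrable (fun u => bfun (y + h) * Real.exp (2 * h) * κ (y - u) +
        (Real.log 4 + 4) * (κ (y - u) - (Set.Icc (-h) h).indicator κ (y - u))) := j1.add j2
      rw [integral_sub j3 i2, integral_add j1 j2,
        integral_const_mul, integral_const_mul, integral_sub i1 i2, c1, c2]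
    rw [this]
    apply integral_mono i3 (((i1.const_mul _).add ((i1.sub i2).const_mul _)).sub i2)
    intro u
    simp only [Pi.sub_apply, Pi.add_apply]
    have k0 := κ0 (y - u)
    have hB : 0 ≤ bfun (y + h) * Real.exp (2 * h) := mul_nonneg (bfun_nonneg _) (Real.exp_pos _).le
    by_cases hu : y - u ∈ Set.Icc (-h) h
    · have hu' : u ∈ Set.Ioi (0:ℝ) := by simp only [Set.mem_Icc, Set.mem_Ioi] at *; linarith
      rw [Set.indicator_of_mem hu, Set.indicator_of_mem hu', sub_mul, one_mul, sub_self, mul_zero, add_zero]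
      gcongr
      have b1 := bfun_mono u (y + h) (by linarith [hu.1])
      calc bfun u ≤ _ := b1
          _ ≤ _ := by
            gcongr
            · exact bfun_nonneg _
            · linarith [hu.2]
    · rw [Set.indicator_of_notMem hu, sub_zero, sub_zero]
      by_cases hu' : u ∈ Set.Ioi (0:ℝ)
      · rw [Set.indicator_of_mem hu']
        nlinarith [mul_nonneg hB k0, mul_le_mul_of_nonneg_right (bfun_le u) k0]
      · rw [Set.indicator_of_notMem hu']
        positivity

theorem bfun_tendsto : Tendsto bfun atTop (𝓝 1) := by
  set c := ∫ u, fejK u with hc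
  have c0 : 0 < c := fejK_integral_pos
  have hC : (0:ℝ) ≤ Real.log 4 := Real.log_nonneg (by norm_num)
  set C := Real.log 4 + 4
  rw [Metric.tendsto_nhds]
  intro ε hε
  have t1 : Tendsto (fun h : ℝ => Real.exp (2 * h) * (c + h) / (c - h)) (𝓝[>] 0) (𝓝 1) := by
    have : ContinuousAt (fun h : ℝ => Real.exp (2 * h) * (c + h) / (c - h)) 0 := by
      apply ContinuousAt.div (by fun_prop) (by fun_prop); simp [c0.ne']
    have := this.tendsto
    simp [c0.ne'] at this
    exact this.mono_left nhdsWithin_le_nhds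
  have t2 : Tendsto (fun h : ℝ => Real.exp (-(2 * h)) * (c - (C + 2) * h) / c) (𝓝[>] 0) (𝓝 1) := by
    have : ContinuousAt (fun h : ℝ => Real.exp (-(2 * h)) * (c - (C + 2) * h) / c) 0 := by
      apply ContinuousAt.div_const (by fun_prop)
    have := this.tendsto
    simp [c0.ne'] at this
    exact this.mono_left nhdsWithin_le_nhds
  obtain ⟨h, hh1, hh2, hh0, hhc⟩ := ((t1.eventually (gt_mem_nhds (show (1:ℝ) < 1 + ε by linarith))).and
    ((t2.eventually (lt_mem_nhds (show 1 - ε < (1:ℝ) by linarith))).and (Ioo_mem_nhdsGT c0))).exists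
  obtain ⟨l, hl, hlm⟩ := kernel_choice h hh0
  have hJ := tauber_J l hl
  rw [Metric.tendsto_nhds] at hJ
  have hJ' := (hJ h hh0).and (eventually_gt_atTop h)
  have s1 := (tendsto_atTop_add_const_right atTop h tendsto_id).eventually hJ'
  have s2 := (tendsto_atTop_add_const_right atTop (-h) tendsto_id).eventually hJ'
  filter_upwards [s1, s2] with v hv1 hv2
  simp only [id, Real.dist_eq, sub_zero] at hv1 hv2
  rw [Real.dist_eq, abs_sub_lt_iff]
  obtain ⟨hv1, hv1'⟩ := hv1
  obtain ⟨hv2, hv2'⟩ := hv2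
  have b1 := (tauber_bounds h l hh0 hl _ rfl _ hv1').1
  have b2 := (tauber_bounds h l hh0 hl _ rfl _ hv2').2
  rw [abs_lt] at hv1 hv2
  rw [add_sub_cancel_right] at b1
  rw [neg_add_cancel_right] at b2
  rw [← hc] at b1 b2
  rw [div_lt_iff₀ (by linarith)] at hh1
  rw [lt_div_iff₀ c0] at hh2
  rw [← hc] at hlm
  set m := ∫ v, (Set.Icc (-h) h).indicator (fun v => l * fejK (l * v)) v
  have E : Real.exp (2 * h) * Real.exp (-(2 * h)) = 1 := by rw [← Real.exp_add]; simp
  have Ep := Real.exp_pos (2 * h)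
  have En := Real.exp_pos (-(2 * h))
  set e1 := Real.exp (2 * h)
  set e2 := Real.exp (-(2 * h))
  have bn := bfun_nonneg v
  constructor
  · have q1 : bfun v * e2 * (c - h) < c + h := by
      have : bfun v * e2 * (c - h) ≤ bfun v * e2 * m := by gcongr
      linarith
    have q2 : bfun v * (c - h) < (1 + ε) * (c - h) := by
      calc bfun v * (c - h) = e1 * (bfun v * e2 * (c - h)) := by linear_combination (-(bfun v * (c-h))) * E
        _ < e1 * (c + h) := by gcongr
        _ < _ := hh1
    have := lt_of_mul_lt_mul_right q2 (by linarith)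
    linarith
  · have q1 : c - (C + 2) * h < bfun v * e1 * c := by
      have : (C + 1) * (c - h) ≤ (C + 1) * m := by gcongr
      nlinarith
    have q2 : (1 - ε) * c < bfun v * c := by
      calc _ < _ := hh2
        _ < e2 * (bfun v * e1 * c) := by gcongr
        _ = _ := by linear_combination (bfun v * c) * E
    have := lt_of_mul_lt_mul_right q2 c0.le
    linarith

theorem psi_asymp : Tendsto (fun x : ℝ => Chebyshev.psi x / x) atTop (𝓝 1) := by
  refine (bfun_tendsto.comp Real.tendsto_log_atTop).congr' ?_
  filter_upwards [eventually_gt_atTop 0] with x hx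
  simp only [Function.comp, bfun]
  rw [Real.exp_neg, Real.exp_log hx, div_eq_mul_inv]

theorem theta_asymp : Tendsto (fun x : ℝ => Chebyshev.theta x / x) atTop (𝓝 1) := by
  have h1 : Tendsto (fun x : ℝ => (Chebyshev.psi x - Chebyshev.theta x) / x) atTop (𝓝 0) := by
    apply IsLittleO.tendsto_div_nhds_zero
    refine Chebyshev.isBigO_psi_sub_theta_sqrt.trans_isLittleO ?_
    rw [isLittleO_iff_tendsto' (by filter_upwards [eventually_gt_atTop 0] with x hx h; linarith)]
    refine (tendsto_inv_atTop_zero.comp Real.tendsto_sqrt_atTop).congr' ?_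
    filter_upwards [eventually_gt_atTop 0] with x hx
    simp only [Function.comp]
    rw [Real.sqrt_div_self', one_div]
  have := psi_asymp.sub h1
  rw [sub_zero] at this
  refine this.congr ?_
  intro x; ring

theorem pnt : Tendsto (fun x : ℝ => (Nat.primeCounting ⌊x⌋₊ : ℝ) * Real.log x / x) atTop (𝓝 1) := by
  have h1 := (Chebyshev.integral_theta_div_log_sq_isLittleO).tendsto_div_nhds_zero
  have := theta_asymp.add h1
  rw [add_zero] at this
  refine this.congr' ?_
  filter_upwards [eventually_ge_atTop 2] with x hx
  rw [Chebyshev.primeCounting_eq_theta_div_log_add_integral hx]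
  have : 0 < Real.log x := Real.log_pos (by linarith)
  field_simp

/-- primes up to a real number -/
noncomputable def primesLe (x : ℝ) : Finset ℕ := (Finset.Icc 0 ⌊x⌋₊).filter Nat.Prime

/-- sum of reciprocals of primes -/
noncomputable def S1 (x : ℝ) : ℝ := ∑ p ∈ primesLe x, (p:ℝ)⁻¹

theorem card_primesLe (x : ℝ) : (primesLe x).card = Nat.primeCounting ⌊x⌋₊ := by
  simp only [primesLe, Nat.primeCounting, Nat.primeCounting', Nat.count_eq_card_filter_range,
    Nat.range_succ_eq_Icc_zero]

theorem mem_primesLe {x : ℝ} (hx : 0 ≤ x) {p : ℕ} : p ∈ primesLe x ↔ p.Prime ∧ (p:ℝ) ≤ x := by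
  simp [primesLe, Nat.le_floor_iff hx, and_comm]

/-- real-valued prime counting function -/
noncomputable def ppi (x : ℝ) : ℝ := (Nat.primeCounting ⌊x⌋₊ : ℝ)

theorem ppi_nonneg (x : ℝ) : 0 ≤ ppi x := Nat.cast_nonneg _

theorem ppi_eq_sum (x : ℝ) : ppi x = ∑ k ∈ Finset.Icc 0 ⌊x⌋₊, (if k.Prime then (1:ℝ) else 0) := by
  rw [ppi, ← card_primesLe, primesLe, Finset.card_filter]
  push_cast
  rfl

theorem S1_eq {x : ℝ} (hx : 2 ≤ x) : S1 x = ppi x / x + ∫ t in (2:ℝ)..x, ppi t / t ^ 2 := by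
  have h := sum_mul_eq_sub_integral_mul₁ (𝕜 := ℝ) (fun k : ℕ => if k.Prime then (1:ℝ) else 0)
    (f := fun t => t⁻¹) (by simp [Nat.not_prime_zero]) (by simp [Nat.not_prime_one]) x
    (fun t ht => differentiableAt_inv (by have := ht.1; positivity)) (by
      rw [deriv_inv']
      refine ContinuousOn.integrableOn_Icc ?_
      refine ContinuousOn.neg ?_
      refine ContinuousOn.inv₀ (by fun_prop) ?_
      intro t ht
      have := ht.1; positivity)
  rw [← intervalIntegral.integral_of_le hx] at h
  have e1 : S1 x = ∑ k ∈ Finset.Icc 0 ⌊x⌋₊, (k:ℝ)⁻¹ * (if k.Prime then (1:ℝ) else 0) := by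
    rw [S1, primesLe, Finset.sum_filter]
    apply Finset.sum_congr rfl
    intro k _
    split_ifs <;> simp
  rw [e1, h, ← ppi_eq_sum, sub_eq_add_neg, ← intervalIntegral.integral_neg]
  congr 1
  · rw [div_eq_inv_mul]
  · apply intervalIntegral.integral_congr
    intro t _
    simp only [← ppi_eq_sum, deriv_inv]
    rw [div_eq_inv_mul]; ring

theorem ppi_int (a b : ℝ) (ha : 2 ≤ a) (hab : a ≤ b) :
    IntervalIntegrable (fun t => ppi t / t ^ 2) volume a b := by
  rw [intervalIntegrable_iff_integrableOn_Icc_of_le hab]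
  have := integrableOn_mul_sum_Icc (𝕜 := ℝ) (fun k : ℕ => if k.Prime then (1:ℝ) else 0) (m := 0) (a := a) (b := b)
    (g := fun t => (t^2)⁻¹) (by linarith) (by
      refine ContinuousOn.integrableOn_Icc ?_
      refine ContinuousOn.inv₀ (by fun_prop) ?_
      intro t ht
      have := ha.trans ht.1; positivity)
  refine this.congr_fun (fun t _ => ?_) measurableSet_Icc
  simp only [← ppi_eq_sum, div_eq_inv_mul]

theorem pnt_bounds (η : ℝ) (hη : 0 < η) : ∀ᶠ x : ℝ in atTop,
    (1 - η) * (x / Real.log x) ≤ ppi x ∧ ppi x ≤ (1 + η) * (x / Real.log x) := by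
  have h := pnt
  have h1 := h.eventually (Ioo_mem_nhds (show 1 - η < 1 by linarith) (show (1:ℝ) < 1 + η by linarith))
  filter_upwards [h1, eventually_gt_atTop 1] with x hx hx1
  have hl := Real.log_pos hx1
  have hx0 : 0 < x := by linarith
  have e : ppi x = ((Nat.primeCounting ⌊x⌋₊ : ℝ) * Real.log x / x) * (x / Real.log x) := by
    rw [ppi]; field_simp
  have : 0 < x / Real.log x := by positivity
  rw [e]
  exact ⟨mul_le_mul_of_nonneg_right hx.1.le this.le, mul_le_mul_of_nonneg_right hx.2.le this.le⟩

theorem mertens_aux (η : ℝ) (hη : 0 < η) : ∃ C, ∀ᶠ x : ℝ in atTop,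
    (1 - η) * Real.log (Real.log x) - C ≤ S1 x ∧ S1 x ≤ (1 + η) * Real.log (Real.log x) + C := by
  obtain ⟨A, hA⟩ := ((pnt_bounds η hη).and (eventually_ge_atTop 2)).exists_forall_of_atTop
  have hA2 : 2 ≤ A := (hA A le_rfl).2
  set I := ∫ t in (2:ℝ)..A, ppi t / t ^ 2
  set LA := Real.log (Real.log A)
  refine ⟨1 + |I| + |(1-η) * LA| + |(1 + η) * LA|, ?_⟩
  filter_upwards [eventually_ge_atTop A] with x hx
  have hx2 : 2 ≤ x := hA2.trans hx
  have e := S1_eq hx2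
  rw [← intervalIntegral.integral_add_adjacent_intervals (ppi_int 2 A le_rfl hA2) (ppi_int A x hA2 hx)] at e
  have q0 : 0 ≤ ppi x / x := div_nonneg (ppi_nonneg _) (by linarith)
  have q1 : ppi x / x ≤ 1 := by
    rw [div_le_one (by linarith)]
    have : Nat.primeCounting ⌊x⌋₊ ≤ ⌊x⌋₊ := by
      rw [← card_primesLe, primesLe]
      calc _ ≤ (Finset.Ioc 0 ⌊x⌋₊).card := by
            apply Finset.card_le_card
            intro p hp
            simp only [Finset.mem_filter, Finset.mem_Icc, Finset.mem_Ioc] at *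
            exact ⟨hp.2.pos, hp.1.2⟩
        _ = _ := by simp
    calc ppi x ≤ (⌊x⌋₊ : ℝ) := by rw [ppi]; exact_mod_cast this
      _ ≤ x := Nat.floor_le (by linarith)
  have ii : IntervalIntegrable (fun t => t⁻¹ / Real.log t) volume A x := by
    apply ContinuousOn.intervalIntegrable
    rw [Set.uIcc_of_le hx]
    intro t ht
    have t2 : 2 ≤ t := hA2.trans ht.1
    have := Real.log_pos (show 1 < t by linarith)
    apply ContinuousAt.continuousWithinAt
    have : t ≠ 0 := by linarith
    fun_prop (disch := positivity)
  have iv := integral_inv_div_log (show 1 < A by linarith) (show 1 < x by linarith)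
  have lo : (1 - η) * (Real.log (Real.log x) - LA) ≤ ∫ t in A..x, ppi t / t ^ 2 := by
    rw [← iv, ← intervalIntegral.integral_const_mul]
    apply intervalIntegral.integral_mono_on hx (ii.const_mul _) (ppi_int A x hA2 hx)
    intro t ht
    have t2 : 2 ≤ t := hA2.trans ht.1
    have := Real.log_pos (show 1 < t by linarith)
    rw [le_div_iff₀ (by positivity)]
    refine le_trans (le_of_eq ?_) (hA t ht.1).1.1
    field_simp
  have hi : ∫ t in A..x, ppi t / t ^ 2 ≤ (1 + η) * (Real.log (Real.log x) - LA) := by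
    rw [← iv, ← intervalIntegral.integral_const_mul]
    apply intervalIntegral.integral_mono_on hx (ppi_int A x hA2 hx) (ii.const_mul _)
    intro t ht
    have t2 : 2 ≤ t := hA2.trans ht.1
    have := Real.log_pos (show 1 < t by linarith)
    rw [div_le_iff₀ (by positivity)]
    refine le_trans (hA t ht.1).1.2 (le_of_eq ?_)
    field_simp
  rw [mul_sub] at lo hi
  have a1 := abs_le.1 (le_refl |I|)
  have a2 := abs_le.1 (le_refl |(1-η) * LA|)
  have a3 := abs_le.1 (le_refl |(1+η) * LA|)
  constructor <;> linarith [a1.1, a1.2, a2.1, a2.2, a3.1, a3.2]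

theorem tendsto_loglog : Tendsto (fun x : ℝ => Real.log (Real.log x)) atTop atTop :=
  Real.tendsto_log_atTop.comp Real.tendsto_log_atTop

theorem mertens : Tendsto (fun x : ℝ => S1 x / Real.log (Real.log x)) atTop (𝓝 1) := by
  rw [Metric.tendsto_nhds]
  intro ε hε
  obtain ⟨C, hC⟩ := mertens_aux (ε / 2) (by positivity)
  filter_upwards [hC, tendsto_loglog.eventually_gt_atTop 0, tendsto_loglog.eventually_gt_atTop (C / (ε / 2))] with x hx h0 h1
  rw [div_lt_iff₀ (by positivity)] at h1
  rw [Real.dist_eq, abs_lt]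
  have : S1 x / Real.log (Real.log x) - 1 = (S1 x - Real.log (Real.log x)) / Real.log (Real.log x) := by
    field_simp
  rw [this, lt_div_iff₀ h0, div_lt_iff₀ h0]
  constructor <;> nlinarith [hx.1, hx.2]

/-- elementary symmetric sums -/
noncomputable def esy (f : ℕ → ℝ) (S : Finset ℕ) (j : ℕ) : ℝ := ∑ T ∈ S.powersetCard j, ∏ p ∈ T, f p

theorem esy_zero (f : ℕ → ℝ) (S : Finset ℕ) : esy f S 0 = 1 := by simp [esy]

theorem esy_nonneg (f : ℕ → ℝ) (hf : ∀ p, 0 ≤ f p) (S : Finset ℕ) (j : ℕ) : 0 ≤ esy f S j :=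
  Finset.sum_nonneg fun _ _ => Finset.prod_nonneg fun _ _ => hf _

theorem esy_succ (f : ℕ → ℝ) (S : Finset ℕ) (j : ℕ) :
    (j + 1 : ℝ) * esy f S (j + 1) = ∑ T ∈ S.powersetCard j, (∑ p ∈ S \ T, f p) * ∏ p ∈ T, f p := by
  have h1 : (j + 1 : ℝ) * esy f S (j + 1) =
      ∑ U ∈ S.powersetCard (j + 1), ∑ _p ∈ U, ∏ q ∈ U, f q := by
    rw [esy, Finset.mul_sum]
    apply Finset.sum_congr rfl
    intro U hU
    rw [Finset.mem_powersetCard] at hU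
    rw [Finset.sum_const, hU.2, nsmul_eq_mul]
    push_cast; ring
  rw [h1]
  simp_rw [Finset.sum_mul]
  rw [Finset.sum_sigma', Finset.sum_sigma']
  refine Finset.sum_bij' (fun a _ => ⟨a.1.erase a.2, a.2⟩) (fun a _ => ⟨insert a.2 a.1, a.2⟩) ?_ ?_ ?_ ?_ ?_
  · rintro ⟨U, p⟩ h
    simp only [Finset.mem_sigma, Finset.mem_powersetCard, Finset.mem_sdiff] at h ⊢
    refine ⟨⟨(Finset.erase_subset _ _).trans h.1.1, ?_⟩, h.1.1 h.2, Finset.notMem_erase _ _⟩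
    rw [Finset.card_erase_of_mem h.2, h.1.2]; rfl
  · rintro ⟨T, p⟩ h
    simp only [Finset.mem_sigma, Finset.mem_powersetCard, Finset.mem_sdiff] at h ⊢
    refine ⟨⟨Finset.insert_subset h.2.1 h.1.1, ?_⟩, Finset.mem_insert_self _ _⟩
    rw [Finset.card_insert_of_notMem h.2.2, h.1.2]
  · rintro ⟨U, p⟩ h
    simp only [Finset.mem_sigma, Finset.mem_powersetCard, Finset.mem_sdiff] at h ⊢
    rw [Finset.insert_erase h.2]
  · rintro ⟨T, p⟩ h
    simp only [Finset.mem_sigma, Finset.mem_powersetCard, Finset.mem_sdiff] at h ⊢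
    rw [Finset.erase_insert h.2.2]
  · rintro ⟨U, p⟩ h
    simp only [Finset.mem_sigma, Finset.mem_powersetCard] at h ⊢
    rw [Finset.mul_prod_erase _ _ h.2]

theorem esy_upper (f : ℕ → ℝ) (hf : ∀ p, 0 ≤ f p) (S : Finset ℕ) (j : ℕ) :
    esy f S j ≤ (∑ p ∈ S, f p) ^ j / j.factorial := by
  induction j with
  | zero => simp [esy_zero]
  | succ j ih =>
    have h : (j + 1 : ℝ) * esy f S (j + 1) ≤ (∑ p ∈ S, f p) * esy f S j := by
      rw [esy_succ, esy, Finset.mul_sum]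
      apply Finset.sum_le_sum
      intro T _
      apply mul_le_mul_of_nonneg_right _ (Finset.prod_nonneg fun _ _ => hf _)
      exact Finset.sum_le_sum_of_subset_of_nonneg Finset.sdiff_subset (fun _ _ _ => hf _)
    have h0 : 0 ≤ ∑ p ∈ S, f p := Finset.sum_nonneg fun _ _ => hf _
    have h2 := h.trans (mul_le_mul_of_nonneg_left ih h0)
    rw [le_div_iff₀ (by positivity), Nat.factorial_succ]
    push_cast
    have hj : (0:ℝ) < j.factorial := by positivity
    calc esy f S (j+1) * ((j + 1) * j.factorial) = ((j + 1 : ℝ) * esy f S (j + 1)) * j.factorial := by ring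
      _ ≤ ((∑ p ∈ S, f p) * ((∑ p ∈ S, f p) ^ j / j.factorial)) * j.factorial := by gcongr
      _ = _ := by field_simp; ring

theorem esy_lower (f : ℕ → ℝ) (hf : ∀ p, 0 ≤ f p) (hf1 : ∀ p, f p ≤ 1) (S : Finset ℕ) (J : ℕ)
    (hJ : (J:ℝ) ≤ ∑ p ∈ S, f p) (j : ℕ) (hj : j ≤ J) :
    (∑ p ∈ S, f p - J) ^ j / j.factorial ≤ esy f S j := by
  induction j with
  | zero => simp [esy_zero]
  | succ j ih =>
    have h : (∑ p ∈ S, f p - J) * esy f S j ≤ (j + 1 : ℝ) * esy f S (j + 1) := by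
      rw [esy_succ, esy, Finset.mul_sum]
      apply Finset.sum_le_sum
      intro T hT
      rw [Finset.mem_powersetCard] at hT
      apply mul_le_mul_of_nonneg_right _ (Finset.prod_nonneg fun _ _ => hf _)
      have e := Finset.sum_sdiff (f := f) hT.1
      have : ∑ p ∈ T, f p ≤ J := by
        calc ∑ p ∈ T, f p ≤ ∑ p ∈ T, (1:ℝ) := Finset.sum_le_sum fun _ _ => hf1 _
          _ = j := by simp [hT.2]
          _ ≤ J := by exact_mod_cast (Nat.le_of_succ_le hj)
      linarith
    have h0 : 0 ≤ ∑ p ∈ S, f p - J := by linarith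
    have h2 := (mul_le_mul_of_nonneg_left (ih (Nat.le_of_succ_le hj)) h0).trans h
    rw [div_le_iff₀ (by positivity), Nat.factorial_succ]
    push_cast
    have hj : (0:ℝ) < j.factorial := by positivity
    calc (∑ p ∈ S, f p - J) ^ (j+1) = ((∑ p ∈ S, f p - J) * ((∑ p ∈ S, f p - J) ^ j / j.factorial)) * j.factorial := by field_simp; ring
      _ ≤ ((j + 1 : ℝ) * esy f S (j + 1)) * j.factorial := by gcongr
      _ = _ := by ring

/-- squarefree numbers up to `x` with `j` prime factors -/
noncomputable def B (j : ℕ) (x : ℝ) : Finset ℕ :=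
  (Finset.Icc 0 ⌊x⌋₊).filter (fun n => Squarefree n ∧ n.primeFactors.card = j)

theorem mem_B {j : ℕ} {x : ℝ} (hx : 0 ≤ x) {m : ℕ} :
    m ∈ B j x ↔ (m:ℝ) ≤ x ∧ Squarefree m ∧ m.primeFactors.card = j := by
  simp [B, Nat.le_floor_iff hx]

/-- reciprocal sum -/
noncomputable def L (j : ℕ) (x : ℝ) : ℝ := ∑ m ∈ B j x, (m:ℝ)⁻¹

theorem prod_inv_primeFactors {m : ℕ} (hm : Squarefree m) :
    ∏ p ∈ m.primeFactors, ((p:ℝ)⁻¹) = (m:ℝ)⁻¹ := by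
  rw [Finset.prod_inv_distrib]
  congr 1
  conv_rhs => rw [← Nat.prod_primeFactors_of_squarefree hm]
  push_cast
  rfl

theorem L_upper (j : ℕ) (x : ℝ) (hx : 0 ≤ x) : L j x ≤ esy (fun p => (p:ℝ)⁻¹) (primesLe x) j := by
  have inj : Set.InjOn Nat.primeFactors (B j x : Set ℕ) := by
    intro a ha b hb hab
    rw [Finset.mem_coe, mem_B hx] at ha hb
    rw [← Nat.prod_primeFactors_of_squarefree ha.2.1, ← Nat.prod_primeFactors_of_squarefree hb.2.1, hab]
  have e : L j x = ∑ T ∈ (B j x).image Nat.primeFactors, ∏ p ∈ T, ((p:ℝ)⁻¹) := by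
    rw [Finset.sum_image inj, L]
    apply Finset.sum_congr rfl
    intro m hm
    rw [mem_B hx] at hm
    rw [prod_inv_primeFactors hm.2.1]
  rw [e, esy]
  apply Finset.sum_le_sum_of_subset_of_nonneg
  · intro T hT
    rw [Finset.mem_image] at hT
    obtain ⟨m, hm, rfl⟩ := hT
    rw [mem_B hx] at hm
    rw [Finset.mem_powersetCard]
    refine ⟨?_, hm.2.2⟩
    intro p hp
    rw [mem_primesLe hx]
    have := Nat.le_of_mem_primeFactors hp
    exact ⟨Nat.prime_of_mem_primeFactors hp, le_trans (by exact_mod_cast this) hm.1⟩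
  · intro T _ _
    positivity

theorem L_lower (j : ℕ) (x y : ℝ) (hx : 0 ≤ x) (hy : 0 ≤ y) (hxy : y ^ j ≤ x) :
    esy (fun p => (p:ℝ)⁻¹) (primesLe y) j ≤ L j x := by
  have key : ∀ T ∈ (primesLe y).powersetCard j, (∏ p ∈ T, p).primeFactors = T := by
    intro T hT
    rw [Finset.mem_powersetCard] at hT
    apply Nat.primeFactors_prod
    intro p hp
    exact ((mem_primesLe hy).1 (hT.1 hp)).1
  have inj : Set.InjOn (fun T : Finset ℕ => ∏ p ∈ T, p) ((primesLe y).powersetCard j : Set (Finset ℕ)) := by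
    intro a ha b hb hab
    rw [← key a ha, ← key b hb]
    exact congrArg _ hab
  have e : esy (fun p => (p:ℝ)⁻¹) (primesLe y) j =
      ∑ m ∈ ((primesLe y).powersetCard j).image (fun T : Finset ℕ => ∏ p ∈ T, p), (m:ℝ)⁻¹ := by
    rw [Finset.sum_image inj, esy]
    apply Finset.sum_congr rfl
    intro T hT
    rw [Finset.prod_inv_distrib]
    push_cast; rfl
  rw [e, L]
  apply Finset.sum_le_sum_of_subset_of_nonneg
  · intro m hm
    rw [Finset.mem_image] at hm
    obtain ⟨T, hT, rfl⟩ := hm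
    rw [mem_B hx, key T hT]
    rw [Finset.mem_powersetCard] at hT
    refine ⟨?_, ?_, hT.2⟩
    · push_cast
      refine le_trans ?_ hxy
      rw [← hT.2]
      rw [← Finset.prod_const]
      apply Finset.prod_le_prod (fun _ _ => by positivity)
      intro p hp
      exact ((mem_primesLe hy).1 (hT.1 hp)).2
    · apply Finset.squarefree_prod_of_pairwise_isCoprime
      · intro p hp q hq hpq
        rw [Function.onFun, ← Nat.coprime_iff_isRelPrime]
        exact (Nat.coprime_primes ((mem_primesLe hy).1 (hT.1 hp)).1 ((mem_primesLe hy).1 (hT.1 hq)).1).2 hpq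
      · intro p hp
        exact ((mem_primesLe hy).1 (hT.1 hp)).1.squarefree
  · intro m _ _
    positivity

theorem loglog_rpow (ε : ℝ) (hε : 0 < ε) :
    Tendsto (fun x : ℝ => Real.log (Real.log (x ^ ε)) / Real.log (Real.log x)) atTop (𝓝 1) := by
  have h : Tendsto (fun x : ℝ => Real.log ε / Real.log (Real.log x) + 1) atTop (𝓝 (0 + 1)) :=
    (tendsto_loglog.const_div_atTop _).add tendsto_const_nhds
  rw [zero_add] at h
  refine h.congr' ?_
  filter_upwards [tendsto_loglog.eventually_gt_atTop 0, eventually_gt_atTop 1] with x h0 h1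
  have := Real.log_pos h1
  rw [Real.log_rpow (by linarith), Real.log_mul hε.ne' this.ne']
  field_simp

theorem L_asymp (j : ℕ) :
    Tendsto (fun x : ℝ => L j x / Real.log (Real.log x) ^ j) atTop (𝓝 (1 / j.factorial)) := by
  have up : Tendsto (fun x : ℝ => (S1 x / Real.log (Real.log x)) ^ j / j.factorial) atTop (𝓝 (1 / j.factorial)) := by
    simpa using (mertens.pow j).div_const (j.factorial : ℝ)
  set ε : ℝ := 1 / (j + 1) with hε
  have ε0 : 0 < ε := by positivity
  have lo0 : Tendsto (fun x : ℝ => (S1 (x ^ ε) - j) / Real.log (Real.log x)) atTop (𝓝 1) := by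
    have a := mertens.comp (tendsto_rpow_atTop ε0)
    have b := a.mul (loglog_rpow ε ε0)
    have c := b.sub (tendsto_loglog.const_div_atTop (j:ℝ))
    rw [one_mul, sub_zero] at c
    refine c.congr' ?_
    filter_upwards [(tendsto_loglog.comp (tendsto_rpow_atTop ε0)).eventually_gt_atTop 0] with x hx
    simp only [Function.comp] at *
    rw [sub_div]
    field_simp
  have lo : Tendsto (fun x : ℝ => ((S1 (x ^ ε) - j) / Real.log (Real.log x)) ^ j / j.factorial) atTop (𝓝 (1 / j.factorial)) := by
    simpa using (lo0.pow j).div_const (j.factorial : ℝ)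
  refine tendsto_of_tendsto_of_tendsto_of_le_of_le' lo up ?_ ?_
  · filter_upwards [lo0.eventually (lt_mem_nhds zero_lt_one), tendsto_loglog.eventually_gt_atTop 0, eventually_gt_atTop 1] with x h1 h0 hx
    rw [lt_div_iff₀ h0, zero_mul] at h1
    rw [div_pow, div_right_comm]
    apply div_le_div_of_nonneg_right _ (by positivity)
    refine (esy_lower (fun p => (p:ℝ)⁻¹) (fun p => by positivity) (fun p => Nat.cast_inv_le_one p) (primesLe (x ^ ε)) j ?_ j le_rfl).trans
      (L_lower j x (x ^ ε) (by linarith) (by positivity) ?_)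
    · have : S1 (x ^ ε) = ∑ p ∈ primesLe (x ^ ε), (p:ℝ)⁻¹ := rfl
      linarith
    · rw [← Real.rpow_natCast, ← Real.rpow_mul (by linarith)]
      conv_rhs => rw [← Real.rpow_one x]
      apply Real.rpow_le_rpow_of_exponent_le hx.le
      rw [hε, div_mul_eq_mul_div, one_mul, div_le_one (by positivity)]
      linarith
  · filter_upwards [tendsto_loglog.eventually_gt_atTop 0, eventually_gt_atTop 1] with x h0 hx
    rw [div_pow, div_right_comm]
    apply div_le_div_of_nonneg_right _ (by positivity)
    exact (L_upper j x (by linarith)).trans (esy_upper _ (fun p => by positivity) _ _)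

theorem B_pos {j : ℕ} {x : ℝ} {m : ℕ} (hm : m ∈ B j x) : 0 < m := by
  rw [B, Finset.mem_filter] at hm
  exact Nat.pos_of_ne_zero hm.2.1.ne_zero

theorem B_card_le (j : ℕ) (x : ℝ) (hx : 0 ≤ x) : ((B j x).card : ℝ) ≤ x := by
  have : (B j x).card ≤ ⌊x⌋₊ := by
    calc (B j x).card ≤ (Finset.Ioc 0 ⌊x⌋₊).card := by
          apply Finset.card_le_card
          intro m hm
          have h0 := B_pos hm
          rw [B, Finset.mem_filter, Finset.mem_Icc] at hm
          exact Finset.mem_Ioc.2 ⟨h0, hm.1.2⟩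
      _ = _ := by simp
  calc ((B j x).card : ℝ) ≤ (⌊x⌋₊ : ℝ) := by exact_mod_cast this
    _ ≤ x := Nat.floor_le hx

theorem primesLe_card_le (x : ℝ) (hx : 0 ≤ x) : ((primesLe x).card : ℝ) ≤ x := by
  have : (primesLe x).card ≤ ⌊x⌋₊ := by
    calc (primesLe x).card ≤ (Finset.Ioc 0 ⌊x⌋₊).card := by
          apply Finset.card_le_card
          intro m hm
          rw [primesLe, Finset.mem_filter, Finset.mem_Icc] at hm
          exact Finset.mem_Ioc.2 ⟨hm.2.pos, hm.1.2⟩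
      _ = _ := by simp
  calc ((primesLe x).card : ℝ) ≤ (⌊x⌋₊ : ℝ) := by exact_mod_cast this
    _ ≤ x := Nat.floor_le hx

theorem B_lower (j : ℕ) (x y : ℝ) (hx : 0 ≤ x) (hy : 0 ≤ y) :
    ∑ m ∈ B j y, (ppi (x / m) - y) ≤ ((B (j + 1) x).card : ℝ) := by
  set Q : ℕ → Finset ℕ := fun m => (primesLe (x / m)).filter (fun p : ℕ => y < (p:ℝ)) with hQ
  have h1 : ∀ m ∈ B j y, ppi (x / m) - y ≤ ((Q m).card : ℝ) := by
    intro m hm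
    have hs := Finset.card_filter_add_card_filter_not (s := primesLe (x / m)) (fun p : ℕ => y < (p:ℝ))
    have h2 : (((primesLe (x / m)).filter (fun p : ℕ => ¬ y < (p:ℝ))).card : ℝ) ≤ y := by
      refine le_trans ?_ (primesLe_card_le y hy)
      norm_cast
      apply Finset.card_le_card
      intro p hp
      rw [Finset.mem_filter, mem_primesLe (by positivity)] at hp
      rw [mem_primesLe hy]
      exact ⟨hp.1.1, not_lt.1 hp.2⟩
    have h3 : ppi (x / m) = ((Q m).card : ℝ) + (((primesLe (x / m)).filter (fun p : ℕ => ¬ y < (p:ℝ))).card : ℝ) := by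
      rw [ppi, ← card_primesLe, ← hs]; push_cast; rfl
    linarith
  refine (Finset.sum_le_sum h1).trans ?_
  have h2 : ∑ m ∈ B j y, ((Q m).card : ℝ) = (((B j y).sigma Q).card : ℝ) := by
    rw [Finset.card_sigma]; push_cast; rfl
  rw [h2]
  norm_cast
  have props : ∀ a ∈ (B j y).sigma Q, 0 < a.1 ∧ (a.1 : ℝ) ≤ y ∧ Squarefree a.1 ∧ a.1.primeFactors.card = j ∧
      a.2.Prime ∧ (a.2:ℝ) ≤ x / a.1 ∧ y < a.2 ∧ ¬ a.2 ∣ a.1 := by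
    intro a ha
    rw [Finset.mem_sigma, hQ, Finset.mem_filter, mem_primesLe (by positivity)] at ha
    have hp := B_pos ha.1
    rw [mem_B hy] at ha
    refine ⟨hp, ha.1.1, ha.1.2.1, ha.1.2.2, ha.2.1.1, ha.2.1.2, ha.2.2, fun hd => ?_⟩
    have : (a.2 : ℝ) ≤ a.1 := by exact_mod_cast Nat.le_of_dvd hp hd
    linarith [ha.1.1, ha.2.2]
  refine Finset.card_le_card_of_injOn (fun a => a.1 * a.2) ?_ ?_
  · intro a ha
    obtain ⟨h0, h1, h2, h3, h4, h5, h6, h7⟩ := props a ha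
    have cop : Nat.Coprime a.1 a.2 := ((Nat.Prime.coprime_iff_not_dvd h4).2 h7).symm
    rw [Finset.mem_coe, mem_B hx]
    refine ⟨?_, ?_, ?_⟩
    · rw [le_div_iff₀ (by exact_mod_cast h0)] at h5
      push_cast; linarith
    · rw [Nat.squarefree_mul cop]
      exact ⟨h2, h4.squarefree⟩
    · rw [Nat.Coprime.primeFactors_mul cop, Finset.card_union_of_disjoint cop.disjoint_primeFactors, h3,
        h4.primeFactors, Finset.card_singleton]
  · intro a ha b hb hab
    obtain ⟨h0, h1, h2, h3, h4, h5, h6, h7⟩ := props a ha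
    obtain ⟨g0, g1, g2, g3, g4, g5, g6, g7⟩ := props b hb
    simp only at hab
    have hd : a.2 ∣ b.1 * b.2 := by rw [← hab]; exact dvd_mul_left _ _
    have e2 : a.2 = b.2 := by
      rcases (Nat.Prime.dvd_mul h4).1 hd with h | h
      · have : (a.2 : ℝ) ≤ b.1 := by exact_mod_cast Nat.le_of_dvd g0 h
        linarith
      · exact (Nat.prime_dvd_prime_iff_eq h4 g4).1 h
    have e1 : a.1 = b.1 := by
      rw [e2] at hab
      exact Nat.eq_of_mul_eq_mul_right g4.pos hab
    rcases a with ⟨a1, a2⟩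
    rcases b with ⟨b1, b2⟩
    simp only at e1 e2
    rw [e1, e2]

theorem B_upper (j : ℕ) (x : ℝ) (hx : 1 ≤ x) (δ : ℝ) (hδ : δ * (j + 1) = 1 / 2) :
    ((B (j + 1) x).card : ℝ) ≤ x ^ (1/2 : ℝ) + ∑ m ∈ B j (x ^ (1 - δ)), ppi (x / m) := by
  have hx0 : 0 < x := by linarith
  set z := x ^ (1/2 : ℝ)
  set w := x ^ (1 - δ)
  have hz : 0 ≤ z := by positivity
  have hw : 0 ≤ w := by positivity
  have sub : B (j + 1) x ⊆ B (j + 1) z ∪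
      ((B j w).sigma (fun m => primesLe (x / m))).image (fun a => a.1 * a.2) := by
    intro n hn
    have n0 := B_pos hn
    rw [mem_B hx0.le] at hn
    obtain ⟨h1, h2, h3⟩ := hn
    rw [Finset.mem_union]
    by_cases hnz : (n:ℝ) ≤ z
    · left; rw [mem_B hz]; exact ⟨hnz, h2, h3⟩
    right
    have hne : n.primeFactors.Nonempty := by
      rw [← Finset.card_pos, h3]; omega
    obtain ⟨P, hP, hmax⟩ := n.primeFactors.exists_max_image (fun p => p) hne
    have Pp := Nat.prime_of_mem_primeFactors hP
    obtain ⟨m, rfl⟩ := Nat.dvd_of_mem_primeFactors hP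
    have sf := Nat.squarefree_mul_iff.1 h2
    have m0 : 0 < m := Nat.pos_of_ne_zero (by rintro rfl; simp at n0)
    rw [Finset.mem_image]
    refine ⟨⟨m, P⟩, ?_, mul_comm _ _⟩
    rw [Finset.mem_sigma]
    have hmR : (0:ℝ) < m := by exact_mod_cast m0
    constructor
    · rw [mem_B hw]
      refine ⟨?_, sf.2.2, ?_⟩
      · have hb : P * m ≤ P ^ (j + 1) := by
          conv_lhs => rw [← Nat.prod_primeFactors_of_squarefree h2]
          rw [← h3]
          exact Finset.prod_le_pow_card _ _ _ hmax
        have hPb : x ^ δ ≤ P := by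
          by_contra hcon
          push Not at hcon
          have : ((P * m : ℕ) : ℝ) ≤ z := by
            calc ((P * m : ℕ) : ℝ) ≤ (P:ℝ) ^ (j + 1) := by exact_mod_cast hb
              _ ≤ (x ^ δ) ^ (j + 1) := by gcongr
              _ = x ^ (δ * (j + 1)) := by
                rw [← Real.rpow_natCast, ← Real.rpow_mul hx0.le]; push_cast; rfl
              _ = z := by rw [hδ]
          exact hnz this
        have hPx : (P:ℝ) * m ≤ x := by exact_mod_cast h1
        have : x ^ δ * m ≤ x := le_trans (by gcongr) hPx
        simp only [w]
        rw [Real.rpow_sub hx0, Real.rpow_one, le_div_iff₀ (by positivity)]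
        linarith
      · rw [Nat.Coprime.primeFactors_mul sf.1, Finset.card_union_of_disjoint sf.1.disjoint_primeFactors,
          Pp.primeFactors, Finset.card_singleton] at h3
        simp only
        omega
    · rw [mem_primesLe (by positivity)]
      refine ⟨Pp, ?_⟩
      rw [le_div_iff₀ hmR]
      exact_mod_cast h1
  have hc := (Finset.card_le_card sub).trans ((Finset.card_union_le _ _).trans
    (Nat.add_le_add_left Finset.card_image_le _))
  rw [Finset.card_sigma] at hc
  have hc' : ((B (j + 1) x).card : ℝ) ≤ ((B (j + 1) z).card : ℝ) + ∑ m ∈ B j w, ((primesLe (x / m)).card : ℝ) := by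
    exact_mod_cast hc
  refine hc'.trans (add_le_add (B_card_le _ _ hz) (le_of_eq ?_))
  apply Finset.sum_congr rfl
  intro m _
  rw [card_primesLe, ppi]

theorem L_asymp_rpow (j : ℕ) (ε : ℝ) (hε : 0 < ε) :
    Tendsto (fun x : ℝ => L j (x ^ ε) / Real.log (Real.log x) ^ j) atTop (𝓝 (1 / j.factorial)) := by
  have a := (L_asymp j).comp (tendsto_rpow_atTop hε)
  have b := a.mul ((loglog_rpow ε hε).pow j)
  rw [one_pow, mul_one] at b
  refine b.congr' ?_
  filter_upwards [(tendsto_loglog.comp (tendsto_rpow_atTop hε)).eventually_gt_atTop 0] with x hx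
  simp only [Function.comp] at *
  rw [div_pow]
  field_simp

theorem small_term (j : ℕ) (a : ℝ) (ha : a < 1) :
    Tendsto (fun x : ℝ => x ^ a / (x / Real.log x * Real.log (Real.log x) ^ j)) atTop (𝓝 0) := by
  have h := (isLittleO_log_rpow_atTop (show 0 < 1 - a by linarith)).tendsto_div_nhds_zero
  refine squeeze_zero' ?_ ?_ h
  · filter_upwards [tendsto_loglog.eventually_gt_atTop 0, eventually_gt_atTop 1] with x h0 hx
    have := Real.log_pos hx
    positivity
  · filter_upwards [tendsto_loglog.eventually_gt_atTop 1, eventually_gt_atTop 1] with x h0 hx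
    have hl := Real.log_pos hx
    have hx0 : 0 < x := by linarith
    rw [Real.rpow_sub hx0, Real.rpow_one]
    have h1 : 1 ≤ Real.log (Real.log x) ^ j := one_le_pow₀ h0.le
    calc x ^ a / (x / Real.log x * Real.log (Real.log x) ^ j) ≤ x ^ a / (x / Real.log x * 1) := by gcongr
      _ = _ := by field_simp

theorem lower_ev (j : ℕ) (η : ℝ) (hη : 0 < η) (hη1 : η < 1) : ∀ᶠ x : ℝ in atTop,
    (1 - η) * (L j (x ^ (1/3 : ℝ)) / Real.log (Real.log x) ^ j) -
      x ^ (2/3 : ℝ) / (x / Real.log x * Real.log (Real.log x) ^ j) ≤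
    ((B (j + 1) x).card : ℝ) / (x / Real.log x * Real.log (Real.log x) ^ j) := by
  obtain ⟨A, hA⟩ := (pnt_bounds η hη).exists_forall_of_atTop
  filter_upwards [tendsto_loglog.eventually_gt_atTop 0, eventually_gt_atTop 1,
    (tendsto_rpow_atTop (show (0:ℝ) < 2/3 by norm_num)).eventually_ge_atTop A,
    (tendsto_rpow_atTop (show (0:ℝ) < 2/3 by norm_num)).eventually_gt_atTop 1] with x h0 hx hxA hx1
  have hl := Real.log_pos hx
  have hx0 : 0 < x := by linarith
  have e : (1 - η) * (L j (x ^ (1/3 : ℝ)) / Real.log (Real.log x) ^ j) -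
      x ^ (2/3 : ℝ) / (x / Real.log x * Real.log (Real.log x) ^ j) =
      ((1 - η) * (x / Real.log x) * L j (x ^ (1/3 : ℝ)) - x ^ (2/3 : ℝ)) /
        (x / Real.log x * Real.log (Real.log x) ^ j) := by
    field_simp
  rw [e]
  apply div_le_div_of_nonneg_right _ (by positivity)
  have hy : 0 ≤ x ^ (1/3 : ℝ) := by positivity
  refine le_trans ?_ (B_lower j x (x ^ (1/3 : ℝ)) hx0.le hy)
  rw [Finset.sum_sub_distrib, Finset.sum_const, nsmul_eq_mul]
  apply sub_le_sub
  · rw [L, Finset.mul_sum]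
    apply Finset.sum_le_sum
    intro m hm
    have m0 : (0:ℝ) < m := by exact_mod_cast B_pos hm
    have m1 : (1:ℝ) ≤ m := by exact_mod_cast B_pos hm
    rw [mem_B hy] at hm
    have hq : x ^ (2/3 : ℝ) ≤ x / m := by
      rw [le_div_iff₀ m0]
      calc x ^ (2/3 : ℝ) * m ≤ x ^ (2/3 : ℝ) * x ^ (1/3 : ℝ) := by gcongr; exact hm.1
        _ = x := by rw [← Real.rpow_add hx0]; norm_num
    refine le_trans ?_ (hA (x / m) (hxA.trans hq)).1
    have hq1 : 1 < x / m := lt_of_lt_of_le hx1 hq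
    have hlq := Real.log_pos hq1
    have : Real.log (x / m) ≤ Real.log x := by
      apply Real.log_le_log (by positivity)
      exact div_le_self hx0.le m1
    calc (1 - η) * (x / Real.log x) * (m:ℝ)⁻¹ = (1 - η) * ((x / m) / Real.log x) := by field_simp
      _ ≤ _ := by
        have : 0 ≤ 1 - η := by linarith
        gcongr
  · calc ((B j (x ^ (1/3 : ℝ))).card : ℝ) * x ^ (1/3 : ℝ) ≤ x ^ (1/3 : ℝ) * x ^ (1/3 : ℝ) := by
          gcongr; exact B_card_le _ _ hy
      _ = _ := by rw [← Real.rpow_add hx0]; norm_num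

theorem upper_ev (j : ℕ) (δ : ℝ) (hδ : δ * (j + 1) = 1 / 2) (η : ℝ) (hη : 0 < η) (hη1 : η < 1) :
    ∀ᶠ x : ℝ in atTop,
    ((B (j + 1) x).card : ℝ) / (x / Real.log x * Real.log (Real.log x) ^ j) ≤
      x ^ (1/2 : ℝ) / (x / Real.log x * Real.log (Real.log x) ^ j) +
      (1 + η) * ((1 / (1 - η)) * (L j (x ^ η) / Real.log (Real.log x) ^ j) +
        (1 / δ) * (L j x / Real.log (Real.log x) ^ j - L j (x ^ η) / Real.log (Real.log x) ^ j)) := by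
  have δ0 : 0 < δ := by
    by_contra hc
    push Not at hc
    have : δ * (j + 1) ≤ 0 := mul_nonpos_of_nonpos_of_nonneg hc (by positivity)
    linarith
  have δ1 : δ < 1 := by nlinarith [(Nat.cast_nonneg j : (0:ℝ) ≤ j)]
  have η1 : 0 < 1 - η := by linarith
  obtain ⟨A, hA⟩ := (pnt_bounds η hη).exists_forall_of_atTop
  filter_upwards [tendsto_loglog.eventually_gt_atTop 0, eventually_gt_atTop 1,
    (tendsto_rpow_atTop δ0).eventually_ge_atTop A] with x h0 hx hxA
  have hl := Real.log_pos hx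
  have hx0 : 0 < x := by linarith
  have e : x ^ (1/2 : ℝ) / (x / Real.log x * Real.log (Real.log x) ^ j) +
      (1 + η) * ((1 / (1 - η)) * (L j (x ^ η) / Real.log (Real.log x) ^ j) +
        (1 / δ) * (L j x / Real.log (Real.log x) ^ j - L j (x ^ η) / Real.log (Real.log x) ^ j)) =
      (x ^ (1/2 : ℝ) + (1 + η) * (x / Real.log x) * ((1 / (1 - η)) * L j (x ^ η) +
        (1 / δ) * (L j x - L j (x ^ η)))) / (x / Real.log x * Real.log (Real.log x) ^ j) := by
    rw [add_div]
    congr 1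
    have : x / Real.log x ≠ 0 := by positivity
    have : Real.log (Real.log x) ^ j ≠ 0 := by positivity
    rw [eq_div_iff (by positivity)]
    generalize x / Real.log x = r at *
    generalize Real.log (Real.log x) ^ j = q at *
    field_simp
  rw [e]
  apply div_le_div_of_nonneg_right _ (by positivity)
  refine (B_upper j x hx.le δ hδ).trans ?_
  gcongr
  have hw : 0 ≤ x ^ (1 - δ) := by positivity
  have hy : 0 ≤ x ^ η := by positivity
  have sub1 : B j (x ^ (1 - δ)) ⊆ B j x := by
    intro m hm
    rw [mem_B hw] at hm
    rw [mem_B hx0.le]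
    refine ⟨hm.1.trans ?_, hm.2⟩
    conv_rhs => rw [← Real.rpow_one x]
    exact Real.rpow_le_rpow_of_exponent_le hx.le (by linarith)
  have sub2 : B j (x ^ η) ⊆ B j x := by
    intro m hm
    rw [mem_B hy] at hm
    rw [mem_B hx0.le]
    refine ⟨hm.1.trans ?_, hm.2⟩
    conv_rhs => rw [← Real.rpow_one x]
    exact Real.rpow_le_rpow_of_exponent_le hx.le (by linarith)
  set c : ℕ → ℝ := fun m => if m ∈ B j (x ^ η) then 1 / (1 - η) else 1 / δ with hc
  have c0 : ∀ m, 0 ≤ c m := by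
    intro m; simp only [hc]; split_ifs <;> positivity
  have s1 : ∀ m ∈ B j (x ^ (1 - δ)), ppi (x / m) ≤ (1 + η) * (x / Real.log x) * (c m * (m:ℝ)⁻¹) := by
    intro m hm
    have m0 : (0:ℝ) < m := by exact_mod_cast B_pos hm
    have hm' := (mem_B hw).1 hm
    have gen : ∀ α : ℝ, 0 < α → (m:ℝ) ≤ x ^ (1 - α) → α * Real.log x ≤ Real.log (x / m) := by
      intro α hα hmα
      rw [← Real.log_rpow hx0]
      apply Real.log_le_log (by positivity)
      rw [le_div_iff₀ m0]
      calc x ^ α * m ≤ x ^ α * x ^ (1 - α) := by gcongr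
        _ = x := by rw [← Real.rpow_add hx0]; norm_num
    have hq : x ^ δ ≤ x / m := by
      rw [le_div_iff₀ m0]
      calc x ^ δ * m ≤ x ^ δ * x ^ (1 - δ) := by gcongr; exact hm'.1
        _ = x := by rw [← Real.rpow_add hx0]; norm_num
    refine (hA (x / m) (hxA.trans hq)).2.trans ?_
    have gen2 : ∀ α : ℝ, 0 < α → (m:ℝ) ≤ x ^ (1 - α) →
        (1 + η) * (x / m / Real.log (x / m)) ≤ (1 + η) * (x / Real.log x) * (1 / α * (m:ℝ)⁻¹) := by
      intro α hα hmα
      have := gen α hα hmα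
      calc (1 + η) * (x / m / Real.log (x / m)) ≤ (1 + η) * (x / m / (α * Real.log x)) := by gcongr
        _ = _ := by field_simp
    simp only [hc]
    split_ifs with hmy
    · apply gen2 _ η1
      rw [sub_sub_cancel]
      exact ((mem_B hy).1 hmy).1
    · exact gen2 δ δ0 hm'.1
  refine (Finset.sum_le_sum s1).trans ?_
  rw [← Finset.mul_sum]
  apply mul_le_mul_of_nonneg_left _ (by positivity)
  refine (Finset.sum_le_sum_of_subset_of_nonneg sub1 (fun m _ _ => mul_nonneg (c0 m) (by positivity))).trans ?_
  rw [← Finset.sum_sdiff sub2]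
  have t1 : ∑ m ∈ B j (x ^ η), c m * (m:ℝ)⁻¹ = (1 / (1 - η)) * L j (x ^ η) := by
    rw [L, Finset.mul_sum]
    apply Finset.sum_congr rfl
    intro m hm
    simp only [hc, if_pos hm]
  have t2 : ∑ m ∈ B j x \ B j (x ^ η), c m * (m:ℝ)⁻¹ = (1 / δ) * (L j x - L j (x ^ η)) := by
    have : L j x - L j (x ^ η) = ∑ m ∈ B j x \ B j (x ^ η), (m:ℝ)⁻¹ := by
      rw [L, L, ← Finset.sum_sdiff sub2, add_sub_cancel_right]
    rw [this, Finset.mul_sum]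
    apply Finset.sum_congr rfl
    intro m hm
    simp only [hc, if_neg (Finset.mem_sdiff.1 hm).2]
  rw [t1, t2, add_comm]

theorem landau (j : ℕ) :
    Tendsto (fun x : ℝ => ((B (j + 1) x).card : ℝ) / (x / Real.log x * Real.log (Real.log x) ^ j)) atTop
      (𝓝 (1 / j.factorial)) := by
  rw [tendsto_order]
  constructor
  · intro a ha
    have c1 : Tendsto (fun η : ℝ => (1 - η) * (1 / (j.factorial : ℝ)) - 0) (𝓝[>] 0) (𝓝 ((1 - 0) * (1 / (j.factorial:ℝ)) - 0)) := by
      apply Tendsto.mono_left _ nhdsWithin_le_nhds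
      apply Continuous.tendsto
      fun_prop
    rw [show (1 - 0) * (1 / (j.factorial:ℝ)) - 0 = 1 / (j.factorial:ℝ) by ring] at c1
    obtain ⟨η, h1, h2⟩ := ((c1.eventually (lt_mem_nhds ha)).and (Ioo_mem_nhdsGT (zero_lt_one (α := ℝ)))).exists
    have lim := ((L_asymp_rpow j (1/3) (by norm_num)).const_mul (1 - η)).sub (small_term j (2/3) (by norm_num))
    filter_upwards [lim.eventually (lt_mem_nhds h1), lower_ev j η h2.1 h2.2] with x hx1 hx2
    exact hx1.trans_le hx2
  · intro a ha
    have c1 : Tendsto (fun η : ℝ => 0 + (1 + η) * ((1 / (1 - η)) * (1 / (j.factorial : ℝ)) + (1 / (1 / (2 * ((j:ℝ) + 1)))) * (1 / (j.factorial : ℝ) - 1 / (j.factorial : ℝ)))) (𝓝[>] 0)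
        (𝓝 (0 + (1 + 0) * ((1 / (1 - 0)) * (1 / (j.factorial : ℝ)) + (1 / (1 / (2 * ((j:ℝ) + 1)))) * (1 / (j.factorial : ℝ) - 1 / (j.factorial : ℝ))))) := by
      apply Tendsto.mono_left _ nhdsWithin_le_nhds
      apply ContinuousAt.tendsto
      fun_prop (disch := norm_num)
    have e : 0 + (1 + 0) * ((1 / (1 - 0)) * (1 / (j.factorial : ℝ)) + (1 / (1 / (2 * ((j:ℝ) + 1)))) * (1 / (j.factorial : ℝ) - 1 / (j.factorial : ℝ))) = 1 / (j.factorial : ℝ) := by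
      simp
    rw [e] at c1
    obtain ⟨η, h1, h2⟩ := ((c1.eventually (gt_mem_nhds ha)).and (Ioo_mem_nhdsGT (zero_lt_one (α := ℝ)))).exists
    have l1 := L_asymp_rpow j η h2.1
    have lim := (small_term j (1/2) (by norm_num)).add
      (((l1.const_mul (1 / (1 - η))).add (((L_asymp j).sub l1).const_mul (1 / (1 / (2 * ((j:ℝ) + 1)))))).const_mul (1 + η))
    filter_upwards [lim.eventually (gt_mem_nhds h1), upper_ev j (1 / (2 * ((j:ℝ) + 1))) (by field_simp) η h2.1 h2.2] with x hx1 hx2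
    exact hx2.trans_lt hx1

end Landau

theorem stmt_4 (k : ℕ) (hk : 1 ≤ k) :
    IsEquivalent atTop
      (fun x : ℕ => (((Finset.range (x + 1)).filter
          (fun n => Squarefree n ∧ n.primeFactors.card = k)).card : ℝ))
      (fun x : ℕ => x * (Real.log (Real.log x)) ^ (k - 1) /
          ((k - 1).factorial * Real.log x)) := by
  obtain ⟨j, rfl⟩ : ∃ j, k = j + 1 := ⟨k - 1, by omega⟩
  simp only [Nat.add_sub_cancel]
  have h := (Landau.landau j).comp (tendsto_natCast_atTop_atTop (R := ℝ))
  have ev : ∀ᶠ x : ℕ in atTop, 0 < Real.log (Real.log x) :=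
    (Landau.tendsto_loglog.comp (tendsto_natCast_atTop_atTop (R := ℝ))).eventually_gt_atTop 0
  have ev1 : ∀ᶠ x : ℕ in atTop, (1:ℝ) < x :=
    (tendsto_natCast_atTop_atTop (R := ℝ)).eventually_gt_atTop 1
  apply isEquivalent_of_tendsto_one
  have h2 := h.mul_const (j.factorial : ℝ)
  rw [one_div, inv_mul_cancel₀ (by positivity)] at h2
  refine h2.congr' ?_
  filter_upwards [ev, ev1] with x h0 h1
  have hl := Real.log_pos h1
  have hB : Landau.B (j + 1) (x:ℝ) = (Finset.range (x + 1)).filter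
          (fun n => Squarefree n ∧ n.primeFactors.card = j + 1) := by
    rw [Landau.B, Nat.floor_natCast, Nat.range_succ_eq_Icc_zero]
  simp only [Function.comp, Pi.div_apply]
  rw [hB]
  field_simp
end
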